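/- Every coherent locally free module (finite projective module) over the ring K⟨γ⁻¹s⟩⟨ρ/t, t/ρ⟩ of functions on 𝔹^m_γ × A^n_K([ρ,ρ]) is free, for any γ ∈ ℝ^m_{>0} and ρ ∈ ℝ^n_{>0}. -/

import Mathlib

open Filter

namespace Stmt5

variable {K : Type*} [NontriviallyNormedField K]

/-- index set of monomials `s^i t^j`. -/
abbrev Idx (m n : ℕ) := (Fin m → ℕ) × (Fin n → ℤ)

/-- the `(γ, ρ)`-weight `γ^i ρ^j` of a monomial. -/
noncomputable def wt {m n : ℕ} (γ : Fin m → ℝ) (ρ : Fin n → ℝ) (x : Idx m n) : ℝ :=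
  (∏ k, γ k ^ x.1 k) * ∏ k, ρ k ^ x.2 k

/-- `A`, together with the Laurent-expansion map `coeffs`, is (a model of) the ring
`K⟨γ⁻¹s⟩⟨ρ/t, t/ρ⟩` of global functions on `𝔹^m_γ × A^n_K([ρ,ρ])`: the ring of
Laurent series `∑ f_{i,j} s^i t^j` with `‖f_{i,j}‖ γ^i ρ^j → 0`, with convolution
multiplication. -/
structure IsGaussCompletion {m n : ℕ} (γ : Fin m → ℝ) (ρ : Fin n → ℝ)
    (A : Type*) [CommRing A] (coeffs : A → Idx m n → K) : Prop where
  injective : Function.Injective coeffs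
  map_add : ∀ a b : A, coeffs (a + b) = coeffs a + coeffs b
  map_one : coeffs 1 = fun x => if x = 0 then 1 else 0
  map_mul : ∀ a b : A, ∀ x : Idx m n, coeffs (a * b) x =
    ∑' pq : Idx m n × Idx m n,
      if pq.1 + pq.2 = x then coeffs a pq.1 * coeffs b pq.2 else 0
  decay : ∀ a : A,
    Tendsto (fun x : Idx m n => ‖coeffs a x‖ * wt γ ρ x) cofinite (nhds 0)
  surj : ∀ c : Idx m n → K,
    Tendsto (fun x : Idx m n => ‖c x‖ * wt γ ρ x) cofinite (nhds 0) →
      ∃ a : A, coeffs a = c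

end Stmt5

set_option linter.unusedSimpArgs false
set_option linter.unusedSectionVars false
set_option linter.unusedVariables false

namespace QS
open Polynomial Matrix
open scoped NNReal
universe u

section part1
/-- Idempotent matrices split as `e = a b`, `b a = 1`. -/
def IdemFree (A : Type*) [CommRing A] : Prop :=
  ∀ (N : ℕ) (e : Matrix (Fin N) (Fin N) A), e * e = e →
    ∃ (r : ℕ) (a : Matrix (Fin N) (Fin r) A) (b : Matrix (Fin r) (Fin N) A), a * b = e ∧ b * a = 1

/-- translation hom `X ↦ X + c Y`. -/
noncomputable def tau {R : Type*} [CommRing R] (c : R) : R[X] →+* R[X][X] :=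
  Polynomial.eval₂RingHom (Polynomial.C.comp Polynomial.C) (C X + C (C c) * X)

lemma tau_C {R : Type*} [CommRing R] (c a : R) : tau c (C a) = C (C a) := by simp [tau]
lemma tau_X {R : Type*} [CommRing R] (c : R) : tau c X = C X + C (C c) * X := by simp [tau]

/-- substitution `Y ↦ c Y`. -/
noncomputable def scaleY {R : Type*} [CommRing R] (c : R) : R[X][X] →+* R[X][X] :=
  Polynomial.eval₂RingHom Polynomial.C (C (C c) * X)

/-- substitution `X ↦ X + cY`, `Y ↦ Y`. -/
noncomputable def shiftX {R : Type*} [CommRing R] (c : R) : R[X][X] →+* R[X][X] :=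
  Polynomial.eval₂RingHom (tau c) X

lemma scaleY_comp_tau {R : Type*} [CommRing R] (a c : R) :
    (scaleY a).comp (tau c) = tau (a * c) := by
  apply Polynomial.ringHom_ext
  · intro x; simp [tau, scaleY]
  · simp [tau, scaleY]; ring

lemma scaleY_comp_C {R : Type*} [CommRing R] (a : R) :
    (scaleY a).comp (C : R[X] →+* R[X][X]) = C := by
  ext x <;> simp [scaleY]

lemma shiftX_comp_tau {R : Type*} [CommRing R] (a c : R) :
    (shiftX a).comp (tau c) = tau (a + c) := by
  apply Polynomial.ringHom_ext
  · intro x; simp [tau, shiftX]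
  · simp [tau, shiftX]; ring

lemma shiftX_comp_C {R : Type*} [CommRing R] (a : R) :
    (shiftX a).comp (C : R[X] →+* R[X][X]) = tau a := by
  ext x <;> simp [shiftX]

section patch
variable {R : Type*} [CommRing R] {N : ℕ}

lemma map_hom_eq {A B : Type*} [CommRing A] [CommRing B] {l m n : Type*} [Fintype m]
    (f : A →+* B) (M : Matrix l m A) (M' : Matrix m n A) :
    (M * M').map f = M.map f * M'.map f := Matrix.map_mul

/-- The Quillen ideal. -/
noncomputable def quillenIdeal (e : Matrix (Fin N) (Fin N) R[X]) (he : e * e = e) : Ideal R where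
  carrier := {c | ∃ G G' : Matrix (Fin N) (Fin N) R[X][X],
    G * G' = e.map (tau c) ∧ G' * G = e.map (C : R[X] →+* R[X][X])}
  zero_mem' := by
    refine ⟨e.map (C : R[X] →+* R[X][X]), e.map (C : R[X] →+* R[X][X]), ?_, ?_⟩
    · have : tau (0 : R) = C := by
        ext x <;> simp [tau]
      rw [← map_hom_eq, he, this]
    · rw [← map_hom_eq, he]
  add_mem' := by
    rintro c d ⟨G, G', h1, h2⟩ ⟨H, H', h3, h4⟩
    have h3' : H.map (shiftX c) * H'.map (shiftX c) = e.map (tau (c + d)) := by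
      rw [← map_hom_eq, h3, Matrix.map_map, ← RingHom.coe_comp, shiftX_comp_tau]
    have h4' : H'.map (shiftX c) * H.map (shiftX c) = e.map (tau c) := by
      rw [← map_hom_eq, h4, Matrix.map_map, ← RingHom.coe_comp, shiftX_comp_C]
    set L := H.map (shiftX c)
    set L' := H'.map (shiftX c)
    refine ⟨L * G, G' * L', ?_, ?_⟩
    · calc L * G * (G' * L') = L * (G * G') * L' := by simp only [Matrix.mul_assoc]
        _ = (L * L') * (L * L') := by rw [h1, ← h4']; simp only [Matrix.mul_assoc]
        _ = _ := by rw [h3', ← map_hom_eq, he]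
    · calc G' * L' * (L * G) = G' * (L' * L) * G := by simp only [Matrix.mul_assoc]
        _ = (G' * G) * (G' * G) := by rw [h4', ← h1]; simp only [Matrix.mul_assoc]
        _ = _ := by rw [h2, ← map_hom_eq, he]
  smul_mem' := by
    rintro a c ⟨G, G', h1, h2⟩
    refine ⟨G.map (scaleY a), G'.map (scaleY a), ?_, ?_⟩
    · rw [← map_hom_eq, h1, Matrix.map_map, ← RingHom.coe_comp, scaleY_comp_tau, smul_eq_mul]
    · rw [← map_hom_eq, h2, Matrix.map_map, ← RingHom.coe_comp, scaleY_comp_C]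

/-- denominators -/
lemma exists_denom (M : Submonoid R) (Rm : Type*) [CommRing Rm] [Algebra R Rm] [IsLocalization M Rm]
    (f : Rm[X][X]) : ∃ c ∈ M, ∀ d : R, c ∣ d →
      C (C (algebraMap R Rm d)) * scaleY (algebraMap R Rm d) f ∈
        (mapRingHom (mapRingHom (algebraMap R Rm))).range := by
  induction f using Polynomial.induction_on' with
  | add p q hp hq =>
    obtain ⟨c, hc, h⟩ := hp
    obtain ⟨c', hc', h'⟩ := hq
    refine ⟨c * c', M.mul_mem hc hc', fun d hd => ?_⟩
    rw [map_add, mul_add]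
    exact Subring.add_mem _ (h d (dvd_of_mul_right_dvd hd)) (h' d (dvd_of_mul_left_dvd hd))
  | monomial n p =>
    induction p using Polynomial.induction_on' with
    | add p q hp hq =>
      obtain ⟨c, hc, h⟩ := hp
      obtain ⟨c', hc', h'⟩ := hq
      refine ⟨c * c', M.mul_mem hc hc', fun d hd => ?_⟩
      rw [map_add, map_add, mul_add]
      exact Subring.add_mem _ (h d (dvd_of_mul_right_dvd hd)) (h' d (dvd_of_mul_left_dvd hd))
    | monomial k x =>
      obtain ⟨a, u, rfl⟩ := IsLocalization.exists_mk'_eq M x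
      refine ⟨u, u.2, ?_⟩
      rintro d ⟨d', rfl⟩
      refine ⟨monomial n (monomial k (d' * a * (u * d') ^ n)), ?_⟩
      have hu : algebraMap R Rm u * IsLocalization.mk' Rm a u = algebraMap R Rm a :=
        IsLocalization.mk'_spec' Rm a u
      have e1 : (mapRingHom (mapRingHom (algebraMap R Rm)))
          (monomial n (monomial k (d' * a * (u * d') ^ n))) = C (C (algebraMap R Rm d')) *
          C (C (algebraMap R Rm a)) * (C (C (algebraMap R Rm u)) * C (C (algebraMap R Rm d'))) ^ n *
          C X ^ k * X ^ n := by
        simp only [coe_mapRingHom, map_monomial, ← C_mul_X_pow_eq_monomial, map_mul, map_pow, Polynomial.map_mul, Polynomial.map_pow, Polynomial.map_C, Polynomial.map_X]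
      have e2 : scaleY (algebraMap R Rm (u * d')) (monomial n (monomial k (IsLocalization.mk' Rm a u)))
          = C (C (IsLocalization.mk' Rm a u)) * C X ^ k *
            (C (C (algebraMap R Rm u)) * C (C (algebraMap R Rm d'))) ^ n * X ^ n := by
        simp only [scaleY, coe_eval₂RingHom, eval₂_monomial, map_mul, ← C_mul_X_pow_eq_monomial,
          map_pow, eval₂_mul, eval₂_pow, eval₂_C, eval₂_X]
        ring
      rw [e1, e2, ← hu]
      simp only [map_mul]
      ring

lemma exists_lift_scale (M : Submonoid R) (Rm : Type*) [CommRing Rm] [Algebra R Rm]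
    [IsLocalization M Rm]
    (f : Rm[X][X]) (h0 : f.coeff 0 ∈ (mapRingHom (algebraMap R Rm)).range) : ∃ c ∈ M, ∀ d : R, c ∣ d →
      scaleY (algebraMap R Rm d) f ∈ (mapRingHom (mapRingHom (algebraMap R Rm))).range := by
  obtain ⟨c, hc, h⟩ := exists_denom M Rm f.divX
  refine ⟨c, hc, fun d hd => ?_⟩
  rw [← Polynomial.divX_mul_X_add f, map_add, map_mul]
  refine Subring.add_mem _ ?_ ?_
  · have : scaleY (algebraMap R Rm d) X = C (C (algebraMap R Rm d)) * X := by simp [scaleY]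
    rw [this, mul_comm, mul_right_comm]
    refine Subring.mul_mem _ (h d hd) ⟨X, by simp⟩
  · obtain ⟨p, hp⟩ := h0
    exact ⟨C p, by simp [scaleY, ← hp]⟩

lemma exists_lift_scale_matrix (M : Submonoid R) (Rm : Type*) [CommRing Rm] [Algebra R Rm]
    [IsLocalization M Rm] {n : ℕ}
    (F : Matrix (Fin n) (Fin n) Rm[X][X]) (F0 : Matrix (Fin n) (Fin n) R[X])
    (h0 : ∀ i j, (F i j).coeff 0 = (F0 i j).map (algebraMap R Rm)) : ∃ c ∈ M, ∀ d : R, c ∣ d →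
      ∃ G : Matrix (Fin n) (Fin n) R[X][X],
        G.map (mapRingHom (mapRingHom (algebraMap R Rm))) = F.map (scaleY (algebraMap R Rm d)) := by
  choose c hc h using fun i j => exists_lift_scale M Rm (F i j) ⟨F0 i j, (h0 i j).symm⟩
  refine ⟨∏ i, ∏ j, c i j, M.prod_mem fun i _ => M.prod_mem fun j _ => hc i j, fun d hd => ?_⟩
  have := fun i j => h i j d (((Finset.dvd_prod_of_mem (c i) (Finset.mem_univ j)).trans
    (Finset.dvd_prod_of_mem (fun i => ∏ j, c i j) (Finset.mem_univ i))).trans hd)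
  choose G hG using this
  exact ⟨G, by ext1 i j; exact hG i j⟩

lemma quillen_local (M : Submonoid R) (hM : M ≤ nonZeroDivisors R)
    (Rm : Type*) [CommRing Rm] [Algebra R Rm]
    [IsLocalization M Rm] (e : Matrix (Fin N) (Fin N) R[X]) (he : e * e = e) {r : ℕ}
    (a : Matrix (Fin N) (Fin r) Rm[X]) (b : Matrix (Fin r) (Fin N) Rm[X])
    (hab : a * b = e.map (mapRingHom (algebraMap R Rm))) (hba : b * a = 1) :
    ∃ d ∈ M, d ∈ quillenIdeal e he := by
  have hc0 : ∀ p : Rm[X], (tau (1 : Rm) p).coeff 0 = p := by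
    intro p
    rw [coeff_zero_eq_eval_zero, ← coe_evalRingHom, ← RingHom.comp_apply]
    have : (evalRingHom 0).comp (tau (1 : Rm)) = RingHom.id _ := by
      ext x <;> simp [tau]
    rw [this]; rfl
  have hab' := fun i j => congrFun (congrFun hab i) j
  obtain ⟨c, hc, h1⟩ := exists_lift_scale_matrix M Rm
    (a.map (tau (1 : Rm)) * b.map (C : Rm[X] →+* Rm[X][X])) e (by
      intro i j
      have := hab' i j
      simp only [Matrix.mul_apply, Matrix.map_apply, finsetSum_coeff, mul_coeff_zero, hc0,
        coeff_C_zero, coe_mapRingHom] at this ⊢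
      exact this)
  obtain ⟨c', hc', h2⟩ := exists_lift_scale_matrix M Rm
    (a.map (C : Rm[X] →+* Rm[X][X]) * b.map (tau (1 : Rm))) e (by
      intro i j
      have := hab' i j
      simp only [Matrix.mul_apply, Matrix.map_apply, finsetSum_coeff, mul_coeff_zero, hc0,
        coeff_C_zero, coe_mapRingHom] at this ⊢
      exact this)
  obtain ⟨G, hG⟩ := h1 (c * c') (dvd_mul_right _ _)
  obtain ⟨G', hG'⟩ := h2 (c * c') (dvd_mul_left _ _)
  refine ⟨c * c', mul_mem hc hc', ?_⟩
  generalize c * c' = d at *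
  have hinj : Function.Injective (mapRingHom (mapRingHom (algebraMap R Rm))) := by
    apply Polynomial.map_injective
    apply Polynomial.map_injective
    exact IsLocalization.injective Rm hM
  have hinj' : Function.Injective fun M : Matrix (Fin N) (Fin N) R[X][X] =>
      M.map (mapRingHom (mapRingHom (algebraMap R Rm))) := Matrix.map_injective hinj
  have hb1 : ∀ f : Rm[X] →+* Rm[X][X], b.map f * a.map f = 1 := by
    intro f; rw [← map_hom_eq, hba]; simp
  refine ⟨G, G', hinj' ?_, hinj' ?_⟩
  · dsimp only
    rw [map_hom_eq, hG, hG', ← map_hom_eq]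
    have : a.map (tau (1 : Rm)) * b.map (C : Rm[X] →+* Rm[X][X]) *
        (a.map (C : Rm[X] →+* Rm[X][X]) * b.map (tau (1 : Rm))) = (a * b).map (tau 1) := by
      rw [Matrix.mul_assoc, ← Matrix.mul_assoc (b.map _), hb1, Matrix.one_mul, map_hom_eq]
    rw [this, hab]
    simp only [Matrix.map_map, ← RingHom.coe_comp]
    congr 2
    apply Polynomial.ringHom_ext
    · intro x; simp [tau, scaleY]
    · simp [tau, scaleY]
  · dsimp only
    rw [map_hom_eq, hG, hG', ← map_hom_eq]
    have : a.map (C : Rm[X] →+* Rm[X][X]) * b.map (tau (1 : Rm)) *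
        (a.map (tau (1 : Rm)) * b.map (C : Rm[X] →+* Rm[X][X])) =
          (a * b).map (C : Rm[X] →+* Rm[X][X]) := by
      rw [Matrix.mul_assoc, ← Matrix.mul_assoc (b.map _), hb1, Matrix.one_mul, map_hom_eq]
    rw [this, hab]
    simp only [Matrix.map_map, ← RingHom.coe_comp]
    congr 2
    apply Polynomial.ringHom_ext
    · intro x; simp [scaleY]
    · simp [scaleY]

/-- Quillen patching. -/
theorem quillen_patch [IsDomain R] (e : Matrix (Fin N) (Fin N) R[X]) (he : e * e = e)
    (hloc : ∀ m : Ideal R, ∀ [m.IsMaximal], ∃ (r : ℕ)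
      (a : Matrix (Fin N) (Fin r) (Localization.AtPrime m)[X])
      (b : Matrix (Fin r) (Fin N) (Localization.AtPrime m)[X]),
      a * b = e.map (mapRingHom (algebraMap R (Localization.AtPrime m))) ∧ b * a = 1) :
    ∃ G G' : Matrix (Fin N) (Fin N) R[X], G * G' = e ∧
      G' * G = e.map (C.comp (evalRingHom (0 : R))) := by
  have htop : quillenIdeal e he = ⊤ := by
    by_contra hne
    obtain ⟨m, hm, hle⟩ := Ideal.exists_le_maximal _ hne
    obtain ⟨r, a, b, hab, hba⟩ := hloc m
    obtain ⟨d, hd, hd'⟩ := quillen_local m.primeCompl m.primeCompl_le_nonZeroDivisors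
      (Localization.AtPrime m) e he a b hab hba
    exact hd (hle hd')
  have h1 : (1 : R) ∈ quillenIdeal e he := by rw [htop]; trivial
  obtain ⟨G, G', hG, hG'⟩ := h1
  let f : R[X][X] →+* R[X] := eval₂RingHom (C.comp (evalRingHom (0 : R))) X
  refine ⟨G.map f, G'.map f, ?_, ?_⟩
  · rw [← map_hom_eq, hG, Matrix.map_map, ← RingHom.coe_comp]
    have : f.comp (tau 1) = RingHom.id _ := by ext x <;> simp [f, tau]
    rw [this]; ext1; simp
  · rw [← map_hom_eq, hG', Matrix.map_map, ← RingHom.coe_comp]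
    have : f.comp C = (C.comp (evalRingHom (0 : R))) := by ext x <;> simp [f]
    rw [this]

end patch
end part1

section part2
/-- the submonoid of monic polynomials -/
def monics (R : Type*) [CommRing R] : Submonoid R[X] where
  carrier := {p | p.Monic}
  one_mem' := monic_one
  mul_mem' := fun ha hb => Monic.mul ha hb

lemma mem_monics {R : Type*} [CommRing R] {p : R[X]} : p ∈ monics R ↔ p.Monic := Iff.rfl

section idem
variable {A : Type*} [CommRing A] {N : ℕ}

lemma split_of_free (e : Matrix (Fin N) (Fin N) A) (he : e * e = e)
    (hfree : ∃ r : ℕ, Nonempty (Module.Basis (Fin r) A (LinearMap.range (Matrix.toLin' e)))) :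
    ∃ (r : ℕ) (a : Matrix (Fin N) (Fin r) A) (b : Matrix (Fin r) (Fin N) A), a * b = e ∧ b * a = 1 := by
  obtain ⟨r, ⟨bs⟩⟩ := hfree
  let f : (Fin r → A) →ₗ[A] (Fin N → A) :=
    (LinearMap.range (Matrix.toLin' e)).subtype ∘ₗ bs.equivFun.symm.toLinearMap
  let g : (Fin N → A) →ₗ[A] (Fin r → A) :=
    bs.equivFun.toLinearMap ∘ₗ (Matrix.toLin' e).rangeRestrict
  have hfg : f ∘ₗ g = Matrix.toLin' e := by
    ext1 i; ext1; simp [f, g]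
  have hgf : g ∘ₗ f = LinearMap.id := by
    apply LinearMap.ext; intro x
    obtain ⟨y, rfl⟩ := bs.equivFun.surjective x
    simp only [f, g, LinearMap.comp_apply, LinearEquiv.coe_coe, LinearEquiv.symm_apply_apply,
      LinearMap.id_apply]
    congr 1
    obtain ⟨y, z, rfl⟩ := y
    apply Subtype.ext
    simp [he]
  refine ⟨r, LinearMap.toMatrix' f, LinearMap.toMatrix' g, ?_, ?_⟩
  · rw [← LinearMap.toMatrix'_comp, hfg, LinearMap.toMatrix'_toLin']
  · rw [← LinearMap.toMatrix'_comp, hgf, LinearMap.toMatrix'_id]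

lemma idemFree_pid (A : Type*) [CommRing A] [IsDomain A] [IsPrincipalIdealRing A] : IdemFree A := by
  intro N e he
  apply split_of_free e he
  have := Submodule.basisOfPid (Pi.basisFun A (Fin N)) (LinearMap.range (Matrix.toLin' e))
  exact ⟨this.1, ⟨this.2⟩⟩
end idem

lemma nak {R M : Type*} [CommRing R] [IsLocalRing R] [AddCommGroup M] [Module R M]
    (I B N : Submodule R M) (hN : N.FG) (hNB : N ≤ B) (h1 : B ≤ I ⊔ N)
    (h2 : B ≤ I ⊔ IsLocalRing.maximalIdeal R • B) : B ≤ I := by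
  have : N ≤ I := by
    apply Submodule.le_of_le_smul_of_le_jacobson_bot hN (IsLocalRing.maximalIdeal_le_jacobson _)
    refine hNB.trans (h2.trans (sup_le le_sup_left ?_))
    refine (Submodule.smul_mono le_rfl h1).trans ?_
    rw [Submodule.smul_sup]
    exact sup_le (Submodule.smul_le_right.trans le_sup_left) le_sup_right
  exact h1.trans (sup_le le_rfl this)

section red
variable {R : Type*} [CommRing R] [IsLocalRing R]

/-- reduction to the function field over the residue field -/
noncomputable def red (R : Type*) [CommRing R] [IsLocalRing R] :
    R[X] →+* FractionRing (IsLocalRing.ResidueField R)[X] :=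
  (algebraMap _ _).comp (mapRingHom (IsLocalRing.residue R))

lemma red_eq_zero {a : R[X]} : red R a = 0 ↔ ∀ n, a.coeff n ∈ IsLocalRing.maximalIdeal R := by
  rw [red, RingHom.comp_apply, FaithfulSMul.algebraMap_eq_zero_iff, Polynomial.ext_iff]
  refine forall_congr' fun n => ?_
  simp [IsLocalRing.residue_eq_zero_iff]

lemma red_ne_zero {a : R[X]} (ha : a.Monic) : red R a ≠ 0 := by
  intro h
  have := red_eq_zero.1 h a.natDegree
  rw [show a.coeff a.natDegree = 1 from ha] at this
  exact (Ideal.ne_top_iff_one _).1 (IsLocalRing.maximalIdeal.isMaximal R).ne_top this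

variable {S : Type*} [CommRing S] [Algebra R[X] S] [IsLocalization (monics R) S]

/-- reduction on the localization. -/
noncomputable def phi (R S : Type*) [CommRing R] [IsLocalRing R] [CommRing S] [Algebra R[X] S]
    [IsLocalization (monics R) S] : S →+* FractionRing (IsLocalRing.ResidueField R)[X] :=
  IsLocalization.lift (M := monics R) (g := red R) fun y => (red_ne_zero y.2).isUnit

lemma phi_ι (a : R[X]) : phi R S (algebraMap R[X] S a) = red R a :=
  IsLocalization.lift_eq _ _

lemma unit_of_coeff {a : R[X]} {n : ℕ} (hn : a.natDegree ≤ n) (hu : IsUnit (a.coeff n)) :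
    IsUnit (algebraMap R[X] S a) := by
  obtain ⟨u, hu⟩ := hu
  have hm : (C (↑u⁻¹ : R) * a).Monic := by
    apply monic_of_natDegree_le_of_coeff_eq_one n
    · exact (natDegree_C_mul_le _ _).trans hn
    · rw [coeff_C_mul, ← hu]; simp
  have := IsLocalization.map_units S (⟨_, hm⟩ : monics R)
  simp only [map_mul] at this
  exact isUnit_of_mul_isUnit_right this

lemma exists_unit_lift (x : FractionRing (IsLocalRing.ResidueField R)[X]) (hx : x ≠ 0) :
    ∃ u : Sˣ, phi R S u = x := by
  have key : ∀ f : (IsLocalRing.ResidueField R)[X], f ≠ 0 → ∃ u : Sˣ, phi R S u = algebraMap _ _ f := by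
    intro f hf
    obtain ⟨g, hg, hd⟩ := (exists_degree_eq_of_mem_lifts (f := IsLocalRing.residue R) (p := f)
      ((Polynomial.mem_lifts _).2 ((map_surjective _ IsLocalRing.residue_surjective) f)))
    have h1 : (IsLocalRing.residue R) (g.coeff f.natDegree) = f.leadingCoeff := by
      rw [← hg, ← Polynomial.coeff_map, hg]
      rfl
    have hu : IsUnit (g.coeff f.natDegree) := by
      apply IsLocalRing.notMem_maximalIdeal.1
      rw [← IsLocalRing.residue_eq_zero_iff, h1]
      exact leadingCoeff_ne_zero.2 hf
    obtain ⟨u, hu⟩ := unit_of_coeff (S := S) (natDegree_eq_of_degree_eq hd).le hu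
    refine ⟨u, ?_⟩
    rw [hu, phi_ι, red, RingHom.comp_apply, coe_mapRingHom, hg]
  obtain ⟨f, g, hg, rfl⟩ := IsFractionRing.div_surjective (A := (IsLocalRing.ResidueField R)[X]) x
  have hf : f ≠ 0 := by rintro rfl; simp at hx
  obtain ⟨u, hu⟩ := key f hf
  obtain ⟨v, hv⟩ := key g (nonZeroDivisors.ne_zero hg)
  refine ⟨u * v⁻¹, ?_⟩
  rw [Units.val_mul, map_mul, hu, ← hv, div_eq_mul_inv]
  congr 1
  have := congrArg (phi R S) (v.mul_inv)
  rw [map_mul, map_one] at this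
  exact (eq_inv_of_mul_eq_one_right this)

lemma ι_mul_comm_cancel {h : R[X]} (hh : h.Monic) {x y : S}
    (e : x * algebraMap R[X] S h = y * algebraMap R[X] S h) : x = y :=
  (IsLocalization.map_units S (⟨h, hh⟩ : monics R)).mul_right_cancel e

/-- elements of degree `≤ 0`. -/
def VV (R S : Type*) [CommRing R] [IsLocalRing R] [CommRing S] [Algebra R[X] S] : Subring S where
  carrier := {s | ∃ a h : R[X], h.Monic ∧ a.natDegree ≤ h.natDegree ∧
    s * algebraMap R[X] S h = algebraMap R[X] S a}
  one_mem' := ⟨1, 1, monic_one, le_rfl, by simp⟩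
  zero_mem' := ⟨0, 1, monic_one, by simp, by simp⟩
  neg_mem' := by
    rintro x ⟨a, h, hh, hd, e⟩
    exact ⟨-a, h, hh, by simpa using hd, by simp [e]⟩
  mul_mem' := by
    rintro x y ⟨a, h, hh, hd, e⟩ ⟨a', h', hh', hd', e'⟩
    refine ⟨a * a', h * h', hh.mul hh', ?_, ?_⟩
    · rw [hh.natDegree_mul hh']
      exact natDegree_mul_le.trans (add_le_add hd hd')
    · rw [map_mul, map_mul, ← e, ← e']; ring
  add_mem' := by
    rintro x y ⟨a, h, hh, hd, e⟩ ⟨a', h', hh', hd', e'⟩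
    refine ⟨a * h' + a' * h, h * h', hh.mul hh', ?_, ?_⟩
    · rw [hh.natDegree_mul hh']
      refine (natDegree_add_le _ _).trans (max_le ?_ ?_)
      · exact natDegree_mul_le.trans (add_le_add hd le_rfl)
      · exact natDegree_mul_le.trans (by omega)
    · rw [map_mul, map_add, map_mul, map_mul, ← e, ← e']; ring

lemma VV_unit {v : S} (hv : v ∈ VV R S) (h1 : phi R S v = 1) : IsUnit v := by
  obtain ⟨a, h, hh, hd, e⟩ := hv
  have h2 : red R (a - h) = 0 := by
    have := congrArg (phi R S) e
    rw [map_mul, h1, phi_ι, phi_ι, one_mul] at this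
    rw [map_sub, this, sub_self]
  have h3 := red_eq_zero.1 h2 h.natDegree
  rw [coeff_sub, show h.coeff h.natDegree = 1 from hh] at h3
  have h4 : IsUnit (a.coeff h.natDegree) := by
    apply IsLocalRing.notMem_maximalIdeal.1
    intro h5
    have := Ideal.sub_mem _ h5 h3
    rw [sub_sub_cancel] at this
    exact (Ideal.ne_top_iff_one _).1 (IsLocalRing.maximalIdeal.isMaximal R).ne_top this
  have h5 := unit_of_coeff (S := S) hd h4
  rw [← e] at h5
  exact isUnit_of_mul_isUnit_left h5

lemma exists_poly_add_VV (s : S) : ∃ f : R[X], ∃ v ∈ VV R S, s = algebraMap R[X] S f + v := by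
  obtain ⟨a, h, rfl⟩ := IsLocalization.exists_mk'_eq (monics R) s
  have hh : (h : R[X]).Monic := h.2
  refine ⟨a /ₘ h, IsLocalization.mk' S (a %ₘ h) h, ⟨a %ₘ h, h, hh, natDegree_modByMonic_le _ hh, ?_⟩, ?_⟩
  · exact IsLocalization.mk'_spec S _ _
  · apply ι_mul_comm_cancel hh
    rw [add_mul, IsLocalization.mk'_spec, IsLocalization.mk'_spec, ← map_mul, ← map_add]
    congr 1
    conv_lhs => rw [← modByMonic_add_div a (h : R[X])]
    ring

lemma lift_GL {r : ℕ} (U : Matrix (Fin r) (Fin r) (FractionRing (IsLocalRing.ResidueField R)[X]))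
    (hU : U.det ≠ 0) : ∃ V : Matrix (Fin r) (Fin r) S, IsUnit V.det ∧ V.map (phi R S) = U := by
  refine Matrix.diagonal_transvection_induction_of_det_ne_zero
    (fun U => ∃ V : Matrix (Fin r) (Fin r) S, IsUnit V.det ∧ V.map (phi R S) = U) U hU ?_ ?_ ?_
  · intro D hD
    rw [Matrix.det_diagonal] at hD
    have : ∀ i, D i ≠ 0 := fun i h => hD (Finset.prod_eq_zero (Finset.mem_univ i) h)
    choose u hu using fun i => exists_unit_lift (R := R) (S := S) (D i) (this i)
    refine ⟨Matrix.diagonal fun i => (u i : S), ?_, ?_⟩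
    · rw [Matrix.det_diagonal]
      exact IsUnit.prod_univ_iff.2 fun i => (u i).isUnit
    · rw [Matrix.diagonal_map (map_zero _)]
      congr 1; ext1 i; exact hu i
  · intro t
    obtain ⟨c, hc⟩ : ∃ c : S, phi R S c = t.c := by
      by_cases h : t.c = 0
      · exact ⟨0, by simp [h]⟩
      · obtain ⟨u, hu⟩ := exists_unit_lift (R := R) (S := S) t.c h
        exact ⟨u, hu⟩
    refine ⟨Matrix.transvection t.i t.j c, ?_, ?_⟩
    · rw [Matrix.det_transvection_of_ne _ _ t.hij]; exact isUnit_one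
    · rw [Matrix.TransvectionStruct.toMatrix, Matrix.transvection, Matrix.transvection, Matrix.map_add]
      · rw [Matrix.map_one _ (map_zero _) (map_one _)]
        congr 1
        ext i j
        simp only [Matrix.map_apply, Matrix.single_apply]
        split_ifs <;> simp [hc]
      · simp
  · rintro A B hA hB ⟨V, hV, rfl⟩ ⟨W, hW, rfl⟩
    refine ⟨V * W, ?_, map_hom_eq _ _ _⟩
    rw [Matrix.det_mul]; exact hV.mul hW

end red
end part2

section part3
section horrocks
variable {R : Type*} [CommRing R] [IsLocalRing R]
variable {S : Type*} [CommRing S] [Algebra R[X] S] [IsLocalization (monics R) S]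
  [Algebra R S] [IsScalarTower R R[X] S] {N r : ℕ}


lemma exists_low {Ω : R[X]} (hΩ : Ω.Monic) (N : ℕ) : ∃ F : Submodule R (Fin N → R[X]), F.FG ∧
    ∀ f, ∃ q : Fin N → R[X], f - Ω • q ∈ F := by
  have : Module.Finite R (degreeLT R Ω.natDegree) := Module.Finite.equiv (degreeLTEquiv R _).symm
  refine ⟨LinearMap.range ((degreeLT R Ω.natDegree).subtype.compLeft (Fin N)), ?_, fun f => ?_⟩
  · exact Module.Finite.iff_fg.1 inferInstance
  · refine ⟨fun i => f i /ₘ Ω, ⟨fun i => ⟨f i %ₘ Ω, ?_⟩, ?_⟩⟩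
    · rw [mem_degreeLT, ← degree_eq_natDegree hΩ.ne_zero]
      exact degree_modByMonic_lt _ hΩ
    · ext1 i
      simp [LinearMap.compLeft_apply, modByMonic_eq_sub_mul_div]

lemma pi_mem_smul {M : Type*} [AddCommGroup M] [Module R M] (z : Fin N → M)
    (hz : ∀ i, z i ∈ (IsLocalRing.maximalIdeal R) • (⊤ : Submodule R M)) : z ∈ (IsLocalRing.maximalIdeal R) • (⊤ : Submodule R (Fin N → M)) := by
  have hz' : z = ∑ i, LinearMap.single R (fun _ : Fin N => M) i (z i) := by
    ext1 j
    simp [Finset.sum_apply, Pi.single_apply]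
  rw [hz']
  refine Submodule.sum_mem _ fun i _ => ?_
  have : ((IsLocalRing.maximalIdeal R) • (⊤ : Submodule R M)).map (LinearMap.single R (fun _ => M) i) ≤ (IsLocalRing.maximalIdeal R) • ⊤ := by
    rw [Submodule.map_smul'']
    exact Submodule.smul_mono le_rfl le_top
  exact this (Submodule.mem_map_of_mem (hz i))

lemma poly_mem_smul {a : R[X]} (ha : red R a = 0) : a ∈ (IsLocalRing.maximalIdeal R) • (⊤ : Submodule R R[X]) := by
  rw [red_eq_zero] at ha
  rw [a.as_sum_range_C_mul_X_pow]
  refine Submodule.sum_mem _ fun i _ => ?_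
  rw [← smul_eq_C_mul]
  exact Submodule.smul_mem_smul (ha i) trivial

lemma S_mem_smul {s : S} (hs : phi R S s = 0) : s ∈ (IsLocalRing.maximalIdeal R) • (⊤ : Submodule R S) := by
  obtain ⟨a, h, rfl⟩ := IsLocalization.exists_mk'_eq (monics R) s
  have hspec := IsLocalization.mk'_spec' S a h
  have ha : red R a = 0 := by
    rw [← phi_ι (S := S), ← hspec, map_mul, hs, mul_zero]
  let f : R[X] →ₗ[R] S := (LinearMap.mulRight R (IsLocalization.mk' S 1 h)).comp
    (IsScalarTower.toAlgHom R R[X] S).toLinearMap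
  have : ((IsLocalRing.maximalIdeal R) • (⊤ : Submodule R R[X])).map f ≤ (IsLocalRing.maximalIdeal R) • ⊤ := by
    rw [Submodule.map_smul'']
    exact Submodule.smul_mono le_rfl le_top
  have h2 := this (Submodule.mem_map_of_mem (poly_mem_smul ha))
  have h3 : f a = IsLocalization.mk' S a h := by
    simp [f, IsLocalization.mk'_eq_mul_mk'_one a h]
  rwa [h3] at h2

/-- `v ↦ M v` on polynomial vectors. -/
noncomputable def opL (M : Matrix (Fin r) (Fin N) S) : (Fin N → R[X]) →ₗ[R] (Fin r → S) where
  toFun v := M *ᵥ (fun i => (algebraMap R[X] S) (v i))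
  map_add' v w := by
    rw [← Matrix.mulVec_add]; congr 1; ext i; simp
  map_smul' c v := by
    simp only [RingHom.id_apply]
    rw [← Matrix.mulVec_smul]; congr 1; ext i; simp [Algebra.smul_def, IsScalarTower.algebraMap_apply R R[X] S]

lemma opL_apply (M : Matrix (Fin r) (Fin N) S) (v : Fin N → R[X]) :
    opL M v = M *ᵥ (fun i => (algebraMap R[X] S) (v i)) := rfl

lemma opL_mulVec {k : ℕ} (M : Matrix (Fin r) (Fin N) S) (A : Matrix (Fin N) (Fin k) R[X])
    (v : Fin k → R[X]) : opL M (A *ᵥ v) = opL (M * A.map (algebraMap R[X] S)) v := by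
  rw [opL_apply, opL_apply, ← Matrix.mulVec_mulVec]
  congr 1
  ext i
  simp [Matrix.mulVec, dotProduct]

lemma exists_common_denom (M : Matrix (Fin r) (Fin N) S) : ∃ Ω : R[X], Ω.Monic ∧
    ∃ A : Matrix (Fin r) (Fin N) R[X], A.map (algebraMap R[X] S) = (algebraMap R[X] S) Ω • M := by
  obtain ⟨Ω, h⟩ := IsLocalization.exist_integer_multiples_of_finite (monics R)
    (fun x : Fin r × Fin N => M x.1 x.2)
  choose A hA using h
  refine ⟨Ω, Ω.2, Matrix.of fun i j => A (i, j), ?_⟩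
  ext i j
  simp [hA, Algebra.smul_def]

theorem horrocks_aux (e : Matrix (Fin N) (Fin N) R[X]) (he : e * e = e)
    (X : Matrix (Fin r) (Fin N) S) (Y : Matrix (Fin N) (Fin r) S)
    (hXY : X * Y = 1) (hYX : Y * X = e.map (algebraMap R[X] S)) (a0 : Matrix (Fin N) (Fin r) R[X])
    (b0 : Matrix (Fin r) (Fin N) R[X]) (h1 : (a0 * b0).map (red R) = e.map (red R))
    (h2 : (b0 * a0).map (red R) = 1) (h3 : (X * a0.map (algebraMap R[X] S)).map (phi R S) = 1)
    (hι : Function.Injective (algebraMap R[X] S)) :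
    ∃ (a : Matrix (Fin N) (Fin r) R[X]) (b : Matrix (Fin r) (Fin N) R[X]), a * b = e ∧ b * a = 1 := by
  have hred : ∀ {k l : ℕ} (A : Matrix (Fin k) (Fin l) R[X]), (A.map (algebraMap R[X] S)).map (phi R S) = A.map (red R) := by
    intro k l A; ext i j; simp [phi_ι]
  have hzero : ∀ {k l : ℕ} (A : Matrix (Fin k) (Fin l) S) (v : Fin l → R[X]),
      A.map (phi R S) = 0 → ∀ i, phi R S (opL A v i) = 0 := by
    intro k l A v hA i
    simp only [opL_apply, Matrix.mulVec, dotProduct, map_sum, map_mul]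
    refine Finset.sum_eq_zero fun j _ => ?_
    have := congrFun (congrFun hA i) j
    simp only [Matrix.map_apply, Matrix.zero_apply] at this
    rw [this, zero_mul]
  -- reductions of X, Y
  have hY : Y.map (phi R S) = a0.map (red R) := by
    have t1 : (Y * X * a0.map (algebraMap R[X] S)).map (phi R S) = Y.map (phi R S) := by
      rw [Matrix.mul_assoc, map_hom_eq, h3, Matrix.mul_one]
    rw [← t1, hYX, ← map_hom_eq, hred, map_hom_eq, ← h1, ← map_hom_eq, Matrix.mul_assoc, map_hom_eq,
      h2, Matrix.mul_one]
  have hX : X.map (phi R S) = b0.map (red R) := by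
    have t1 : (b0.map (algebraMap R[X] S) * (Y * X)).map (phi R S) = X.map (phi R S) := by
      rw [← Matrix.mul_assoc, map_hom_eq, map_hom_eq, hred, hY, ← map_hom_eq, h2, Matrix.one_mul]
    rw [← t1, hYX, ← map_hom_eq, hred, map_hom_eq, ← h1, ← map_hom_eq, ← Matrix.mul_assoc, map_hom_eq,
      h2, Matrix.one_mul]
  -- the submodule of elements of degree ≤ 0
  let Vr : Submodule R (Fin r → S) :=
    { carrier := {z | ∀ i, z i ∈ VV R S}
      zero_mem' := fun i => (VV R S).zero_mem
      add_mem' := fun ha hb i => (VV R S).add_mem (ha i) (hb i)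
      smul_mem' := fun c z hz i => by
        have hc : algebraMap R S c ∈ VV R S :=
          ⟨C c, 1, monic_one, by simp, by
            simp [IsScalarTower.algebraMap_apply R R[X] S]⟩
        simp only [Pi.smul_apply, Algebra.smul_def]
        exact (VV R S).mul_mem hc (hz i) }
  let P : Submodule R (Fin r → S) := LinearMap.range (opL (R := R) X)
  have hQ : (⊤ : Submodule R (Fin r → S)) ≤ P ⊔ Vr := by
    obtain ⟨Ω, hΩ, A, hA⟩ := exists_common_denom (R := R) Y
    obtain ⟨F, hF, hF'⟩ := exists_low hΩ r
    have hdec : ∀ z : Fin r → S, ∃ f : Fin r → R[X], z - opL (R := R) (1 : Matrix (Fin r) (Fin r) S) f ∈ Vr := by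
      intro z
      choose f v hv h using fun i => exists_poly_add_VV (R := R) (z i)
      refine ⟨f, fun i => ?_⟩
      simp [opL_apply, h i, hv i]
    refine nak _ _ (F.map (opL (R := R) (1 : Matrix (Fin r) (Fin r) S))) (hF.map _) le_top ?_ ?_
    · intro z _
      obtain ⟨f, hf⟩ := hdec z
      obtain ⟨q, hq⟩ := hF' f
      have hq2 : opL X (A *ᵥ q) = opL (1 : Matrix (Fin r) (Fin r) S) (Ω • q) := by
        rw [opL_mulVec, hA, Matrix.mul_smul, hXY, opL_apply, opL_apply]
        simp only [Matrix.smul_mulVec, Matrix.one_mulVec]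
        ext i; simp [Algebra.smul_def]
      have : z = (opL X (A *ᵥ q) + (z - opL (1 : Matrix (Fin r) (Fin r) S) f)) +
          opL (1 : Matrix (Fin r) (Fin r) S) (f - Ω • q) := by
        rw [hq2, map_sub]; abel
      rw [this]
      refine Submodule.add_mem_sup (Submodule.add_mem_sup ⟨_, rfl⟩ hf) (Submodule.mem_map_of_mem hq)
    · intro z _
      obtain ⟨f, hf⟩ := hdec z
      have : z = (opL X (a0 *ᵥ f) + (z - opL (1 : Matrix (Fin r) (Fin r) S) f)) +
          opL (1 - X * a0.map (algebraMap R[X] S)) f := by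
        rw [opL_mulVec]
        simp only [opL_apply, Matrix.sub_mulVec]
        abel
      rw [this]
      refine Submodule.add_mem_sup (Submodule.add_mem_sup ⟨_, rfl⟩ hf) ?_
      refine pi_mem_smul _ fun i => S_mem_smul (hzero _ _ ?_ i)
      rw [Matrix.map_sub _ (map_sub _), h3, Matrix.map_one _ (map_zero _) (map_one _), sub_self]
  -- adjust
  have hadj : ∀ z : Fin r → S, (∀ i, phi R S (z i) = 0) → ∃ p : Fin N → R[X],
      (∀ i, red R (p i) = 0) ∧ z - opL X p ∈ Vr := by
    intro z hz
    have h4 : z ∈ (IsLocalRing.maximalIdeal R) • P ⊔ (IsLocalRing.maximalIdeal R) • Vr := by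
      rw [← Submodule.smul_sup]
      exact Submodule.smul_mono le_rfl hQ (pi_mem_smul _ fun i => S_mem_smul (hz i))
    obtain ⟨y, hy, v, hv, rfl⟩ := Submodule.mem_sup.1 h4
    have hy' : y ∈ ((IsLocalRing.maximalIdeal R) • (⊤ : Submodule R (Fin N → R[X]))).map (opL X) := by
      rw [Submodule.map_smul'', Submodule.map_top]; exact hy
    obtain ⟨p, hp, rfl⟩ := hy'
    refine ⟨p, ?_, ?_⟩
    · intro i
      refine Submodule.smul_induction_on hp ?_ ?_
      · intro c hc n _
        rw [red_eq_zero]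
        intro k
        simp only [Pi.smul_apply, coeff_smul, smul_eq_mul]
        exact Ideal.mul_mem_right _ _ hc
      · intro x y hx hy
        rw [Pi.add_apply, map_add, hx, hy, add_zero]
    · rw [add_sub_cancel_left]
      exact Submodule.smul_le_right hv
  obtain ⟨w, hw, hwV⟩ : ∃ w : Matrix (Fin N) (Fin r) R[X], w.map (red R) = a0.map (red R) ∧
      ∀ i j, (X * w.map (algebraMap R[X] S)) i j ∈ VV R S := by
    choose p hp hpV using fun j : Fin r => hadj (fun i => (X * a0.map (algebraMap R[X] S) - 1 : Matrix _ _ S) i j) (by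
      intro i
      have : (X * a0.map (algebraMap R[X] S) - 1 : Matrix _ _ S).map (phi R S) = 0 := by
        rw [Matrix.map_sub _ (map_sub _), h3, Matrix.map_one _ (map_zero _) (map_one _), sub_self]
      exact congrFun (congrFun this i) j)
    refine ⟨a0 - Matrix.of fun i j => p j i, ?_, ?_⟩
    · ext i j
      simp [hp]
    · intro i j
      have h5 := hpV j i
      have h6 : (X * (a0 - Matrix.of fun i j => p j i).map (algebraMap R[X] S)) i j =
          ((fun i => (X * a0.map (algebraMap R[X] S) - 1 : Matrix _ _ S) i j : Fin r → S) - opL X (p j)) i + (1 : Matrix _ _ S) i j := by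
        rw [Matrix.map_sub _ (map_sub _), Matrix.mul_sub]
        simp only [Matrix.sub_apply, Pi.sub_apply, opL_apply, Matrix.mulVec, dotProduct, Matrix.mul_apply,
          Matrix.map_apply, Matrix.of_apply]
        ring
      rw [h6]
      refine (VV R S).add_mem h5 ?_
      rw [Matrix.one_apply]
      split_ifs
      exacts [(VV R S).one_mem, (VV R S).zero_mem]
  obtain ⟨W, hW⟩ : ∃ W, W = X * w.map (algebraMap R[X] S) := ⟨_, rfl⟩
  have hWφ : W.map (phi R S) = 1 := by
    rw [hW, map_hom_eq, hred, hw, hX, ← map_hom_eq, h2]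
  have hWu : IsUnit W.det := by
    apply VV_unit (R := R)
    · rw [Matrix.det_apply]
      refine Subring.sum_mem _ fun σ _ => ?_
      rw [Units.smul_def]
      refine Subring.zsmul_mem _ (Subring.prod_mem _ fun i _ => ?_) _
      rw [hW]; exact hwV _ _
    · rw [RingHom.map_det, RingHom.mapMatrix_apply, hWφ, Matrix.det_one]
  have hWi : W⁻¹ * W = 1 := Matrix.nonsing_inv_mul _ hWu
  have hWi' : W * W⁻¹ = 1 := Matrix.mul_nonsing_inv _ hWu
  have hWiφ : W⁻¹.map (phi R S) = 1 := by
    have := congrArg (fun M : Matrix (Fin r) (Fin r) S => M.map (phi R S)) hWi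
    simp only [map_hom_eq, hWφ, Matrix.mul_one] at this
    rw [this, Matrix.map_one _ (map_zero _) (map_one _)]
  obtain ⟨a, ha⟩ : ∃ a, a = e * w := ⟨_, rfl⟩
  obtain ⟨b, hb⟩ : ∃ b, b = W⁻¹ * X := ⟨_, rfl⟩
  have haY : a.map (algebraMap R[X] S) = Y * W := by
    rw [ha, map_hom_eq, ← hYX, Matrix.mul_assoc, hW]
  have hba : b * a.map (algebraMap R[X] S) = 1 := by
    rw [haY, hb, Matrix.mul_assoc, ← Matrix.mul_assoc X, hXY, Matrix.one_mul, hWi]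
  have hab : a.map (algebraMap R[X] S) * b = e.map (algebraMap R[X] S) := by
    rw [haY, hb, Matrix.mul_assoc, ← Matrix.mul_assoc W, hWi', Matrix.one_mul, hYX]
  have hbφ : b.map (phi R S) = b0.map (red R) := by
    rw [hb, map_hom_eq, hWiφ, hX, Matrix.one_mul]
  have haφ : a.map (red R) = a0.map (red R) := by
    rw [← hred, haY, map_hom_eq, hWφ, Matrix.mul_one, hY]
  have hbe : b * e.map (algebraMap R[X] S) = b := by
    rw [← hab, ← Matrix.mul_assoc, hba, Matrix.one_mul]
  have hea : e * a = a := by rw [ha, ← Matrix.mul_assoc, he]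
  have h_int : LinearMap.range (opL (R := R) b) ≤ LinearMap.range (opL (R := R) (1 : Matrix (Fin r) (Fin r) S)) := by
    obtain ⟨Ω, hΩ, A, hA⟩ := exists_common_denom (R := R) b
    obtain ⟨F, hF, hF'⟩ := exists_low hΩ N
    refine nak _ _ (F.map (opL b)) (hF.map _) (LinearMap.map_le_range) ?_ ?_
    · rintro _ ⟨v, rfl⟩
      obtain ⟨q, hq⟩ := hF' v
      have : opL b v = opL (1 : Matrix (Fin r) (Fin r) S) (A *ᵥ q) + opL b (v - Ω • q) := by
        have : opL (1 : Matrix (Fin r) (Fin r) S) (A *ᵥ q) = opL b (Ω • q) := by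
          rw [opL_mulVec, hA, Matrix.one_mul, opL_apply, opL_apply, Matrix.smul_mulVec,
            ← Matrix.mulVec_smul]
          congr 1
          ext i; simp
        rw [this, ← map_add, add_sub_cancel]
      rw [this]
      exact Submodule.add_mem_sup ⟨_, rfl⟩ (Submodule.mem_map_of_mem hq)
    · rintro _ ⟨v, rfl⟩
      have : opL b v = opL (1 : Matrix (Fin r) (Fin r) S) (b0 *ᵥ v) + opL b ((e - a * b0) *ᵥ v) := by
        rw [opL_mulVec, opL_mulVec, Matrix.map_sub _ (map_sub _), Matrix.mul_sub, hbe, map_hom_eq,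
          ← Matrix.mul_assoc, hba]
        simp only [opL_apply, Matrix.sub_mulVec]
        abel
      rw [this]
      refine Submodule.add_mem_sup ⟨_, rfl⟩ ?_
      have h7 : ((IsLocalRing.maximalIdeal R) • (⊤ : Submodule R (Fin N → R[X]))).map (opL b) = (IsLocalRing.maximalIdeal R) • LinearMap.range (opL (R := R) b) := by
        rw [Submodule.map_smul'', Submodule.map_top]
      rw [← h7]
      refine Submodule.mem_map_of_mem (pi_mem_smul _ fun i => poly_mem_smul ?_)
      have h8 : (e - a * b0).map (red R) = 0 := by
        rw [Matrix.map_sub _ (map_sub _), map_hom_eq, haφ, ← map_hom_eq, h1, sub_self]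
      simp only [Matrix.mulVec, dotProduct, map_sum, map_mul]
      refine Finset.sum_eq_zero fun j _ => ?_
      have := congrFun (congrFun h8 i) j
      simp only [Matrix.map_apply, Matrix.zero_apply] at this
      rw [this, zero_mul]
  have hbint : ∀ j, ∃ c : Fin r → R[X], ∀ i, (algebraMap R[X] S) (c i) = b i j := by
    intro j
    obtain ⟨c, hc⟩ := h_int ⟨Pi.single j 1, rfl⟩
    refine ⟨c, fun i => ?_⟩
    have := congrFun hc i
    simp only [opL_apply, Matrix.one_mulVec] at this
    rw [this]
    simp [Matrix.mulVec, dotProduct, Pi.single_apply]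
  choose c hc using hbint
  have hcb : (Matrix.of fun i j => c j i : Matrix (Fin r) (Fin N) R[X]).map (algebraMap R[X] S) = b := by
    ext i j; simp [hc]
  refine ⟨a, Matrix.of fun i j => c j i, ?_, ?_⟩
  · apply Matrix.map_injective hι
    dsimp only
    rw [map_hom_eq, hcb, hab]
  · apply Matrix.map_injective hι
    dsimp only
    rw [map_hom_eq, hcb, hba, Matrix.map_one _ (map_zero _) (map_one _)]

theorem horrocks {R : Type*} [CommRing R] [IsLocalRing R] {N r : ℕ}
    (e : Matrix (Fin N) (Fin N) R[X]) (he : e * e = e)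
    (α : Matrix (Fin N) (Fin r) R[X]) (β : Matrix (Fin r) (Fin N) R[X]) (ω : R[X]) (hω : ω.Monic)
    (hβα : β * α = ω • 1) (hαβ : α * β = ω • e) :
    ∃ (r : ℕ) (a : Matrix (Fin N) (Fin r) R[X]) (b : Matrix (Fin r) (Fin N) R[X]),
      a * b = e ∧ b * a = 1 := by
  let S := Localization (monics R)
  have hι : Function.Injective (algebraMap R[X] S) := by
    apply IsLocalization.injective S (M := monics R)
    intro p hp
    exact (mem_monics.1 hp).mem_nonZeroDivisors
  let ιh : R[X] →+* S := algebraMap R[X] S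
  obtain ⟨u, hu⟩ := IsLocalization.map_units S (⟨ω, hω⟩ : monics R)
  replace hu : (u : S) = ιh ω := hu
  let κ := FractionRing (IsLocalRing.ResidueField R)[X]
  let X : Matrix (Fin r) (Fin N) S := (↑u⁻¹ : S) • β.map ιh
  let Y : Matrix (Fin N) (Fin r) S := α.map ιh
  have hsm : ∀ {k l : ℕ} (c : R[X]) (A : Matrix (Fin k) (Fin l) R[X]),
      (c • A).map ιh = ιh c • A.map ιh := by
    intro k l c A; ext i j; simp
  have hXY : X * Y = 1 := by
    simp only [X, Y]
    rw [Matrix.smul_mul, ← map_hom_eq, hβα, hsm, ← hu, smul_smul, Units.inv_mul, one_smul,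
      Matrix.map_one _ (map_zero _) (map_one _)]
  have hYX : Y * X = e.map ιh := by
    simp only [X, Y]
    rw [Matrix.mul_smul, ← map_hom_eq, hαβ, hsm, ← hu, smul_smul, Units.inv_mul, one_smul]
  -- split over the residue field
  obtain ⟨r', a1, b1, hab1, hba1⟩ := idemFree_pid (IsLocalRing.ResidueField R)[X] N
    (e.map (mapRingHom (IsLocalRing.residue R))) (by rw [← map_hom_eq, he])
  have hsurj : Function.Surjective (mapRingHom (IsLocalRing.residue R)) :=
    Polynomial.map_surjective _ IsLocalRing.residue_surjective
  have hlift : ∀ {k l : ℕ} (A : Matrix (Fin k) (Fin l) (IsLocalRing.ResidueField R)[X]),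
      ∃ B : Matrix (Fin k) (Fin l) R[X], B.map (mapRingHom (IsLocalRing.residue R)) = A := by
    intro k l A
    choose B hB using fun i j => hsurj (A i j)
    exact ⟨Matrix.of B, by ext1 i j; exact hB i j⟩
  obtain ⟨a0, ha0⟩ := hlift a1
  obtain ⟨b0, hb0⟩ := hlift b1
  have hredmap : ∀ {k l : ℕ} (A : Matrix (Fin k) (Fin l) R[X]),
      A.map (red R) = (A.map (mapRingHom (IsLocalRing.residue R))).map
        (algebraMap (IsLocalRing.ResidueField R)[X] κ) := by
    intro k l A; rfl
  have h1 : (a0 * b0).map (red R) = e.map (red R) := by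
    rw [hredmap, hredmap, map_hom_eq, ha0, hb0, hab1]
  have h2 : (b0 * a0).map (red R) = 1 := by
    rw [hredmap, map_hom_eq, ha0, hb0, hba1, Matrix.map_one _ (map_zero _) (map_one _)]
  have hred : ∀ {k l : ℕ} (A : Matrix (Fin k) (Fin l) R[X]),
      (A.map ιh).map (phi R S) = A.map (red R) := by
    intro k l A; ext1 i j; exact phi_ι _
  let U := (X * a0.map ιh).map (phi R S)
  let U' := (b0.map ιh * Y).map (phi R S)
  have hUU' : U * U' = 1 := by
    have : U * U' = X.map (phi R S) * ((a0 * b0).map (red R)) * Y.map (phi R S) := by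
      simp only [U, U', map_hom_eq, hred, Matrix.mul_assoc]
    rw [this, h1, ← hred, ← hYX, ← map_hom_eq, ← map_hom_eq, ← Matrix.mul_assoc, hXY, Matrix.one_mul,
      hXY, Matrix.map_one _ (map_zero _) (map_one _)]
  have hU'U : U' * U = 1 := by
    have : U' * U = b0.map (red R) * ((Y * X).map (phi R S)) * a0.map (red R) := by
      simp only [U, U', map_hom_eq, hred, Matrix.mul_assoc]
    rw [this, hYX, hred, ← h1, map_hom_eq, ← Matrix.mul_assoc, ← map_hom_eq, h2, Matrix.one_mul,
      ← map_hom_eq, h2]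
  obtain rfl : r = r' := by
    have h5 := Matrix.rank_mul_le_left U U'
    have h6 := Matrix.rank_mul_le_left U' U
    rw [hUU', Matrix.rank_one, Fintype.card_fin] at h5
    rw [hU'U, Matrix.rank_one, Fintype.card_fin] at h6
    have h7 := U.rank_le_width
    have h8 := U'.rank_le_width
    omega
  have hdet : U.det ≠ 0 := by
    intro h
    have := congrArg Matrix.det hUU'
    rw [Matrix.det_mul, h, zero_mul, Matrix.det_one] at this
    exact zero_ne_one this
  obtain ⟨V, hV, hVU⟩ := lift_GL (R := R) (S := S) U hdet
  have hV1 : V⁻¹ * V = 1 := Matrix.nonsing_inv_mul _ hV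
  have hV2 : V * V⁻¹ = 1 := Matrix.mul_nonsing_inv _ hV
  obtain ⟨a, b, h⟩ := horrocks_aux (S := S) e he (V⁻¹ * X) (Y * V)
    (by rw [Matrix.mul_assoc, ← Matrix.mul_assoc X, hXY, Matrix.one_mul, hV1])
    (by rw [Matrix.mul_assoc, ← Matrix.mul_assoc V, hV2, Matrix.one_mul, hYX])
    a0 b0 h1 h2
    (by
      rw [Matrix.mul_assoc, map_hom_eq]
      change _ * U = 1
      rw [← hVU, ← map_hom_eq, hV1, Matrix.map_one _ (map_zero _) (map_one _)]) hι
  exact ⟨r, a, b, h⟩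

end horrocks
end part3

section part4
lemma map_smul_hom {A B : Type*} [CommRing A] [CommRing B] {k l : Type*} (f : A →+* B) (c : A)
    (M : Matrix k l A) : (c • M).map f = f c • M.map f := by
  ext i j; simp

lemma smul_mat_cancel {A : Type*} [CommRing A] {k l : Type*} {c : A}
    (hc : ∀ x, c * x = 0 → x = 0) {M M' : Matrix k l A} (h : c • M = c • M') : M = M' := by
  ext i j
  have := congrFun (congrFun h i) j
  simp only [Matrix.smul_apply, smul_eq_mul] at this
  rw [← sub_eq_zero]
  apply hc
  rw [mul_sub, this, sub_self]

/-- extended case: an idempotent over `R[X]` with a Horrocks datum splits. -/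
theorem split_global {R : Type*} [CommRing R] [IsDomain R] (hR : IdemFree R) {N r : ℕ}
    (e : Matrix (Fin N) (Fin N) R[X]) (he : e * e = e)
    (α : Matrix (Fin N) (Fin r) R[X]) (β : Matrix (Fin r) (Fin N) R[X]) (ω : R[X]) (hω : ω.Monic)
    (hβα : β * α = ω • 1) (hαβ : α * β = ω • e) :
    ∃ (r : ℕ) (a : Matrix (Fin N) (Fin r) R[X]) (b : Matrix (Fin r) (Fin N) R[X]),
      a * b = e ∧ b * a = 1 := by
  obtain ⟨G, G', hG, hG'⟩ := quillen_patch e he (by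
    intro m hm
    have f := mapRingHom (algebraMap R (Localization.AtPrime m))
    refine horrocks _ ?_ (α.map (mapRingHom (algebraMap R (Localization.AtPrime m))))
      (β.map (mapRingHom (algebraMap R (Localization.AtPrime m))))
      (mapRingHom (algebraMap R (Localization.AtPrime m)) ω) ?_ ?_ ?_
    · rw [← map_hom_eq, he]
    · exact hω.map _
    · rw [← map_hom_eq, hβα, map_smul_hom, Matrix.map_one _ (map_zero _) (map_one _)]
    · rw [← map_hom_eq, hαβ, map_smul_hom])
  obtain ⟨r', a, b, hab, hba⟩ := hR N (e.map (evalRingHom (0 : R))) (by rw [← map_hom_eq, he])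
  have hee : e.map (C.comp (evalRingHom (0 : R))) = a.map C * b.map C := by
    rw [← map_hom_eq, hab, Matrix.map_map]; rfl
  have hba' : b.map (C : R →+* R[X]) * a.map (C : R →+* R[X]) = 1 := by
    rw [← map_hom_eq, hba, Matrix.map_one _ (map_zero _) (map_one _)]
  rw [hee] at hG'
  refine ⟨r', G * a.map C, b.map C * G', ?_, ?_⟩
  · calc G * a.map C * (b.map C * G') = G * (a.map C * b.map C) * G' := by simp only [Matrix.mul_assoc]
      _ = (G * G') * (G * G') := by rw [← hG']; simp only [Matrix.mul_assoc]
      _ = e := by rw [hG, he]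
  · calc b.map C * G' * (G * a.map C) = b.map C * (G' * G) * a.map C := by simp only [Matrix.mul_assoc]
      _ = (b.map C * a.map C) * (b.map C * a.map C) := by rw [hG']; simp only [Matrix.mul_assoc]
      _ = 1 := by rw [hba', Matrix.one_mul]

theorem descent {R : Type*} [CommRing R] [IsDomain R] (hR : IdemFree R) {A : Type*} [CommRing A]
    (σ : R[X] →+* A) (ω : R[X]) (hω : ω.Monic) (hnz : ∀ x, σ ω * x = 0 → x = 0)
    (hW : ∀ x, ∃ q p, x = σ ω * q + σ p) (hW' : ∀ p q, σ p = σ ω * q → ω ∣ p) {N r : ℕ}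
    (e : Matrix (Fin N) (Fin N) A) (he : e * e = e)
    (α : Matrix (Fin N) (Fin r) A) (β : Matrix (Fin r) (Fin N) A)
    (hβα : β * α = σ ω • 1) (hαβ : α * β = σ ω • e) :
    ∃ (r : ℕ) (a : Matrix (Fin N) (Fin r) A) (b : Matrix (Fin r) (Fin N) A),
      a * b = e ∧ b * a = 1 := by
  have hlift : ∀ {k l : ℕ} (M : Matrix (Fin k) (Fin l) A), ∃ (M' : Matrix (Fin k) (Fin l) R[X])
      (Q : Matrix (Fin k) (Fin l) A), M'.map σ = M - σ ω • (σ ω • Q) := by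
    intro k l M
    have : ∀ x, ∃ q p, σ p = x - σ ω * (σ ω * q) := by
      intro x
      obtain ⟨q, p, hx⟩ := hW x
      obtain ⟨q', p', hq⟩ := hW q
      refine ⟨q', ω * p' + p, ?_⟩
      rw [map_add, map_mul, hx, hq]; ring
    choose q p h using this
    exact ⟨Matrix.of fun i j => p (M i j), Matrix.of fun i j => q (M i j), by ext i j; simp [h]⟩
  have hdiv : ∀ {k l : ℕ} (M : Matrix (Fin k) (Fin l) R[X]) (Q : Matrix (Fin k) (Fin l) A),
      M.map σ = σ ω • Q → ∃ M' : Matrix (Fin k) (Fin l) R[X], M = ω • M' ∧ M'.map σ = Q := by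
    intro k l M Q h
    have : ∀ i j, ω ∣ M i j := fun i j => hW' _ (Q i j) (by
      have := congrFun (congrFun h i) j
      simpa using this)
    choose M' hM' using this
    have h1 : M = ω • Matrix.of M' := by ext1 i j; simp [hM' i j]
    refine ⟨Matrix.of M', h1, ?_⟩
    apply smul_mat_cancel hnz
    rw [← h, ← map_smul_hom, ← h1]
  obtain ⟨α', α2, hα'⟩ := hlift α
  obtain ⟨β', β2, hβ'⟩ := hlift β
  obtain ⟨Z0, hZ0, hZ0'⟩ := hdiv (β' * α' - ω • 1) (σ ω • (σ ω • σ ω • (β2 * α2) - β2 * α - β * α2)) (by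
    rw [Matrix.map_sub _ (map_sub _), map_hom_eq, map_smul_hom, hα', hβ',
      Matrix.map_one _ (map_zero _) (map_one _), ← hβα]
    simp only [Matrix.sub_mul, Matrix.mul_sub, Matrix.smul_mul, Matrix.mul_smul, smul_sub]
    abel)
  obtain ⟨Z, hZ, -⟩ := hdiv Z0 _ hZ0'
  rw [hZ] at hZ0
  obtain ⟨E, hE, -⟩ := hdiv (α' * β') (e + σ ω • σ ω • σ ω • (α2 * β2) - σ ω • (α2 * β)
      - σ ω • (α * β2)) (by
    rw [map_hom_eq, hα', hβ']
    simp only [Matrix.sub_mul, Matrix.mul_sub, Matrix.smul_mul, Matrix.mul_smul, smul_sub, smul_add, hαβ]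
    abel)
  have hβα' : β' * α' = ω • 1 + ω • ω • Z := by rw [← hZ0]; abel
  let f := (finSumFinEquiv (m := r) (n := N)).symm
  let α'' : Matrix (Fin (r + N)) (Fin r) R[X] := (Matrix.fromRows (-(ω • Z)) α').submatrix f id
  let β'' : Matrix (Fin r) (Fin (r + N)) R[X] := (Matrix.fromCols (ω • 1) β').submatrix id f
  let e' : Matrix (Fin (r + N)) (Fin (r + N)) R[X] :=
    (Matrix.fromBlocks (-(ω • Z)) (-(Z * β')) α' E).submatrix f f
  have hnzR : ∀ x, ω * x = 0 → x = 0 := fun x hx => (mul_eq_zero.1 hx).resolve_left hω.ne_zero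
  have h1 : β'' * α'' = ω • 1 := by
    simp only [α'', β'']
    rw [Matrix.submatrix_mul_equiv, Matrix.fromCols_mul_fromRows, hβα']
    simp
  have h2 : α'' * β'' = ω • e' := by
    simp only [α'', β'', e']
    have h0 : ω • (Matrix.fromBlocks (-(ω • Z)) (-(Z * β')) α' E).submatrix f f =
      (ω • Matrix.fromBlocks (-(ω • Z)) (-(Z * β')) α' E).submatrix f f := rfl
    rw [h0, Matrix.fromBlocks_smul, ← hE]
    rw [← Matrix.submatrix_mul _ _ f id f Function.bijective_id, Matrix.fromRows_mul_fromCols]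
    simp
  have he' : e' * e' = e' := by
    apply smul_mat_cancel hnzR
    apply smul_mat_cancel hnzR
    calc ω • ω • (e' * e') = (ω • e') * (ω • e') := by simp [Matrix.smul_mul, Matrix.mul_smul]
      _ = α'' * (β'' * α'') * β'' := by rw [← h2]; simp only [Matrix.mul_assoc]
      _ = ω • ω • e' := by rw [h1, Matrix.mul_smul, Matrix.mul_one, Matrix.smul_mul, h2]
  obtain ⟨r', a, b, hab, hba⟩ := split_global hR e' he' α'' β'' ω hω h1 h2
  let g : A := σ ω
  let G : Matrix (Fin (r + N)) (Fin N) A :=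
    (Matrix.fromRows (-(Z.map σ * β)) (e - g • (α2 * β))).submatrix f id
  let G' : Matrix (Fin N) (Fin (r + N)) A :=
    (Matrix.fromCols α (e - g • (α * β2))).submatrix id f
  have hmr : α''.map σ = (Matrix.fromRows (-(g • Z.map σ)) (α'.map σ)).submatrix f id := by
    ext i j
    simp only [α'', Matrix.map_apply, Matrix.submatrix_apply]
    cases f i <;> simp [g]
  have hmc : β''.map σ = (Matrix.fromCols (g • 1) (β'.map σ)).submatrix id f := by
    ext i j
    simp only [β'', Matrix.map_apply, Matrix.submatrix_apply]
    cases f j with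
    | inl k =>
      by_cases hk : i = k
      · simp [g, Matrix.one_apply, hk]
      · simp [g, Matrix.one_apply, hk]
    | inr k => simp [g]
  have hG : g • G = α''.map σ * β := by
    rw [hmr]
    have : (Matrix.fromRows (-(g • Z.map σ)) (α'.map σ)).submatrix f id * β =
      (Matrix.fromRows (-(g • Z.map σ)) (α'.map σ) * β).submatrix f id := rfl
    rw [this, Matrix.fromRows_mul, hα', Matrix.sub_mul, hαβ]
    ext i j
    simp only [G, Matrix.smul_apply, Matrix.submatrix_apply]
    cases f i <;> simp [g, Matrix.smul_mul, mul_sub]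
  have hG' : g • G' = α * β''.map σ := by
    rw [hmc]
    have : α * (Matrix.fromCols (g • 1) (β'.map σ)).submatrix id f =
      (α * Matrix.fromCols (g • 1) (β'.map σ)).submatrix id f := rfl
    rw [this, Matrix.mul_fromCols, hβ', Matrix.mul_sub, hαβ]
    ext i j
    simp only [G', Matrix.smul_apply, Matrix.submatrix_apply]
    cases f j <;> simp [g, Matrix.mul_smul, mul_sub]
  have h1' : β''.map σ * α''.map σ = g • 1 := by
    rw [← map_hom_eq, h1, map_smul_hom, Matrix.map_one _ (map_zero _) (map_one _)]
  have h2' : α''.map σ * β''.map σ = g • e'.map σ := by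
    rw [← map_hom_eq, h2, map_smul_hom]
  have hGG' : G * G' = e'.map σ := by
    apply smul_mat_cancel hnz
    apply smul_mat_cancel hnz
    calc g • g • (G * G') = (g • G) * (g • G') := by simp [Matrix.smul_mul, Matrix.mul_smul]
      _ = α''.map σ * (β * α) * β''.map σ := by rw [hG, hG']; simp only [Matrix.mul_assoc]
      _ = _ := by rw [hβα, Matrix.mul_smul, Matrix.mul_one, Matrix.smul_mul, h2']
  have hG'G : G' * G = e := by
    apply smul_mat_cancel hnz
    apply smul_mat_cancel hnz
    calc g • g • (G' * G) = (g • G') * (g • G) := by simp [Matrix.smul_mul, Matrix.mul_smul]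
      _ = α * (β''.map σ * α''.map σ) * β := by rw [hG, hG']; simp only [Matrix.mul_assoc]
      _ = _ := by rw [h1', Matrix.mul_smul, Matrix.mul_one, Matrix.smul_mul, hαβ]
  have hab' : a.map σ * b.map σ = e'.map σ := by rw [← map_hom_eq, hab]
  have hba' : b.map σ * a.map σ = 1 := by
    rw [← map_hom_eq, hba, Matrix.map_one _ (map_zero _) (map_one _)]
  refine ⟨r', G' * a.map σ, b.map σ * G, ?_, ?_⟩
  · calc G' * a.map σ * (b.map σ * G) = G' * (a.map σ * b.map σ) * G := by simp only [Matrix.mul_assoc]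
      _ = (G' * G) * (G' * G) := by rw [hab', ← hGG']; simp only [Matrix.mul_assoc]
      _ = e := by rw [hG'G, he]
  · calc b.map σ * G * (G' * a.map σ) = b.map σ * (G * G') * a.map σ := by simp only [Matrix.mul_assoc]
      _ = (b.map σ * a.map σ) * (b.map σ * a.map σ) := by rw [hGG', ← hab']; simp only [Matrix.mul_assoc]
      _ = 1 := by rw [hba', Matrix.one_mul]
end part4

section part5
/-- a multiplicative weight on an additive monoid of exponents -/
structure Wt (I : Type*) [AddCommMonoid I] where
  /-- the weight function -/
  f : I → ℝ≥0
  zero : f 0 = 1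
  add : ∀ a b, f (a + b) = f a * f b
  ne : ∀ a, f a ≠ 0

/-- Gauss norm on the monoid algebra -/
noncomputable def gn {K I : Type*} [NormedField K] [AddCommMonoid I] (w : Wt I)
    (f : AddMonoidAlgebra K I) : ℝ≥0 :=
  f.coeff.support.sup (fun i => ‖f.coeff i‖₊ * w.f i)

section gn
variable {K I : Type*} [NormedField K] [AddCommMonoid I] (w : Wt I)

lemma le_gn (f : AddMonoidAlgebra K I) (i : I) : ‖f.coeff i‖₊ * w.f i ≤ gn w f := by
  by_cases h : i ∈ f.coeff.support
  · exact Finset.le_sup (f := fun i => ‖f.coeff i‖₊ * w.f i) h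
  · rw [Finsupp.notMem_support_iff.1 h]; simp

lemma gn_le {f : AddMonoidAlgebra K I} {C : ℝ≥0} (h : ∀ i, ‖f.coeff i‖₊ * w.f i ≤ C) :
    gn w f ≤ C := Finset.sup_le (fun i _ => h i)

lemma gn_zero : gn w (0 : AddMonoidAlgebra K I) = 0 := by simp [gn]

lemma exists_dom {f : AddMonoidAlgebra K I} (hf : f ≠ 0) :
    ∃ i ∈ f.coeff.support, ‖f.coeff i‖₊ * w.f i = gn w f := by
  have hne : f.coeff.support.Nonempty := by
    rw [Finsupp.support_nonempty_iff]; simpa using hf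
  obtain ⟨i, hi, h⟩ := Finset.exists_mem_eq_sup f.coeff.support hne
    (fun i => ‖f.coeff i‖₊ * w.f i)
  exact ⟨i, hi, h.symm⟩

lemma gn_pos {f : AddMonoidAlgebra K I} (hf : f ≠ 0) : 0 < gn w f := by
  obtain ⟨i, hi, h⟩ := exists_dom w hf
  rw [← h]
  have := Finsupp.mem_support_iff.1 hi
  exact mul_pos (nnnorm_pos.2 this) (pos_iff_ne_zero.2 (w.ne i))

lemma gn_single (i : I) (c : K) : gn w (AddMonoidAlgebra.single i c) = ‖c‖₊ * w.f i := by
  classical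
  apply le_antisymm
  · apply gn_le
    intro k
    rw [AddMonoidAlgebra.coeff_single, Finsupp.single_apply]
    split_ifs with h
    · rw [h]
    · simp
  · simpa using le_gn w (AddMonoidAlgebra.single i c) i

lemma gn_one : gn w (1 : AddMonoidAlgebra K I) = 1 := by
  rw [AddMonoidAlgebra.one_def, gn_single]; simp [w.zero]

lemma gn_neg (f : AddMonoidAlgebra K I) : gn w (-f) = gn w f := by
  have : ∀ g : AddMonoidAlgebra K I, gn w (-g) ≤ gn w g := by
    intro g
    apply gn_le; intro i
    have := le_gn w g i
    simpa using this
  apply le_antisymm (this f)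
  simpa using this (-f)

variable [IsUltrametricDist K]

lemma gn_add (f g : AddMonoidAlgebra K I) : gn w (f + g) ≤ max (gn w f) (gn w g) := by
  apply gn_le; intro i
  have h := IsUltrametricDist.nnnorm_add_le_max (f.coeff i) (g.coeff i)
  calc ‖(f+g).coeff i‖₊ * w.f i ≤ max ‖f.coeff i‖₊ ‖g.coeff i‖₊ * w.f i := by
        gcongr; simpa using h
    _ = max (‖f.coeff i‖₊ * w.f i) (‖g.coeff i‖₊ * w.f i) := by
        rw [max_mul_of_nonneg]; exact zero_le
    _ ≤ _ := max_le_max (le_gn w f i) (le_gn w g i)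

lemma gn_mul_le (f g : AddMonoidAlgebra K I) : gn w (f * g) ≤ gn w f * gn w g := by
  classical
  apply gn_le; intro i
  rw [AddMonoidAlgebra.coeff_mul, ← le_div_iff₀ (pos_iff_ne_zero.2 (w.ne i))]
  apply IsUltrametricDist.nnnorm_sum_le_of_forall_le
  intro x _
  apply IsUltrametricDist.nnnorm_sum_le_of_forall_le
  intro y _
  beta_reduce
  split_ifs with h
  · rw [le_div_iff₀ (pos_iff_ne_zero.2 (w.ne i)), nnnorm_mul, ← h, w.add]
    calc _ = (‖f.coeff x‖₊ * w.f x) * (‖g.coeff y‖₊ * w.f y) := by ring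
      _ ≤ _ := mul_le_mul' (le_gn w f x) (le_gn w g y)
  · simp

/-- a coefficient of a product where a single pair dominates -/
lemma gn_dom (f g : AddMonoidAlgebra K I) (x0 y0 : I)
    (hx : ‖f.coeff x0‖₊ * w.f x0 = gn w f) (hy : ‖g.coeff y0‖₊ * w.f y0 = gn w g)
    (hf : f ≠ 0) (hg : g ≠ 0)
    (h : ∀ x y, x + y = x0 + y0 → (x, y) ≠ (x0, y0) →
      ‖f.coeff x‖₊ * w.f x < gn w f ∨ ‖g.coeff y‖₊ * w.f y < gn w g) :
    ‖(f * g).coeff (x0 + y0)‖₊ * w.f (x0 + y0) = gn w f * gn w g := by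
  classical
  have hf0 := gn_pos w hf
  have hg0 := gn_pos w hg
  have hwp : 0 < w.f (x0 + y0) := pos_iff_ne_zero.2 (w.ne _)
  have hx0 : x0 ∈ f.coeff.support := by
    rw [Finsupp.mem_support_iff]; intro h0; rw [h0] at hx; simp at hx; exact hf0.ne hx
  have hy0 : y0 ∈ g.coeff.support := by
    rw [Finsupp.mem_support_iff]; intro h0; rw [h0] at hy; simp at hy; exact hg0.ne hy
  set S := f.coeff.support ×ˢ g.coeff.support with hS
  have e1 : (f * g).coeff (x0 + y0) = ∑ z ∈ S, if z.1 + z.2 = x0 + y0 then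
      f.coeff z.1 * g.coeff z.2 else 0 := by
    rw [AddMonoidAlgebra.coeff_mul, hS, Finset.sum_product]; rfl
  have hmem : (x0, y0) ∈ S := by simp only [hS, Finset.mem_product]; exact ⟨hx0, hy0⟩
  rw [← Finset.add_sum_erase S _ hmem] at e1
  simp only [if_true] at e1
  have hn0 : ‖f.coeff x0 * g.coeff y0‖₊ = gn w f * gn w g / w.f (x0 + y0) := by
    rw [eq_div_iff hwp.ne', nnnorm_mul, ← hx, ← hy, w.add]; ring
  have hlt : ‖∑ z ∈ S.erase (x0, y0), if z.1 + z.2 = x0 + y0 then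
      f.coeff z.1 * g.coeff z.2 else 0‖₊ < gn w f * gn w g / w.f (x0 + y0) := by
    refine lt_of_le_of_lt (Finset.nnnorm_sum_le_sup_nnnorm _ _) ?_
    rw [Finset.sup_lt_iff (by simp only [bot_eq_zero]; positivity)]
    rintro ⟨x, y⟩ hz
    split_ifs with hxy
    · rw [lt_div_iff₀ hwp, nnnorm_mul, ← hxy, w.add]
      have : ‖f.coeff x‖₊ * ‖g.coeff y‖₊ * (w.f x * w.f y) =
        (‖f.coeff x‖₊ * w.f x) * (‖g.coeff y‖₊ * w.f y) := by ring
      simp only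
      rw [this]
      rcases h x y hxy (Finset.ne_of_mem_erase hz) with h1 | h1
      · exact lt_of_le_of_lt (mul_le_mul' le_rfl (le_gn w g y))
          (mul_lt_mul_of_pos_right h1 hg0)
      · exact lt_of_le_of_lt (mul_le_mul' (le_gn w f x) le_rfl)
          (mul_lt_mul_of_pos_left h1 hf0)
    · simp only [nnnorm_zero]; positivity
  rw [e1, IsUltrametricDist.nnnorm_add_eq_max_of_nnnorm_ne_nnnorm, hn0, max_eq_left hlt.le,
    div_mul_cancel₀ _ hwp.ne']
  rw [hn0]; exact hlt.ne'
end gn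

section line
variable {K J : Type*} [NormedField K] [IsUltrametricDist K] [AddCommMonoid J] [LinearOrder J]
  [IsOrderedCancelAddMonoid J] (w : Wt J)

/-- top dominant index -/
lemma exists_top {f : AddMonoidAlgebra K J} (hf : f ≠ 0) :
    ∃ i, ‖f.coeff i‖₊ * w.f i = gn w f ∧ ∀ x, i < x → ‖f.coeff x‖₊ * w.f x < gn w f := by
  classical
  obtain ⟨i0, hi0, h0⟩ := exists_dom w hf
  set S := f.coeff.support.filter (fun i => ‖f.coeff i‖₊ * w.f i = gn w f)
  have hS : S.Nonempty := ⟨i0, by simp [S, h0]; simpa using hi0⟩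
  refine ⟨S.max' hS, (Finset.mem_filter.1 (S.max'_mem hS)).2, fun x hx => ?_⟩
  refine lt_of_le_of_ne (le_gn w f x) fun he => ?_
  have hxs : x ∈ S := by
    rw [Finset.mem_filter]
    refine ⟨?_, he⟩
    rw [Finsupp.mem_support_iff]; intro h; rw [h] at he; simp at he
    exact (gn_pos w hf).ne he
  exact absurd (S.le_max' x hxs) (not_le.2 hx)

/-- bottom dominant index -/
lemma exists_bot {f : AddMonoidAlgebra K J} (hf : f ≠ 0) :
    ∃ i, ‖f.coeff i‖₊ * w.f i = gn w f ∧ ∀ x, x < i → ‖f.coeff x‖₊ * w.f x < gn w f := by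
  classical
  obtain ⟨i0, hi0, h0⟩ := exists_dom w hf
  set S := f.coeff.support.filter (fun i => ‖f.coeff i‖₊ * w.f i = gn w f)
  have hS : S.Nonempty := ⟨i0, by simp [S, h0]; simpa using hi0⟩
  refine ⟨S.min' hS, (Finset.mem_filter.1 (S.min'_mem hS)).2, fun x hx => ?_⟩
  refine lt_of_le_of_ne (le_gn w f x) fun he => ?_
  have hxs : x ∈ S := by
    rw [Finset.mem_filter]
    refine ⟨?_, he⟩
    rw [Finsupp.mem_support_iff]; intro h; rw [h] at he; simp at he
    exact (gn_pos w hf).ne he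
  exact absurd (S.min'_le x hxs) (not_le.2 hx)

lemma gn_top {f g : AddMonoidAlgebra K J} (hf : f ≠ 0) (hg : g ≠ 0) {x0 y0 : J}
    (hx : ‖f.coeff x0‖₊ * w.f x0 = gn w f) (hx' : ∀ x, x0 < x → ‖f.coeff x‖₊ * w.f x < gn w f)
    (hy : ‖g.coeff y0‖₊ * w.f y0 = gn w g) (hy' : ∀ x, y0 < x → ‖g.coeff x‖₊ * w.f x < gn w g) :
    ‖(f * g).coeff (x0 + y0)‖₊ * w.f (x0 + y0) = gn w f * gn w g := by
  apply gn_dom w f g x0 y0 hx hy hf hg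
  intro x y hxy hne
  rcases lt_trichotomy x x0 with h | h | h
  · right
    apply hy'
    by_contra hc
    exact (add_lt_add_of_lt_of_le h (not_lt.1 hc)).ne hxy
  · subst h
    exact absurd (by rw [add_left_cancel hxy]) hne
  · left; exact hx' x h

lemma gn_bot {f g : AddMonoidAlgebra K J} (hf : f ≠ 0) (hg : g ≠ 0) {x0 y0 : J}
    (hx : ‖f.coeff x0‖₊ * w.f x0 = gn w f) (hx' : ∀ x, x < x0 → ‖f.coeff x‖₊ * w.f x < gn w f)
    (hy : ‖g.coeff y0‖₊ * w.f y0 = gn w g) (hy' : ∀ x, x < y0 → ‖g.coeff x‖₊ * w.f x < gn w g) :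
    ‖(f * g).coeff (x0 + y0)‖₊ * w.f (x0 + y0) = gn w f * gn w g := by
  apply gn_dom w f g x0 y0 hx hy hf hg
  intro x y hxy hne
  rcases lt_trichotomy x x0 with h | h | h
  · left; exact hx' x h
  · subst h
    exact absurd (by rw [add_left_cancel hxy]) hne
  · right
    apply hy'
    by_contra hc
    exact (add_lt_add_of_lt_of_le h (not_lt.1 hc)).ne' hxy

lemma gn_mul (f g : AddMonoidAlgebra K J) : gn w (f * g) = gn w f * gn w g := by
  by_cases hf : f = 0
  · simp [hf, gn_zero]
  by_cases hg : g = 0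
  · simp [hg, gn_zero]
  apply le_antisymm (gn_mul_le w f g)
  obtain ⟨x, hx, hx'⟩ := exists_top w hf
  obtain ⟨y, hy, hy'⟩ := exists_top w hg
  rw [← gn_top w hf hg hx hx' hy hy']
  exact le_gn w _ _

/-- T-level division estimate -/
lemma gn_div {p : AddMonoidAlgebra K J} (hp : p ≠ 0) (d : J)
    (hd : ‖p.coeff d‖₊ * w.f d = gn w p) (hd' : ∀ x, d < x → p.coeff x = 0)
    (h0' : ∀ x, x < 0 → p.coeff x = 0)
    (H : (∀ a : J, 0 ≤ a) ∨ ‖p.coeff 0‖₊ = gn w p)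
    (g r : AddMonoidAlgebra K J) (hr : ∀ x, r.coeff x ≠ 0 → 0 ≤ x ∧ x < d) :
    gn w g * gn w p ≤ gn w (g * p + r) := by
  by_cases hg : g = 0
  · simp [hg, gn_zero]
  have hpp := gn_pos w hp
  obtain ⟨a, ha, ha'⟩ := exists_top w hg
  by_cases h0 : 0 ≤ a
  · rw [← gn_top w hg hp ha ha' hd (fun x hx => by rw [hd' x hx]; simpa using hpp)]
    have : r.coeff (a + d) = 0 := by
      by_contra h
      exact absurd (hr _ h).2 (not_lt.2 (le_add_of_nonneg_left h0))
    have h2 := le_gn w (g * p + r) (a + d)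
    rwa [AddMonoidAlgebra.coeff_add, Finsupp.add_apply, this, add_zero] at h2
  · have H' := H.resolve_left (fun h => h0 (h a))
    obtain ⟨b, hb, hb'⟩ := exists_bot w hg
    have hba : b < 0 := by
      by_contra hc
      exact absurd hb (ne_of_lt (ha' b (lt_of_lt_of_le (not_le.1 h0) (not_lt.1 hc))))
    rw [← gn_bot w hg hp hb hb' (y0 := 0) (by rw [w.zero, mul_one, H'])
      (fun x hx => by rw [h0' x hx]; simpa using hpp)]
    have : r.coeff (b + 0) = 0 := by
      by_contra h
      exact absurd (hr _ h).1 (by simpa using hba)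
    have h2 := le_gn w (g * p + r) (b + 0)
    rwa [AddMonoidAlgebra.coeff_add, Finsupp.add_apply, this, add_zero] at h2
end line
end part5

section part6
lemma ultra_completion {S : Type*} [SeminormedCommRing S]
    (h : ∀ x y : S, ‖x + y‖ ≤ max ‖x‖ ‖y‖) : IsUltrametricDist (UniformSpace.Completion S) := by
  apply IsUltrametricDist.isUltrametricDist_of_forall_norm_add_le_max_norm
  intro x y
  refine UniformSpace.Completion.induction_on₂ x y ?_ ?_
  · exact isClosed_le (by fun_prop) (by fun_prop)
  · intro a b
    rw [← UniformSpace.Completion.coe_add]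
    simp only [UniformSpace.Completion.norm_coe]
    exact h a b

theorem exists_ring_completion {S : Type u} [CommRing S] (N : S → ℝ≥0) (h0 : N 0 = 0)
    (hneg : ∀ x, N (-x) = N x) (hadd : ∀ x y, N (x + y) ≤ max (N x) (N y))
    (hmul : ∀ x y, N (x * y) ≤ N x * N y) :
    ∃ (A : Type u) (_ : NormedCommRing A) (_ : CompleteSpace A) (_ : IsUltrametricDist A)
      (j : S →+* A), DenseRange j ∧ ∀ s, ‖j s‖₊ = N s := by
  let p : RingSeminorm S :=
    { toFun := fun x => (N x : ℝ)
      map_zero' := by simp [h0]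
      add_le' := fun x y => by
        have := (hadd x y).trans (max_le_add_of_nonneg zero_le zero_le)
        exact_mod_cast this
      neg' := fun x => by simp [hneg]
      mul_le' := fun x y => by exact_mod_cast hmul x y }
  let _ : SeminormedCommRing S := { p.toSeminormedRing with mul_comm := mul_comm }
  have hn : ∀ x : S, ‖x‖ = N x := fun x => rfl
  refine ⟨UniformSpace.Completion S, inferInstance, inferInstance,
    ultra_completion (fun x y => ?_), UniformSpace.Completion.coeRingHom,
    UniformSpace.Completion.denseRange_coe, fun s => ?_⟩
  · simp only [hn]; exact_mod_cast hadd x y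
  · apply NNReal.eq
    simp only [coe_nnnorm]
    exact (UniformSpace.Completion.norm_coe s).trans (hn s)

theorem exists_field_completion {S : Type u} [CommRing S] (N : S → ℝ≥0)
    (h0 : ∀ x, N x = 0 ↔ x = 0) (h1 : N 1 = 1) (hadd : ∀ x y, N (x + y) ≤ max (N x) (N y))
    (hmul : ∀ x y, N (x * y) = N x * N y) :
    ∃ (L : Type u) (_ : NormedField L) (_ : CompleteSpace L) (_ : IsUltrametricDist L)
      (j : S →+* L), (∀ s, ‖j s‖₊ = N s) ∧
      ∀ l : L, ∀ ε > 0, ∃ a b : S, b ≠ 0 ∧ ‖l - j a / j b‖ < ε := by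
  have : Nontrivial S := ⟨0, 1, fun h => by rw [← h, (h0 0).2 rfl] at h1; exact zero_ne_one h1⟩
  have : NoZeroDivisors S := ⟨fun {a b} h => by
    rw [← h0, ← h0]; rw [← h0, hmul] at h; exact mul_eq_zero.1 h⟩
  have : IsDomain S := NoZeroDivisors.to_isDomain S
  let v : Valuation S ℝ≥0 :=
    { toFun := N
      map_zero' := (h0 0).2 rfl
      map_one' := h1
      map_mul' := hmul
      map_add_le_max' := hadd }
  have hv : ∀ x, v x = N x := fun x => rfl
  have hS : nonZeroDivisors S ≤ v.supp.primeCompl := by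
    intro x hx hx'
    have : v x = 0 := hx'
    rw [hv, h0] at this
    exact nonZeroDivisors.ne_zero hx this
  let F := FractionRing S
  let V : Valuation F ℝ≥0 := v.extendToLocalization hS F
  let av : AbsoluteValue F ℝ :=
    { toFun := fun x => (V x : ℝ)
      map_mul' := fun x y => by simp
      nonneg' := fun x => NNReal.coe_nonneg _
      eq_zero' := fun x => by simp
      add_le' := fun x y => by
        have := (V.map_add x y).trans (max_le_add_of_nonneg zero_le zero_le)
        exact_mod_cast this }
  let _ : NormedField F := av.toNormedField
  have hn : ∀ x : F, ‖x‖ = V x := fun x => rfl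
  refine ⟨UniformSpace.Completion F, inferInstance, inferInstance,
    ultra_completion (fun x y => ?_),
    (UniformSpace.Completion.coeRingHom : F →+* _).comp (algebraMap S F), fun s => ?_, ?_⟩
  · simp only [hn]; exact_mod_cast V.map_add x y
  · apply NNReal.eq
    simp only [coe_nnnorm]
    refine (UniformSpace.Completion.norm_coe _).trans ((hn _).trans ?_)
    simp only [V]
    rw [Valuation.extendToLocalization_apply_map_apply, hv]
  · intro l ε hε
    obtain ⟨x, hx⟩ := Metric.denseRange_iff.1
      (UniformSpace.Completion.denseRange_coe (α := F)) l ε hε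
    obtain ⟨a, b, hb, rfl⟩ := IsFractionRing.div_surjective (A := S) x
    refine ⟨a, b, nonZeroDivisors.ne_zero hb, ?_⟩
    rw [dist_eq_norm] at hx
    have : ((algebraMap S F a / algebraMap S F b : F) : UniformSpace.Completion F) =
        UniformSpace.Completion.coeRingHom (algebraMap S F a) /
          UniformSpace.Completion.coeRingHom (algebraMap S F b) :=
      map_div₀ (UniformSpace.Completion.coeRingHom : F →+* UniformSpace.Completion F) _ _
    rw [this] at hx
    exact hx

theorem ext_hom {S A B : Type*} [CommRing S] [NormedCommRing A] [NormedCommRing B]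
    [CompleteSpace B] (j : S →+* A) (hj : DenseRange j) (f : S →+* B)
    (hf : ∀ s, ‖f s‖ = ‖j s‖) :
    ∃ F : A →+* B, (∀ s, F (j s) = f s) ∧ ∀ a, ‖F a‖ = ‖a‖ := by
  let _ : PseudoMetricSpace S := PseudoMetricSpace.induced j inferInstance
  have ue : IsUniformInducing j := ⟨rfl⟩
  have hu : UniformContinuous f := by
    refine Isometry.uniformContinuous (Isometry.of_dist_eq fun x y => ?_)
    rw [dist_eq_norm, ← map_sub, hf, map_sub, ← dist_eq_norm]; rfl
  refine ⟨IsDenseInducing.extendRingHom ue hj hu, fun s => ?_, ?_⟩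
  · exact IsDenseInducing.extend_eq (ue.isDenseInducing hj) hu.continuous s
  · have hc : Continuous (IsDenseInducing.extendRingHom ue hj hu) :=
      (uniformContinuous_uniformly_extend ue hj hu).continuous
    intro a
    refine hj.induction_on a (isClosed_eq (by fun_prop) (by fun_prop)) fun s => ?_
    rw [show IsDenseInducing.extendRingHom ue hj hu (j s) = f s from
      IsDenseInducing.extend_eq (ue.isDenseInducing hj) hu.continuous s, hf]
end part6

section part7
section weier
variable {R A : Type*} [NormedCommRing R] [CompleteSpace R] [NormedCommRing A] [CompleteSpace A]
  [IsUltrametricDist A]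

/-- the division map -/
noncomputable def dv (ι : R →+* A) (s : A) (d : ℕ) (h : A) : A × (Fin d → R) →+ A where
  toFun x := x.1 * h + ∑ k, ι (x.2 k) * s ^ (k : ℕ)
  map_zero' := by simp
  map_add' x y := by simp [add_mul, Finset.sum_add_distrib]; ring

lemma dv_apply (ι : R →+* A) (s : A) (d : ℕ) (h : A) (q : A) (r : Fin d → R) :
    dv ι s d h (q, r) = q * h + ∑ k, ι (r k) * s ^ (k : ℕ) := rfl

lemma dv_bound (ι : R →+* A) (s : A) (d : ℕ) (P : A) (hP : 0 < ‖P‖) (c : ℝ)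
    (hD : ∀ x, ‖x.1‖ * ‖P‖ ≤ ‖dv ι s d P x‖)
    (hF : ∀ (r : Fin d → R) k, ‖r k‖ * c ^ (k : ℕ) ≤ ‖∑ k, ι (r k) * s ^ (k : ℕ)‖)
    {h : A} (hh : ‖h - P‖ < ‖P‖) (x : A × (Fin d → R)) :
    ‖x.1‖ * ‖P‖ ≤ ‖dv ι s d h x‖ ∧ ∀ k, ‖x.2 k‖ * c ^ (k : ℕ) ≤ ‖dv ι s d h x‖ := by
  obtain ⟨q, r⟩ := x
  by_cases hq : q = 0
  · subst hq
    simp only [dv_apply, norm_zero, zero_mul, zero_add, norm_nonneg, true_and]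
    exact hF r
  · have hq' : 0 < ‖q‖ := norm_pos_iff.2 hq
    have e1 : dv ι s d h (q, r) = dv ι s d P (q, r) + q * (h - P) := by
      simp only [dv_apply]; ring
    have h1 := hD (q, r)
    have h2 : ‖q * (h - P)‖ < ‖dv ι s d P (q, r)‖ :=
      lt_of_le_of_lt (norm_mul_le _ _) (lt_of_lt_of_le (mul_lt_mul_of_pos_left hh hq') h1)
    have h3 : ‖dv ι s d h (q, r)‖ = ‖dv ι s d P (q, r)‖ := by
      rw [e1, IsUltrametricDist.norm_add_eq_max_of_norm_ne_norm h2.ne', max_eq_left h2.le]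
    have hhP : ‖h‖ ≤ ‖P‖ := by
      have := IsUltrametricDist.norm_add_le_max (h - P) P
      rw [sub_add_cancel] at this
      exact this.trans (max_le hh.le le_rfl)
    refine ⟨by rw [h3]; exact h1, fun k => (hF r k).trans ?_⟩
    have e2 : ∑ k, ι (r k) * s ^ (k : ℕ) = dv ι s d h (q, r) + -(q * h) := by
      simp only [dv_apply]; ring
    rw [e2]
    refine (IsUltrametricDist.norm_add_le_max _ _).trans (max_le le_rfl ?_)
    rw [norm_neg, h3]
    exact (norm_mul_le _ _).trans ((mul_le_mul_of_nonneg_left hhP hq'.le).trans h1)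

lemma dv_cont (ι : R →+* A) (hι : ∀ r, ‖ι r‖ = ‖r‖) (s : A) (d : ℕ)
    (h : A) : Continuous (dv ι s d h) := by
  have hc : Continuous ι := (AddMonoidHomClass.isometry_of_norm ι hι).continuous
  change Continuous (fun x : A × (Fin d → R) => x.1 * h + ∑ k, ι (x.2 k) * s ^ (k : ℕ))
  fun_prop

lemma dv_closed (ι : R →+* A) (hι : ∀ r, ‖ι r‖ = ‖r‖) (s : A) (d : ℕ) (P : A) (hP : 0 < ‖P‖) (c : ℝ) (hc : 0 < c)
    (hD : ∀ x, ‖x.1‖ * ‖P‖ ≤ ‖dv ι s d P x‖)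
    (hF : ∀ (r : Fin d → R) k, ‖r k‖ * c ^ (k : ℕ) ≤ ‖∑ k, ι (r k) * s ^ (k : ℕ)‖)
    {h : A} (hh : ‖h - P‖ < ‖P‖) : IsClosed (Set.range (dv ι s d h)) := by
  have hu : UniformContinuous (dv ι s d h) :=
    uniformContinuous_addMonoidHom_of_continuous (dv_cont ι hι s d h)
  obtain ⟨C, hC⟩ : ∃ C : ℝ≥0, ∀ x, ‖x‖ ≤ C * ‖dv ι s d h x‖ := by
    set M : ℝ≥0 := ‖P‖₊⁻¹ + ∑ k : Fin d, (Real.toNNReal c ^ (k : ℕ))⁻¹ with hM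
    refine ⟨M, fun x => ?_⟩
    obtain ⟨h1, h2⟩ := dv_bound ι s d P hP c hD hF hh x
    have hM1 : ‖P‖⁻¹ ≤ (M : ℝ) := by
      have : ‖P‖₊⁻¹ ≤ M := le_add_of_nonneg_right zero_le
      exact_mod_cast this
    have hM2 : ∀ k : Fin d, (c ^ (k : ℕ))⁻¹ ≤ (M : ℝ) := by
      intro k
      have : (Real.toNNReal c ^ (k : ℕ))⁻¹ ≤ M :=
        le_add_of_nonneg_of_le zero_le (Finset.single_le_sum
          (f := fun k : Fin d => (Real.toNNReal c ^ (k : ℕ))⁻¹) (fun _ _ => zero_le)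
          (Finset.mem_univ k))
      have h3 : (((Real.toNNReal c ^ (k : ℕ))⁻¹ : ℝ≥0) : ℝ) ≤ M := by exact_mod_cast this
      simpa [Real.coe_toNNReal _ hc.le] using h3
    rw [Prod.norm_def]
    refine max_le ?_ ((pi_norm_le_iff_of_nonneg (by positivity)).2 fun k => ?_)
    · rw [← le_div_iff₀ hP] at h1
      refine h1.trans ?_
      rw [div_eq_mul_inv, mul_comm]
      gcongr
    · have h4 := h2 k
      rw [← le_div_iff₀ (by positivity)] at h4
      refine h4.trans ?_
      rw [div_eq_mul_inv, mul_comm]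
      gcongr
      exact hM2 k
  exact (AddMonoidHomClass.antilipschitz_of_bound (dv ι s d h) hC).isClosed_range hu

lemma dv_surj (ι : R →+* A) (hι : ∀ r, ‖ι r‖ = ‖r‖) (s : A) (d : ℕ) (P : A) (hP : 0 < ‖P‖) (c : ℝ) (hc : 0 < c)
    (hD : ∀ x, ‖x.1‖ * ‖P‖ ≤ ‖dv ι s d P x‖)
    (hF : ∀ (r : Fin d → R) k, ‖r k‖ * c ^ (k : ℕ) ≤ ‖∑ k, ι (r k) * s ^ (k : ℕ)‖)
    (hE : DenseRange (dv ι s d P))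
    {h : A} (hh : ‖h - P‖ < ‖P‖) : Function.Surjective (dv ι s d h) := by
  have hPs : Function.Surjective (dv ι s d P) := by
    have h1 := dv_closed ι hι s d P hP c hc hD hF (h := P) (by simpa using hP)
    rw [← Set.range_eq_univ, ← h1.closure_eq]
    exact hE.closure_range
  set δ := ‖h - P‖ / ‖P‖ with hδ
  have hδ0 : 0 ≤ δ := by positivity
  have hδ1 : δ < 1 := (div_lt_one hP).2 hh
  have step : ∀ x : A, ∃ y, ‖x - dv ι s d h y‖ ≤ δ * ‖x‖ := by
    intro x
    obtain ⟨⟨q, r⟩, rfl⟩ := hPs x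
    refine ⟨(q, r), ?_⟩
    have e1 : dv ι s d P (q, r) - dv ι s d h (q, r) = -(q * (h - P)) := by
      simp only [dv_apply]; ring
    rw [e1, norm_neg]
    refine (norm_mul_le _ _).trans ?_
    have h1 := hD (q, r)
    rw [hδ, div_mul_eq_mul_div, le_div_iff₀ hP]
    calc ‖q‖ * ‖h - P‖ * ‖P‖ = ‖h - P‖ * (‖q‖ * ‖P‖) := by ring
      _ ≤ _ := by gcongr
  have iter : ∀ (n : ℕ) (x : A), ∃ y, ‖x - dv ι s d h y‖ ≤ δ ^ n * ‖x‖ := by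
    intro n
    induction n with
    | zero => intro x; exact ⟨0, by simp⟩
    | succ n ih =>
      intro x
      obtain ⟨y, hy⟩ := ih x
      obtain ⟨z, hz⟩ := step (x - dv ι s d h y)
      refine ⟨y + z, ?_⟩
      rw [map_add, ← sub_sub]
      refine hz.trans ?_
      rw [pow_succ']
      calc _ ≤ δ * (δ ^ n * ‖x‖) := by gcongr
        _ = _ := by ring
  have hdense : DenseRange (dv ι s d h) := by
    rw [Metric.denseRange_iff]
    intro x ε hε
    have ht : Tendsto (fun n : ℕ => δ ^ n * ‖x‖) atTop (nhds 0) := by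
      simpa using (tendsto_pow_atTop_nhds_zero_of_lt_one hδ0 hδ1).mul_const ‖x‖
    obtain ⟨n, hn⟩ := (ht.eventually_lt_const hε).exists
    obtain ⟨y, hy⟩ := iter n x
    exact ⟨y, by rw [dist_eq_norm]; exact lt_of_le_of_lt hy hn⟩
  rw [← Set.range_eq_univ, ← (dv_closed ι hι s d P hP c hc hD hF hh).closure_eq]
  exact hdense.closure_range

theorem weierstrass (ι : R →+* A) (hι : ∀ r, ‖ι r‖ = ‖r‖) (s : A) (d : ℕ) (P : A) (hP : 0 < ‖P‖) (c : ℝ) (hc : 0 < c)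
    (hD : ∀ x, ‖x.1‖ * ‖P‖ ≤ ‖dv ι s d P x‖)
    (hF : ∀ (r : Fin d → R) k, ‖r k‖ * c ^ (k : ℕ) ≤ ‖∑ k, ι (r k) * s ^ (k : ℕ)‖)
    (hE : DenseRange (dv ι s d P))
    [Nontrivial A] (p : R[X]) (hp : p.Monic) (hpd : p.natDegree = d)
    (hpP : eval₂RingHom ι s p = P) {h : A} (hh : ‖h - P‖ < ‖P‖) :
    ∃ (v : A) (ω : R[X]), ω.Monic ∧ eval₂RingHom ι s ω = v * h ∧ IsUnit v ∧
      (∀ x, eval₂RingHom ι s ω * x = 0 → x = 0) ∧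
      (∀ x, ∃ q p, x = eval₂RingHom ι s ω * q + eval₂RingHom ι s p) ∧
      (∀ p q, eval₂RingHom ι s p = eval₂RingHom ι s ω * q → ω ∣ p) := by
  have : Nontrivial R := ι.domain_nontrivial
  have hsum : ∀ f : R[X], f.degree < d →
      eval₂RingHom ι s f = ∑ k : Fin d, ι (f.coeff k) * s ^ (k : ℕ) := by
    intro f hf
    by_cases hf0 : f = 0
    · simp [hf0]
    · rw [degree_eq_natDegree hf0] at hf
      rw [coe_eval₂RingHom, eval₂_eq_sum_range' ι (by exact_mod_cast hf) s (n := d),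
        Finset.sum_range]
  have hpoly : ∀ r : Fin d → R, ∃ f : R[X], f.degree < d ∧ ∀ k : Fin d, f.coeff k = r k := by
    intro r
    refine ⟨∑ k : Fin d, C (r k) * X ^ (k : ℕ), ?_, fun k => ?_⟩
    · exact degree_sum_fin_lt r
    · simp [finsetSum_coeff, coeff_X_pow, Fin.val_inj]
  have hsurj := dv_surj ι hι s d P hP c hc hD hF hE hh
  have hbd := dv_bound ι s d P hP c hD hF hh
  obtain ⟨⟨q1, r1⟩, h1⟩ := hsurj (P - h)
  obtain ⟨f1, hf1, hf1'⟩ := hpoly r1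
  have hq1 : ‖q1‖ < 1 := by
    have := (hbd (q1, r1)).1
    rw [h1, norm_sub_rev] at this
    by_contra hc
    have : ‖P‖ ≤ ‖q1‖ * ‖P‖ := le_mul_of_one_le_left hP.le (not_lt.1 hc)
    linarith
  have hv : IsUnit (1 + q1) := by
    have := isUnit_one_sub_of_norm_lt_one (x := -q1) (by simpa using hq1)
    simpa using this
  have hpdeg : p.degree = d := by rw [degree_eq_natDegree hp.ne_zero, hpd]
  have hω : (p - f1).Monic := by
    apply Polynomial.Monic.sub_of_left hp
    rw [hpdeg]; exact hf1
  have hσω : eval₂RingHom ι s (p - f1) = (1 + q1) * h := by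
    rw [map_sub, hpP, hsum f1 hf1]
    simp only [hf1']
    rw [dv_apply] at h1
    linear_combination -h1
  have hωd : (p - f1).degree = d := by
    rw [degree_sub_eq_left_of_degree_lt (by rw [hpdeg]; exact hf1), hpdeg]
  obtain ⟨v, hv'⟩ := hv
  have hinj : ∀ x, dv ι s d h x = 0 → x = 0 := by
    intro x hx
    obtain ⟨h2, h3⟩ := hbd x
    rw [hx, norm_zero] at h2 h3
    ext k
    · have : ‖x.1‖ = 0 := by
        by_contra hne
        have := lt_of_le_of_ne (norm_nonneg x.1) (Ne.symm hne)
        have := mul_pos this hP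
        linarith
      simpa using this
    · have : ‖x.2 k‖ = 0 := by
        by_contra hne
        have := lt_of_le_of_ne (norm_nonneg (x.2 k)) (Ne.symm hne)
        have := mul_pos this (pow_pos hc k)
        linarith [h3 k]
      simpa using this
  refine ⟨1 + q1, p - f1, hω, hσω, ⟨v, hv'⟩, ?_, ?_, ?_⟩
  · intro x hx
    rw [hσω, ← hv'] at hx
    have h2 : dv ι s d h (x, 0) = 0 := by
      rw [dv_apply]; simp
      have := congrArg (fun y => ((v⁻¹ : Aˣ) : A) * y) hx
      simp only [mul_zero] at this
      rw [mul_assoc, Units.inv_mul_cancel_left] at this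
      rw [mul_comm, this]
    exact congrArg Prod.fst (hinj _ h2)
  · intro x
    obtain ⟨⟨q, r⟩, hx⟩ := hsurj x
    obtain ⟨f, hf, hf'⟩ := hpoly r
    refine ⟨((v⁻¹ : Aˣ) : A) * q, f, ?_⟩
    rw [hσω, ← hv', hsum f hf, ← hx, dv_apply]
    simp only [hf']
    rw [show (v : A) * h * (((v⁻¹ : Aˣ) : A) * q) = (v * ((v⁻¹ : Aˣ) : A)) * (q * h) by ring,
      Units.mul_inv, one_mul]
  · intro f q hfq
    rw [← modByMonic_eq_zero_iff_dvd hω]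
    have hdeg := degree_modByMonic_lt f hω
    rw [hωd] at hdeg
    have e := congrArg (eval₂RingHom ι s) (modByMonic_add_div f (p - f1))
    rw [map_add, map_mul, hfq, hsum _ hdeg, hσω] at e
    have h2 : dv ι s d h ((1 + q1) * (eval₂RingHom ι s (f /ₘ (p - f1)) - q),
        fun k => (f %ₘ (p - f1)).coeff k) = 0 := by
      rw [dv_apply]
      linear_combination e
    have h3 := congrArg Prod.snd (hinj _ h2)
    ext n
    by_cases hn : n < d
    · exact congrFun h3 ⟨n, hn⟩
    · rw [coeff_eq_zero_of_degree_lt (lt_of_lt_of_le hdeg (by exact_mod_cast not_lt.1 hn))]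
      simp
end weier
end part7

section part8
lemma idem_small {C : Type*} [NormedCommRing C] [IsUltrametricDist C] {n : ℕ}
    (f : Matrix (Fin n) (Fin n) C) (hf : f * f = f) (h : ∀ i j, ‖f i j‖ < 1) : f = 0 := by
  by_contra hne
  obtain ⟨i0, j0, h0⟩ : ∃ i j, f i j ≠ 0 := by
    by_contra hc; push Not at hc; exact hne (by ext i j; exact hc i j)
  have hne2 : (Finset.univ : Finset (Fin n × Fin n)).Nonempty := ⟨(i0, j0), Finset.mem_univ _⟩
  obtain ⟨⟨i, j⟩, -, hm⟩ := Finset.exists_max_image Finset.univ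
    (fun x : Fin n × Fin n => ‖f x.1 x.2‖) hne2
  set M := ‖f i j‖ with hM
  have hMp : 0 < M := lt_of_lt_of_le (norm_pos_iff.2 h0) (hm (i0, j0) (Finset.mem_univ _))
  have h1 : ‖f i j‖ ≤ M * M := by
    conv_lhs => rw [← hf, Matrix.mul_apply]
    apply IsUltrametricDist.norm_sum_le_of_forall_le_of_nonneg (by positivity)
    intro k _
    refine (norm_mul_le _ _).trans ?_
    gcongr
    · exact hm (i, k) (Finset.mem_univ _)
    · exact hm (k, j) (Finset.mem_univ _)
  have h2 := h i j
  rw [← hM] at h1 h2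
  nlinarith

lemma unit_close {C : Type*} [NormedCommRing C] [CompleteSpace C] [IsUltrametricDist C]
    (h1 : ‖(1 : C)‖ ≤ 1) (d : C) (hd : ‖d - 1‖ < 1) : ∃ u, u * d = 1 ∧ ‖u‖ ≤ 1 := by
  have : IsUnit d := by
    have := isUnit_one_sub_of_norm_lt_one (x := 1 - d) (by rwa [norm_sub_rev])
    simpa using this
  obtain ⟨v, rfl⟩ := this
  refine ⟨((v⁻¹ : Cˣ) : C), by simp, ?_⟩
  by_contra hc
  push Not at hc
  have e : ((v⁻¹ : Cˣ) : C) = 1 + -(((v⁻¹ : Cˣ) : C) * (v - 1)) := by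
    rw [mul_sub, Units.inv_mul]; ring
  have h2 := IsUltrametricDist.norm_add_le_max (1 : C) (-(((v⁻¹ : Cˣ) : C) * (v - 1)))
  rw [← e, norm_neg] at h2
  rcases le_max_iff.1 h2 with h3 | h3
  · linarith
  · have := h3.trans (norm_mul_le _ _)
    nlinarith

lemma common_den {T A C ι : Type*} [CommRing T] [IsDomain T] [CommRing A] [CommRing C]
    (θ : A →+* C) (δ : T →+* A) (s : Finset ι) (c : ι → C)
    (hc : ∀ i ∈ s, ∃ g : T, g ≠ 0 ∧ ∃ x, θ (δ g) * c i = θ x) :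
    ∃ g : T, g ≠ 0 ∧ ∀ i ∈ s, ∃ x, θ (δ g) * c i = θ x := by
  classical
  induction s using Finset.induction_on with
  | empty => exact ⟨1, one_ne_zero, by simp⟩
  | insert a s ha ih =>
    obtain ⟨g, hg, h⟩ := ih (fun i hi => hc i (Finset.mem_insert_of_mem hi))
    obtain ⟨g', hg', x', h'⟩ := hc a (Finset.mem_insert_self _ _)
    refine ⟨g * g', mul_ne_zero hg hg', fun i hi => ?_⟩
    rcases Finset.mem_insert.1 hi with rfl | hi
    · exact ⟨δ g * x', by rw [map_mul, map_mul, map_mul, ← h']; ring⟩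
    · obtain ⟨x, hx⟩ := h i hi
      exact ⟨δ g' * x, by rw [map_mul, map_mul, map_mul, ← hx]; ring⟩

theorem approx {T A C : Type*} [CommRing T] [IsDomain T] [NormedCommRing A]
    [NormedCommRing C] [CompleteSpace C] [IsUltrametricDist C] (h1 : ‖(1 : C)‖ ≤ 1)
    (θ : A →+* C) (hθ : ∀ a, ‖θ a‖ = ‖a‖) (δ : T →+* A) (N : T → ℝ)
    (hN0 : ∀ g, g ≠ 0 → 0 < N g)
    (hN : ∀ g x, ‖θ (δ g) * x‖ = N g * ‖x‖) (hU : ∀ g, g ≠ 0 → IsUnit (θ (δ g)))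
    (hdense : Dense {c : C | ∃ g : T, g ≠ 0 ∧ ∃ x, θ (δ g) * c = θ x})
    {n r : ℕ} (e : Matrix (Fin n) (Fin n) A) (he : e * e = e)
    (a : Matrix (Fin n) (Fin r) C) (b : Matrix (Fin r) (Fin n) C)
    (hab : a * b = e.map θ) (hba : b * a = 1) :
    ∃ (g : T) (h : A) (α : Matrix (Fin n) (Fin r) A) (β : Matrix (Fin r) (Fin n) A),
      g ≠ 0 ∧ β * α = h • 1 ∧ α * β = h • e ∧ ‖h - δ g‖ < N g := by
  have hinj : Function.Injective θ := by
    rw [injective_iff_map_eq_zero]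
    intro x hx
    have := hθ x
    rw [hx, norm_zero] at this
    exact norm_eq_zero.1 this.symm
  set E := e.map θ with hE
  have hEE : E * E = E := by rw [hE, ← map_hom_eq, he]
  -- open condition
  let D : (Fin n → Fin r → C) × (Fin r → Fin n → C) → Matrix (Fin r) (Fin r) C :=
    fun x => (Matrix.of x.2) * E * (Matrix.of x.1)
  let Z : (Fin n → Fin r → C) × (Fin r → Fin n → C) → Matrix (Fin n) (Fin n) C :=
    fun x => (D x).det • E - E * (Matrix.of x.1) * (D x).adjugate * (Matrix.of x.2) * E
  have c1 : Continuous (fun x : (Fin n → Fin r → C) × (Fin r → Fin n → C) =>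
    (Matrix.of x.1 : Matrix (Fin n) (Fin r) C)) := continuous_fst
  have c2 : Continuous (fun x : (Fin n → Fin r → C) × (Fin r → Fin n → C) =>
    (Matrix.of x.2 : Matrix (Fin r) (Fin n) C)) := continuous_snd
  have cD : Continuous D := (c2.matrix_mul continuous_const).matrix_mul c1
  have cZ : Continuous Z := by
    refine (cD.matrix_det.smul continuous_const).sub ?_
    exact (((continuous_const.matrix_mul c1).matrix_mul cD.matrix_adjugate).matrix_mul
      c2).matrix_mul continuous_const
  have hopen : IsOpen {x | ‖(D x).det - 1‖ < 1 ∧ ∀ i j, ‖Z x i j‖ < 1} := by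
    have : {x | ‖(D x).det - 1‖ < 1 ∧ ∀ i j, ‖Z x i j‖ < 1} =
      {x | ‖(D x).det - 1‖ < 1} ∩ ⋂ i, ⋂ j, {x | ‖Z x i j‖ < 1} := by
      ext x; simp
    rw [this]
    refine IsOpen.inter (isOpen_lt (cD.matrix_det.sub continuous_const).norm continuous_const) ?_
    exact isOpen_iInter_of_finite fun i => isOpen_iInter_of_finite fun j =>
      isOpen_lt (cZ.matrix_elem i j).norm continuous_const
  have hDab : D (a, b) = 1 := by
    change b * E * a = 1
    rw [← hab]
    calc b * (a * b) * a = (b * a) * (b * a) := by simp only [Matrix.mul_assoc]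
      _ = 1 := by rw [hba, one_mul]
  have hZab : Z (a, b) = 0 := by
    change (D (a,b)).det • E - E * a * (D (a,b)).adjugate * b * E = 0
    rw [hDab, det_one, adjugate_one, one_smul, Matrix.mul_one, Matrix.mul_assoc E a b, hab, hEE,
      hEE, sub_self]
  have hmem : (a, b) ∈ {x | ‖(D x).det - 1‖ < 1 ∧ ∀ i j, ‖Z x i j‖ < 1} := by
    refine ⟨?_, fun i j => ?_⟩
    · change ‖(D (a, b)).det - 1‖ < 1
      rw [hDab]; simp
    · change ‖Z (a, b) i j‖ < 1
      rw [hZab]; simp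
  set S := {c : C | ∃ g : T, g ≠ 0 ∧ ∃ x, θ (δ g) * c = θ x} with hS
  have hdd : Dense ((Set.univ.pi fun _ : Fin n => Set.univ.pi fun _ : Fin r => S) ×ˢ
      (Set.univ.pi fun _ : Fin r => Set.univ.pi fun _ : Fin n => S)) :=
    (dense_pi _ fun _ _ => dense_pi _ fun _ _ => hdense).prod
      (dense_pi _ fun _ _ => dense_pi _ fun _ _ => hdense)
  obtain ⟨⟨a1, b1⟩, hs, hd1, hz1⟩ := hdd.exists_mem_open hopen ⟨(a, b), hmem⟩
  simp only [Set.mem_prod, Set.mem_pi, Set.mem_univ, true_implies] at hs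
  obtain ⟨g1, hg1, hx1⟩ := common_den θ δ Finset.univ
    (fun x : Fin n × Fin r => a1 x.1 x.2) (fun x _ => hs.1 x.1 x.2)
  obtain ⟨g2, hg2, hx2⟩ := common_den θ δ Finset.univ
    (fun x : Fin r × Fin n => b1 x.1 x.2) (fun x _ => hs.2 x.1 x.2)
  choose! x1 hx1 using hx1
  choose! x2 hx2 using hx2
  let a1m : Matrix (Fin n) (Fin r) C := Matrix.of a1
  let b1m : Matrix (Fin r) (Fin n) C := Matrix.of b1
  let α1 : Matrix (Fin n) (Fin r) A := Matrix.of fun i j => x1 (i, j)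
  let β1 : Matrix (Fin r) (Fin n) A := Matrix.of fun i j => x2 (i, j)
  have hα1 : α1.map θ = θ (δ g1) • a1m := by
    ext i j; simp [α1, a1m, ← hx1 (i, j) (Finset.mem_univ _)]
  have hβ1 : β1.map θ = θ (δ g2) • b1m := by
    ext i j; simp [β1, b1m, ← hx2 (i, j) (Finset.mem_univ _)]
  set D1 : Matrix (Fin r) (Fin r) C := b1m * E * a1m with hD1
  replace hd1 : ‖D1.det - 1‖ < 1 := hd1
  replace hz1 : ∀ i j, ‖(D1.det • E - E * a1m * D1.adjugate * b1m * E) i j‖ < 1 := hz1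
  obtain ⟨u, hu, hu1⟩ := unit_close h1 _ hd1
  -- key identity
  have key : E * a1m * D1.adjugate * b1m * E = D1.det • E := by
    set Q := E * a1m * D1.adjugate * b1m * E with hQ
    have hQQ : Q * Q = D1.det • Q := by
      have e1 : Q * Q = E * a1m * D1.adjugate * (b1m * (E * E) * a1m) * D1.adjugate * b1m * E := by
        simp only [hQ, Matrix.mul_assoc]
      rw [e1, hEE, ← hD1]
      have e2 : E * a1m * D1.adjugate * D1 * D1.adjugate * b1m * E
        = E * a1m * (D1.adjugate * D1) * D1.adjugate * b1m * E := by
        simp only [Matrix.mul_assoc]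
      rw [e2, adjugate_mul]
      simp [hQ, Matrix.mul_assoc]
    have hEQ : E * Q = Q := by
      have : E * Q = (E * E) * a1m * D1.adjugate * b1m * E := by simp only [hQ, Matrix.mul_assoc]
      rw [this, hEE]
    have hQE : Q * E = Q := by
      have : Q * E = E * a1m * D1.adjugate * b1m * (E * E) := by simp only [hQ, Matrix.mul_assoc]
      rw [this, hEE]
    have hf : E - u • Q = 0 := by
      apply idem_small
      · rw [sub_mul, mul_sub, mul_sub, hEE, Matrix.mul_smul, Matrix.smul_mul, Matrix.smul_mul,
          Matrix.mul_smul, hEQ, hQE, hQQ, smul_smul u D1.det, hu, one_smul, sub_self, sub_zero]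
      · intro i j
        have : E - u • Q = u • (D1.det • E - Q) := by
          rw [smul_sub, smul_smul, hu, one_smul]
        rw [this, Matrix.smul_apply, smul_eq_mul]
        refine lt_of_le_of_lt (norm_mul_le _ _) ?_
        exact lt_of_le_of_lt (mul_le_of_le_one_left (norm_nonneg _) hu1) (hz1 i j)
    have hE2 : E = u • Q := sub_eq_zero.1 hf
    conv_rhs => rw [hE2, smul_smul, mul_comm, hu, one_smul]
  set M : Matrix (Fin r) (Fin r) A := β1 * e * α1 with hM
  have hMθ : M.map θ = θ (δ (g1 * g2)) • D1 := by
    rw [hM, map_hom_eq, map_hom_eq, hα1, hβ1, ← hE, hD1]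
    simp [smul_smul, mul_comm]
  have hdet : θ M.det = θ (δ ((g1 * g2) ^ r)) * D1.det := by
    rw [RingHom.map_det, RingHom.mapMatrix_apply, hMθ, det_smul, Fintype.card_fin, ← map_pow,
      ← map_pow]
  refine ⟨(g1 * g2) ^ r, M.det, e * α1 * M.adjugate, β1 * e, pow_ne_zero _ (mul_ne_zero hg1 hg2),
    ?_, ?_, ?_⟩
  · have : β1 * e * (e * α1 * M.adjugate) = β1 * (e * e) * α1 * M.adjugate := by
      simp only [Matrix.mul_assoc]
    rw [this, he, ← hM, mul_adjugate]
  · apply Matrix.map_injective hinj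
    simp only
    rw [map_hom_eq, map_hom_eq, map_hom_eq, map_hom_eq, map_smul_hom, hα1, hβ1, ← hE]
    -- adjugate of M.map θ
    have hgu := hU _ (mul_ne_zero hg1 hg2)
    obtain ⟨γ, hγ⟩ := hgu
    have hadj : θ (δ (g1 * g2)) • M.adjugate.map θ = θ M.det • (u • D1.adjugate) := by
      have e1 : M.adjugate.map θ = (M.map θ).adjugate := by
        have := RingHom.map_adjugate θ M
        simpa [RingHom.mapMatrix_apply] using this
      have e2 : M.map θ * (M.map θ).adjugate = θ M.det • 1 := by
        rw [mul_adjugate, RingHom.map_det, RingHom.mapMatrix_apply]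
      rw [e1]
      have e3 : (u • D1.adjugate) * D1 = 1 := by
        rw [Matrix.smul_mul, adjugate_mul, smul_smul, hu, one_smul]
      calc θ (δ (g1 * g2)) • (M.map θ).adjugate
          = (u • D1.adjugate) * D1 * (θ (δ (g1 * g2)) • (M.map θ).adjugate) := by
            rw [e3, Matrix.one_mul]
        _ = (u • D1.adjugate) * (M.map θ * (M.map θ).adjugate) := by
            rw [hMθ]; simp only [Matrix.mul_assoc, Matrix.mul_smul, Matrix.smul_mul]
        _ = _ := by rw [e2]; simp
    have e4 : E * θ (δ g1) • a1m * M.adjugate.map θ * (θ (δ g2) • b1m * E)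
        = E * a1m * (θ (δ (g1 * g2)) • M.adjugate.map θ) * b1m * E := by
      rw [map_mul, map_mul]
      simp only [Matrix.mul_assoc, Matrix.mul_smul, Matrix.smul_mul, smul_smul]
      rw [mul_comm]
    rw [e4, hadj]
    have e5 : E * a1m * (θ M.det • u • D1.adjugate) * b1m * E
      = θ M.det • u • (E * a1m * D1.adjugate * b1m * E) := by
      simp only [Matrix.mul_assoc, Matrix.mul_smul, Matrix.smul_mul]
    rw [e5, key, smul_smul u, hu, one_smul]
  · rw [← hθ, map_sub, hdet]
    have : θ (δ ((g1 * g2) ^ r)) * D1.det - θ (δ ((g1 * g2) ^ r)) =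
      θ (δ ((g1 * g2) ^ r)) * (D1.det - 1) := by ring
    rw [this, hN]
    exact mul_lt_of_lt_one_right (hN0 _ (pow_ne_zero _ (mul_ne_zero hg1 hg2))) hd1
end part8

section part9
section nf
variable {K J : Type*} [NormedField K] [IsUltrametricDist K] [AddCommMonoid J] [LinearOrder J]
  [IsOrderedCancelAddMonoid J] (w : Wt J)

/-- evaluation of a polynomial at the coordinate of exponent `o` -/
noncomputable def pe (o : J) : K[X] →+* AddMonoidAlgebra K J :=
  eval₂RingHom AddMonoidAlgebra.singleZeroRingHom (AddMonoidAlgebra.single o 1)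

lemma pe_monomial (o : J) (k : ℕ) (c : K) :
    pe o (C c * X ^ k) = AddMonoidAlgebra.single (k • o) c := by
  simp [pe, AddMonoidAlgebra.single_pow, AddMonoidAlgebra.single_mul_single]

lemma gn_lt {f : AddMonoidAlgebra K J} {C : ℝ≥0} (hC : 0 < C)
    (h : ∀ i, ‖f.coeff i‖₊ * w.f i < C) : gn w f < C := by
  by_cases hf : f = 0
  · rw [hf, gn_zero]; exact hC
  · obtain ⟨i, -, hi⟩ := exists_dom w hf
    rw [← hi]; exact h i

theorem normal_form (o : J) (ho : 0 < o) (hstep : ∀ a b : J, a ≤ b → ∃ k : ℕ, b = a + k • o)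
    (halt : (∀ a : J, 0 ≤ a) ∨ ∀ a : J, ∃ b, a + b = 0)
    (g : AddMonoidAlgebra K J) (hg : g ≠ 0) :
    ∃ (u u' : AddMonoidAlgebra K J) (p : K[X]), u * u' = 1 ∧ p.Monic ∧
      gn w (u' * g - pe o p) < gn w (pe o p) ∧ pe o p ≠ 0 ∧
      ‖(pe o p).coeff (p.natDegree • o)‖₊ * w.f (p.natDegree • o) = gn w (pe o p) ∧
      (∀ x, p.natDegree • o < x → (pe o p).coeff x = 0) ∧
      (∀ x, x < 0 → (pe o p).coeff x = 0) ∧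
      ((∀ a : J, 0 ≤ a) ∨ (‖(pe o p).coeff 0‖₊ = gn w (pe o p) ∧ p.coeff 0 ≠ 0)) := by
  classical
  have hmono : StrictMono (fun k : ℕ => k • o) := nsmul_left_strictMono ho
  obtain ⟨i0, hi0, hi0'⟩ := exists_top w hg
  obtain ⟨i1, i1', hi1, h10, hlow⟩ : ∃ i1 i1' : J, i1 + i1' = 0 ∧ i1 ≤ i0 ∧
      ((∀ a : J, 0 ≤ a) ∧ i1 = 0 ∨ (‖g.coeff i1‖₊ * w.f i1 = gn w g ∧
        ∀ x, x < i1 → ‖g.coeff x‖₊ * w.f x < gn w g)) := by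
    rcases halt with h | h
    · exact ⟨0, 0, by simp, h _, Or.inl ⟨h, rfl⟩⟩
    · obtain ⟨i1, h1, h1'⟩ := exists_bot w hg
      obtain ⟨b, hb⟩ := h i1
      refine ⟨i1, b, hb, ?_, Or.inr ⟨h1, h1'⟩⟩
      by_contra hc
      exact absurd hi0 (h1' i0 (not_le.1 hc)).ne
  obtain ⟨d, hd⟩ := hstep i1 i0 h10
  set c := g.coeff i0 with hc
  have hgp := gn_pos w hg
  have hc0 : c ≠ 0 := by
    intro h; rw [h] at hi0; simp at hi0; exact hgp.ne hi0
  set u' : AddMonoidAlgebra K J := AddMonoidAlgebra.single i1' c⁻¹ with hu'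
  set u : AddMonoidAlgebra K J := AddMonoidAlgebra.single i1 c with hu
  have huu : u * u' = 1 := by
    rw [hu, hu', AddMonoidAlgebra.single_mul_single, hi1, mul_inv_cancel₀ hc0]; rfl
  set G := u' * g with hG
  have hGc : ∀ x, G.coeff x = c⁻¹ * g.coeff (i1 + x) := by
    intro x
    have : x = i1' + (i1 + x) := by rw [← add_assoc, add_comm i1', hi1, zero_add]
    conv_lhs => rw [this]
    rw [hG, hu', AddMonoidAlgebra.coeff_single_mul_add]
  set κ : ℝ≥0 := ‖c⁻¹‖₊ * w.f i1' with hκ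
  have hκ0 : 0 < κ := mul_pos (nnnorm_pos.2 (inv_ne_zero hc0)) (pos_iff_ne_zero.2 (w.ne _))
  have hww : w.f i1 * w.f i1' = 1 := by rw [← w.add, hi1, w.zero]
  have hGn : ∀ x, ‖G.coeff x‖₊ * w.f x = κ * (‖g.coeff (i1 + x)‖₊ * w.f (i1 + x)) := by
    intro x
    rw [hGc, nnnorm_mul, w.add, hκ]
    calc _ = ‖c⁻¹‖₊ * ‖g.coeff (i1 + x)‖₊ * w.f x * 1 := by ring
      _ = ‖c⁻¹‖₊ * ‖g.coeff (i1 + x)‖₊ * w.f x * (w.f i1 * w.f i1') := by rw [hww]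
      _ = _ := by ring
  have hGgn : gn w G = κ * gn w g := by
    rw [hG, gn_mul, hu', gn_single]
  have hGp : 0 < gn w G := by rw [hGgn]; positivity
  have htop : ‖G.coeff (d • o)‖₊ * w.f (d • o) = gn w G := by
    rw [hGn, ← hd, hi0, hGgn]
  have htop' : ∀ x, d • o < x → ‖G.coeff x‖₊ * w.f x < gn w G := by
    intro x hx
    rw [hGn, hGgn]
    refine mul_lt_mul_of_pos_left (hi0' _ ?_) hκ0
    rw [hd]; exact add_lt_add_right hx i1
  have htopc : G.coeff (d • o) = 1 := by rw [hGc, ← hd, inv_mul_cancel₀ hc0]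
  have hbot' : ∀ x, x < 0 → ‖G.coeff x‖₊ * w.f x < gn w G := by
    intro x hx
    rcases hlow with ⟨h, -⟩ | ⟨-, h⟩
    · exact absurd (h x) (not_le.2 hx)
    · rw [hGn, hGgn]
      refine mul_lt_mul_of_pos_left (h _ ?_) hκ0
      simpa using add_lt_add_right hx i1
  set p : K[X] := ∑ k ∈ Finset.range (d + 1), C (G.coeff (k • o)) * X ^ k with hp
  have hpc : ∀ n, p.coeff n = if n < d + 1 then G.coeff (n • o) else 0 := by
    intro n
    simp [hp, finsetSum_coeff, coeff_X_pow]
  have hpdle : p.natDegree ≤ d := by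
    rw [natDegree_le_iff_coeff_eq_zero]
    intro n hn; rw [hpc, if_neg (by omega)]
  have hpm : p.Monic := by
    apply monic_of_natDegree_le_of_coeff_eq_one d hpdle
    rw [hpc, if_pos (by omega), htopc]
  have hpd : p.natDegree = d := by
    apply le_antisymm hpdle
    apply le_natDegree_of_ne_zero
    rw [hpc, if_pos (by omega), htopc]; exact one_ne_zero
  have hpe : ∀ x, (pe o p).coeff x = if 0 ≤ x ∧ x ≤ d • o then G.coeff x else 0 := by
    intro x
    rw [hp, map_sum]
    simp only [pe_monomial]
    rw [AddMonoidAlgebra.coeff_sum, Finsupp.finsetSum_apply]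
    simp only [AddMonoidAlgebra.coeff_single, Finsupp.single_apply]
    split_ifs with h
    · obtain ⟨k, hk⟩ := hstep 0 x h.1
      rw [zero_add] at hk
      rw [Finset.sum_eq_single k]
      · rw [if_pos hk.symm, hk]
      · intro b _ hb
        rw [if_neg]
        intro h2; rw [hk] at h2
        exact hb (hmono.injective h2)
      · intro hk2
        exfalso; apply hk2
        rw [Finset.mem_range, Nat.lt_succ_iff]
        rw [hk] at h
        exact hmono.le_iff_le.1 h.2
    · apply Finset.sum_eq_zero
      intro k hk
      rw [if_neg]
      intro h2
      apply h
      rw [← h2]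
      exact ⟨nsmul_nonneg ho.le k, hmono.monotone (Nat.lt_succ_iff.1 (Finset.mem_range.1 hk))⟩
  have hdo : (0 : J) ≤ d • o := nsmul_nonneg ho.le d
  have hpgn : gn w (pe o p) = gn w G := by
    apply le_antisymm
    · apply gn_le; intro x
      rw [hpe]
      split_ifs
      · exact le_gn w G x
      · simp
    · rw [← htop]
      have := le_gn w (pe o p) (d • o)
      rwa [hpe, if_pos ⟨hdo, le_rfl⟩] at this
  refine ⟨u, u', p, huu, hpm, ?_, ?_, ?_, ?_, ?_, ?_⟩
  · rw [hpgn, ← hG]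
    apply gn_lt w hGp
    intro x
    rw [AddMonoidAlgebra.coeff_sub, Finsupp.sub_apply, hpe]
    split_ifs with h
    · simpa using hGp
    · rw [sub_zero]
      by_cases hx : 0 ≤ x
      · exact htop' x (not_le.1 fun h2 => h ⟨hx, h2⟩)
      · exact hbot' x (not_le.1 hx)
  · intro h
    rw [h, gn_zero] at hpgn
    exact hGp.ne hpgn
  · rw [hpd, hpgn, hpe, if_pos ⟨hdo, le_rfl⟩, htop]
  · intro x hx
    rw [hpd] at hx
    rw [hpe, if_neg fun h => absurd h.2 (not_le.2 hx)]
  · intro x hx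
    rw [hpe, if_neg fun h => absurd h.1 (not_le.2 hx)]
  · rcases hlow with ⟨h, -⟩ | ⟨h, -⟩
    · exact Or.inl h
    · right
      have h1 : ‖G.coeff 0‖₊ = gn w G := by
        have := hGn 0
        rw [w.zero, mul_one, add_zero, h] at this
        rw [this, hGgn]
      refine ⟨by rw [hpgn, hpe, if_pos ⟨le_rfl, hdo⟩, h1], ?_⟩
      rw [hpc, if_pos (by omega), zero_smul]
      intro h2
      rw [h2] at h1; simp at h1; exact hGp.ne h1
end nf

section curry
variable {K I J : Type*} [NormedField K] [IsUltrametricDist K] [AddCommMonoid I] [AddCommMonoid J]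

/-- product weight -/
noncomputable def Wt.prod (w : Wt I) (w' : Wt J) : Wt (I × J) where
  f x := w.f x.1 * w'.f x.2
  zero := by simp [w.zero, w'.zero]
  add a b := by simp [w.add, w'.add]; ring
  ne a := mul_ne_zero (w.ne _) (w'.ne _)

/-- the `i`-th component -/
noncomputable def cmp (i : I) (f : AddMonoidAlgebra K (I × J)) : AddMonoidAlgebra K J :=
  (AddMonoidAlgebra.curryRingEquiv f).coeff i

lemma cmp_coeff (i : I) (a : J) (f : AddMonoidAlgebra K (I × J)) :
    (cmp i f).coeff a = f.coeff (i, a) := by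
  classical
  induction f using AddMonoidAlgebra.induction_linear with
  | zero => simp [cmp]
  | add f g hf hg => simp only [cmp, map_add, AddMonoidAlgebra.coeff_add, Finsupp.add_apply] at *; rw [hf, hg]
  | single x c =>
    obtain ⟨i', a'⟩ := x
    simp only [cmp, AddMonoidAlgebra.curryRingEquiv_single, AddMonoidAlgebra.coeff_single,
      Finsupp.single_apply, Prod.mk.injEq]
    split_ifs <;> simp_all

lemma cmp_add (i : I) (f g : AddMonoidAlgebra K (I × J)) : cmp i (f + g) = cmp i f + cmp i g := by
  simp [cmp]

variable (w : Wt I) (w' : Wt J)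

lemma gn_cmp_le (i : I) (f : AddMonoidAlgebra K (I × J)) :
    gn w' (cmp i f) * w.f i ≤ gn (w.prod w') f := by
  rw [← le_div_iff₀ (pos_iff_ne_zero.2 (w.ne i))]
  apply gn_le
  intro a
  rw [le_div_iff₀ (pos_iff_ne_zero.2 (w.ne i)), cmp_coeff]
  have := le_gn (w.prod w') f (i, a)
  simp only [Wt.prod] at this
  calc _ = ‖f.coeff (i, a)‖₊ * (w.f i * w'.f a) := by ring
    _ ≤ _ := this

lemma gn_le_cmp {f : AddMonoidAlgebra K (I × J)} {D : ℝ≥0}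
    (h : ∀ i, gn w' (cmp i f) * w.f i ≤ D) : gn (w.prod w') f ≤ D := by
  apply gn_le
  rintro ⟨i, a⟩
  refine le_trans ?_ (h i)
  have := le_gn w' (cmp i f) a
  rw [cmp_coeff] at this
  calc _ = (‖f.coeff (i, a)‖₊ * w'.f a) * w.f i := by simp only [Wt.prod]; ring
    _ ≤ _ := by gcongr

/-- inclusion of the first factor -/
noncomputable def inlE : AddMonoidAlgebra K I →+* AddMonoidAlgebra K (I × J) :=
  AddMonoidAlgebra.mapDomainRingHom K (AddMonoidHom.inl I J)
/-- inclusion of the second factor -/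
noncomputable def inrE : AddMonoidAlgebra K J →+* AddMonoidAlgebra K (I × J) :=
  AddMonoidAlgebra.mapDomainRingHom K (AddMonoidHom.inr I J)

lemma inlE_single (i : I) (c : K) : inlE (J := J) (AddMonoidAlgebra.single i c) =
    AddMonoidAlgebra.single (i, 0) c := by
  simp [inlE]
lemma inrE_single (a : J) (c : K) : inrE (I := I) (AddMonoidAlgebra.single a c) =
    AddMonoidAlgebra.single (0, a) c := by
  simp [inrE]

lemma curry_inrE (t : AddMonoidAlgebra K J) :
    AddMonoidAlgebra.curryRingEquiv (inrE (I := I) t) = AddMonoidAlgebra.single 0 t := by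
  induction t using AddMonoidAlgebra.induction_linear with
  | zero => simp
  | add f g hf hg => rw [map_add, map_add, hf, hg, AddMonoidAlgebra.single_add]
  | single a c => rw [inrE_single, AddMonoidAlgebra.curryRingEquiv_single]

lemma cmp_mul_inrE (i : I) (f : AddMonoidAlgebra K (I × J)) (t : AddMonoidAlgebra K J) :
    cmp i (f * inrE t) = cmp i f * t := by
  simp only [cmp]
  rw [map_mul, curry_inrE, AddMonoidAlgebra.coeff_mul_single_zero]

lemma cmp_inlE_mul (i : I) (r : AddMonoidAlgebra K I) (a : J) :
    cmp i (inlE r * AddMonoidAlgebra.single (0, a) 1) = AddMonoidAlgebra.single a (r.coeff i) := by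
  classical
  induction r using AddMonoidAlgebra.induction_linear with
  | zero => simp [cmp]
  | add f g hf hg =>
    rw [map_add, add_mul, cmp_add, hf, hg, ← AddMonoidAlgebra.single_add]; rfl
  | single x c =>
    rw [inlE_single, AddMonoidAlgebra.single_mul_single]
    simp only [cmp, Prod.mk_add_mk, add_zero, zero_add, mul_one,
      AddMonoidAlgebra.curryRingEquiv_single, AddMonoidAlgebra.coeff_single, Finsupp.single_apply]
    split_ifs <;> simp

lemma gn_inlE (r : AddMonoidAlgebra K I) : gn (w.prod w') (inlE r) = gn w r := by
  have hc : ∀ i, cmp (J := J) i (inlE r) = AddMonoidAlgebra.single 0 (r.coeff i) := by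
    intro i
    have := cmp_inlE_mul (J := J) i r 0
    rwa [show (AddMonoidAlgebra.single ((0, 0) : I × J) (1 : K)) = 1 from rfl, mul_one] at this
  apply le_antisymm
  · apply gn_le_cmp
    intro i
    rw [hc, gn_single, w'.zero, mul_one]
    exact le_gn w r i
  · apply gn_le
    intro i
    have := gn_cmp_le w w' i (inlE r)
    rwa [hc, gn_single, w'.zero, mul_one] at this

lemma cmp_sum (i : I) {ι : Type*} (s : Finset ι) (f : ι → AddMonoidAlgebra K (I × J)) :
    cmp i (∑ k ∈ s, f k) = ∑ k ∈ s, cmp i (f k) := by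
  simp [cmp, AddMonoidAlgebra.coeff_sum]

end curry
end part9

section part10
/-- `A` is the completion of the monoid algebra for the Gauss norm -/
structure GM {K I A : Type*} [NormedField K] [AddCommMonoid I] [NormedCommRing A] (w : Wt I)
    (j : AddMonoidAlgebra K I →+* A) : Prop where
  norm : ∀ f, ‖j f‖₊ = gn w f
  dense : DenseRange j

theorem exists_model (K : Type u) [NormedField K] [IsUltrametricDist K] {I : Type}
    [AddCommMonoid I] (w : Wt I) :
    ∃ (A : Type u) (_ : NormedCommRing A) (_ : CompleteSpace A) (_ : IsUltrametricDist A)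
      (j : AddMonoidAlgebra K I →+* A), GM w j := by
  obtain ⟨A, h1, h2, h3, j, hj, hn⟩ := exists_ring_completion (S := AddMonoidAlgebra K I) (gn w)
    (gn_zero w) (gn_neg w) (gn_add w) (gn_mul_le w)
  exact ⟨A, h1, h2, h3, j, ⟨hn, hj⟩⟩

section model
variable {K I J : Type*} [NormedField K] [IsUltrametricDist K] [AddCommMonoid I] [AddCommMonoid J]
  [LinearOrder J] [IsOrderedCancelAddMonoid J] (w : Wt I) (w' : Wt J)

lemma gn_inrE (t : AddMonoidAlgebra K J) : gn (w.prod w') (inrE t) = gn w' t := by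
  classical
  have hc : ∀ i, cmp (J := J) i (inrE t) = if i = (0 : I) then t else 0 := by
    intro i
    simp only [cmp, curry_inrE, AddMonoidAlgebra.coeff_single, Finsupp.single_apply, eq_comm]
  apply le_antisymm
  · apply gn_le_cmp
    intro i
    rw [hc]
    split_ifs with h
    · rw [h, w.zero, mul_one]
    · simp [gn_zero]
  · have := gn_cmp_le w w' 0 (inrE t)
    rwa [hc, if_pos rfl, w.zero, mul_one] at this

lemma cmp_poly (o : J) {d : ℕ} (r : Fin d → AddMonoidAlgebra K I) (i : I) :
    cmp i (∑ k : Fin d, inlE (r k) * (AddMonoidAlgebra.single ((0 : I), o) (1 : K)) ^ (k : ℕ)) =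
      ∑ k : Fin d, AddMonoidAlgebra.single ((k : ℕ) • o) ((r k).coeff i) := by
  rw [cmp_sum]
  refine Finset.sum_congr rfl fun k _ => ?_
  rw [AddMonoidAlgebra.single_pow, one_pow, Prod.smul_mk, smul_zero, cmp_inlE_mul]

lemma D_alg (o : J) (ho : 0 < o) (p : AddMonoidAlgebra K J) (hp : p ≠ 0) (d : ℕ)
    (hd : ‖p.coeff (d • o)‖₊ * w'.f (d • o) = gn w' p) (hd' : ∀ x, d • o < x → p.coeff x = 0)
    (h0' : ∀ x, x < 0 → p.coeff x = 0)
    (H : (∀ a : J, 0 ≤ a) ∨ ‖p.coeff 0‖₊ = gn w' p)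
    (f : AddMonoidAlgebra K (I × J)) (r : Fin d → AddMonoidAlgebra K I) :
    gn (w.prod w') f * gn w' p ≤ gn (w.prod w') (f * inrE p +
      ∑ k : Fin d, inlE (r k) * (AddMonoidAlgebra.single ((0 : I), o) (1 : K)) ^ (k : ℕ)) := by
  classical
  have hpp := gn_pos w' hp
  rw [← le_div_iff₀ hpp]
  apply gn_le_cmp
  intro i
  rw [le_div_iff₀ hpp]
  refine le_trans ?_ (gn_cmp_le w w' i _)
  rw [cmp_add, cmp_mul_inrE, cmp_poly, mul_right_comm]
  gcongr
  apply gn_div w' hp (d • o) hd hd' h0' H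
  intro x hx
  by_contra hc
  apply hx
  rw [AddMonoidAlgebra.coeff_sum, Finsupp.finsetSum_apply]
  apply Finset.sum_eq_zero
  intro k _
  rw [AddMonoidAlgebra.coeff_single, Finsupp.single_apply, if_neg]
  rintro rfl
  exact hc ⟨nsmul_nonneg ho.le _, nsmul_left_strictMono ho k.2⟩

lemma F_alg (o : J) (ho : 0 < o) (d : ℕ) (r : Fin d → AddMonoidAlgebra K I) (k : Fin d) :
    gn w (r k) * (w'.f o) ^ (k : ℕ) ≤ gn (w.prod w')
      (∑ k : Fin d, inlE (r k) * (AddMonoidAlgebra.single ((0 : I), o) (1 : K)) ^ (k : ℕ)) := by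
  classical
  have hw : ∀ n : ℕ, w'.f (n • o) = w'.f o ^ n := by
    intro n
    induction n with
    | zero => simp [w'.zero]
    | succ n ih => rw [succ_nsmul, w'.add, ih, pow_succ]
  have hpos : 0 < w'.f o ^ (k : ℕ) := pow_pos (pos_iff_ne_zero.2 (w'.ne o)) _
  rw [← le_div_iff₀ hpos]
  apply gn_le
  intro i
  rw [le_div_iff₀ hpos, mul_right_comm]
  refine le_trans ?_ (gn_cmp_le w w' i _)
  gcongr
  rw [cmp_poly, ← hw]
  refine le_trans (le_of_eq ?_) (le_gn w' _ ((k : ℕ) • o))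
  congr 2
  rw [AddMonoidAlgebra.coeff_sum, Finsupp.finsetSum_apply, Finset.sum_eq_single k]
  · simp
  · intro b _ hb
    rw [AddMonoidAlgebra.coeff_single, Finsupp.single_apply, if_neg]
    intro h2
    exact hb (Fin.ext ((nsmul_left_strictMono ho).injective h2))
  · simp

variable {R A : Type*} [NormedCommRing R] [CompleteSpace R] [NormedCommRing A] [CompleteSpace A]
  [IsUltrametricDist A]

/-- Weierstrass preparation in the model -/
theorem weier_model (o : J) (ho : 0 < o)
    (hstep : ∀ a b : J, a ≤ b → ∃ k : ℕ, b = a + k • o)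
    (halt : (∀ a : J, 0 ≤ a) ∨ ∀ a : J, ∃ b, a + b = 0)
    (j : AddMonoidAlgebra K (I × J) →+* A) (hj : GM (w.prod w') j)
    (jR : AddMonoidAlgebra K I →+* R) (hjR : GM w jR)
    (ι : R →+* A) (hι : ∀ r, ‖ι r‖ = ‖r‖) (hιj : ∀ f, ι (jR f) = j (inlE f))
    (g : AddMonoidAlgebra K J) (hg : g ≠ 0) (h : A) (hh : ‖h - j (inrE g)‖ < gn w' g) :
    ∃ (s v : A) (ω : R[X]), ω.Monic ∧ eval₂RingHom ι s ω = v * h ∧ IsUnit v ∧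
      (∀ x, eval₂RingHom ι s ω * x = 0 → x = 0) ∧
      (∀ x, ∃ q p, x = eval₂RingHom ι s ω * q + eval₂RingHom ι s p) ∧
      (∀ p q, eval₂RingHom ι s p = eval₂RingHom ι s ω * q → ω ∣ p) := by
  obtain ⟨u, u', p, huu, hpm, hlt, hpne, hd, hd', h0', H⟩ := normal_form w' o ho hstep halt g hg
  have hjn : ∀ f, ‖j f‖ = gn (w.prod w') f := fun f => by rw [← hj.norm]; rfl
  have hjRn : ∀ f, ‖jR f‖ = gn w f := fun f => by rw [← hjR.norm]; rfl
  set s : A := j (AddMonoidAlgebra.single ((0 : I), o) (1 : K)) with hs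
  set pT := pe o p with hpT
  set P := j (inrE pT) with hP
  have hPn : ‖P‖ = gn w' pT := by rw [hP, hjn, gn_inrE]
  have hP0 : 0 < ‖P‖ := by rw [hPn]; exact_mod_cast gn_pos w' hpne
  have hA : Nontrivial A := ⟨P, 0, norm_pos_iff.1 hP0⟩
  set d := p.natDegree with hdd
  have hιc : Continuous ι := (AddMonoidHomClass.isometry_of_norm ι hι).continuous
  -- algebra level elements
  have hdvj : ∀ (f : AddMonoidAlgebra K (I × J)) (r : Fin d → AddMonoidAlgebra K I),
      dv ι s d P (j f, fun k => jR (r k)) = j (f * inrE pT +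
      ∑ k : Fin d, inlE (r k) * (AddMonoidAlgebra.single ((0 : I), o) (1 : K)) ^ (k : ℕ)) := by
    intro f r
    rw [dv_apply]
    simp only [hιj, map_add, map_mul, map_sum, map_pow]
    rfl
  have hdr : DenseRange (fun x : AddMonoidAlgebra K (I × J) × (Fin d → AddMonoidAlgebra K I) =>
      ((j x.1, fun k => jR (x.2 k)) : A × (Fin d → R))) :=
    hj.dense.prodMap (DenseRange.piMap fun _ => hjR.dense)
  have hD : ∀ x, ‖x.1‖ * ‖P‖ ≤ ‖dv ι s d P x‖ := by
    intro x
    have hcd := dv_cont ι hι s d P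
    refine hdr.induction_on x (isClosed_le (by fun_prop) (by fun_prop)) ?_
    rintro ⟨f, r⟩
    have := D_alg w w' o ho pT hpne d hd hd' h0' (H.imp id And.left) f r
    rw [hPn, hdvj, hjn]
    simp only [hjn]
    exact_mod_cast this
  have hcpos : (0 : ℝ) < w'.f o := by exact_mod_cast pos_iff_ne_zero.2 (w'.ne o)
  have hF : ∀ (r : Fin d → R) k,
      ‖r k‖ * (w'.f o : ℝ) ^ (k : ℕ) ≤ ‖∑ k, ι (r k) * s ^ (k : ℕ)‖ := by
    intro r k
    have hdr2 : DenseRange (fun x : (Fin d → AddMonoidAlgebra K I) =>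
      ((fun k => jR (x k)) : (Fin d → R))) := DenseRange.piMap fun _ => hjR.dense
    refine hdr2.induction_on r (isClosed_le (by fun_prop) (by fun_prop)) ?_
    intro r
    have := F_alg w w' o ho d r k
    have e := hdvj 0 r
    rw [dv_apply] at e
    simp only [map_zero, zero_mul, zero_add] at e
    rw [e, hjRn, hjn]
    exact_mod_cast this
  -- the polynomial over R
  set κ : K →+* R := jR.comp AddMonoidAlgebra.singleZeroRingHom with hκ
  set pR : R[X] := p.map κ with hpR
  have hRn : Nontrivial R := ι.domain_nontrivial
  have hpRm : pR.Monic := hpm.map κ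
  have hpRd : pR.natDegree = d := hpm.natDegree_map κ
  have hcomp : ((eval₂RingHom ι s).comp (mapRingHom κ) : K[X] →+* A) =
      (j.comp inrE).comp (pe o) := by
    apply Polynomial.ringHom_ext
    · intro c
      simp [hκ, pe, hιj, inlE_single, inrE_single, AddMonoidAlgebra.singleZeroRingHom]
    · simp [pe, inrE_single, hs]
  have hpP : eval₂RingHom ι s pR = P := by
    have := congrArg (fun F : K[X] →+* A => F p) hcomp
    exact this
  -- density
  have hE : DenseRange (dv ι s d P) := by
    have key : ∀ f, ∃ y, dv ι s d P y = j f := by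
      set π := Ideal.Quotient.mk (Ideal.span {P}) with hπ
      set B := (π.comp (eval₂RingHom ι s)).range with hB
      have hπP : π P = 0 := Ideal.Quotient.eq_zero_iff_mem.2 (Ideal.subset_span rfl)
      have hBs : π s ∈ B := ⟨X, by simp⟩
      have hBk : ∀ k : ℕ, π (j (AddMonoidAlgebra.single ((0 : I), k • o) (1 : K))) ∈ B := by
        intro k
        have : j (AddMonoidAlgebra.single ((0 : I), k • o) (1 : K)) = s ^ k := by
          rw [hs, ← map_pow, AddMonoidAlgebra.single_pow, one_pow, Prod.smul_mk, smul_zero]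
        rw [this, map_pow]
        exact B.pow_mem hBs k
      have hBa : ∀ a : J, π (j (AddMonoidAlgebra.single ((0 : I), a) (1 : K))) ∈ B := by
        intro a
        by_cases ha : 0 ≤ a
        · obtain ⟨k, hk⟩ := hstep 0 a ha
          rw [zero_add] at hk
          rw [hk]; exact hBk k
        · have H' := (H.resolve_left fun h => ha (h a)).2
          obtain ⟨k, hk⟩ := hstep a 0 (not_le.1 ha).le
          -- inverse of s
          obtain ⟨t, ht, hst⟩ : ∃ t ∈ B, t * π s = 1 := by
            refine ⟨π (eval₂RingHom ι s (C (κ (-(p.coeff 0)⁻¹)) * (p.divX.map κ))), ⟨_, rfl⟩, ?_⟩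
            have e1 : eval₂RingHom ι s (C (κ (-(p.coeff 0)⁻¹)) * (p.divX.map κ)) * s - 1 =
                eval₂RingHom ι s (C (κ (-(p.coeff 0)⁻¹))) * P := by
              have e3 : p.map κ = p.divX.map κ * X + C (κ (p.coeff 0)) := by
                conv_lhs => rw [← divX_mul_X_add p]
                simp
              have e4 : P = eval₂RingHom ι s (p.divX.map κ) * s + ι (κ (p.coeff 0)) := by
                have := congrArg (eval₂RingHom ι s) e3
                rw [map_add, map_mul] at this
                rw [← hpP, hpR, this]
                simp
              have e5 : ι (κ (-(p.coeff 0)⁻¹)) * ι (κ (p.coeff 0)) = -1 := by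
                rw [← map_mul, ← map_mul, neg_mul, inv_mul_cancel₀ H']
                simp
              have e6 : eval₂RingHom ι s (C (κ (-(p.coeff 0)⁻¹))) = ι (κ (-(p.coeff 0)⁻¹)) := by
                simp
              rw [map_mul, e6]
              linear_combination (-ι (κ (-(p.coeff 0)⁻¹))) * e4 - e5
            have e4 := congrArg π e1
            rw [map_sub, map_mul π _ s, map_mul π _ P, hπP, mul_zero, map_one] at e4
            exact sub_eq_zero.1 e4
          have e5 : π (j (AddMonoidAlgebra.single ((0 : I), a) (1 : K))) * π s ^ k = 1 := by
            rw [← map_pow, ← map_mul, hs, ← map_pow, ← map_mul, AddMonoidAlgebra.single_pow,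
              AddMonoidAlgebra.single_mul_single, one_pow, one_mul, Prod.smul_mk, smul_zero,
              Prod.mk_add_mk, add_zero, ← hk]
            exact (congrArg π (map_one j)).trans (map_one π)
          have e6 : π (j (AddMonoidAlgebra.single ((0 : I), a) (1 : K))) = t ^ k := by
            calc _ = π (j (AddMonoidAlgebra.single ((0 : I), a) (1 : K))) * (t * π s) ^ k := by
                  rw [hst, one_pow, mul_one]
              _ = (π (j (AddMonoidAlgebra.single ((0 : I), a) (1 : K))) * π s ^ k) * t ^ k := by
                  rw [mul_pow]; ring
              _ = _ := by rw [e5, one_mul]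
          rw [e6]; exact B.pow_mem ht k
      have hBf : ∀ f, π (j f) ∈ B := by
        intro f
        induction f using AddMonoidAlgebra.induction_linear with
        | zero => simp
        | add f g hf hg => rw [map_add, map_add]; exact B.add_mem hf hg
        | single x c =>
          obtain ⟨i, a⟩ := x
          have : AddMonoidAlgebra.single (i, a) c = inlE (AddMonoidAlgebra.single i c) *
              AddMonoidAlgebra.single ((0 : I), a) (1 : K) := by
            rw [inlE_single, AddMonoidAlgebra.single_mul_single]; simp
          rw [this, map_mul, map_mul, ← hιj]
          exact B.mul_mem ⟨C (jR (AddMonoidAlgebra.single i c)), by simp⟩ (hBa a)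
      intro f
      obtain ⟨F, hF⟩ := hBf f
      rw [RingHom.comp_apply, hπ, Ideal.Quotient.eq, Ideal.mem_span_singleton'] at hF
      obtain ⟨q, hq⟩ := hF
      have hdeg := degree_modByMonic_lt F hpRm
      have e := congrArg (eval₂RingHom ι s) (modByMonic_add_div F pR)
      rw [map_add, map_mul, hpP] at e
      refine ⟨(eval₂RingHom ι s (F /ₘ pR) - q, fun k => (F %ₘ pR).coeff k), ?_⟩
      rw [dv_apply]
      have e2 : ∑ k : Fin d, ι ((F %ₘ pR).coeff k) * s ^ (k : ℕ) = eval₂RingHom ι s (F %ₘ pR) := by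
        by_cases hf0 : F %ₘ pR = 0
        · simp [hf0]
        · rw [degree_eq_natDegree hf0, degree_eq_natDegree hpRm.ne_zero, hpRd] at hdeg
          rw [coe_eval₂RingHom, eval₂_eq_sum_range' ι (by exact_mod_cast hdeg) s (n := d),
            Finset.sum_range]
      rw [e2]
      linear_combination e - hq
    refine hj.dense.mono ?_
    rintro _ ⟨f, rfl⟩
    exact key f
  -- normalise h
  have hu'0 : u' ≠ 0 := by rintro rfl; rw [mul_zero] at huu; exact zero_ne_one huu
  have hgn1 : gn w' (u' * g) ≤ gn w' pT := by
    have := gn_add w' (u' * g - pT) pT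
    rw [sub_add_cancel] at this
    exact this.trans (max_le hlt.le le_rfl)
  have hh' : ‖j (inrE u') * h - P‖ < ‖P‖ := by
    have e : j (inrE u') * h - P = j (inrE u') * (h - j (inrE g)) + j (inrE (u' * g - pT)) := by
      simp only [map_sub, map_mul, hP]; ring
    rw [e]
    refine lt_of_le_of_lt (IsUltrametricDist.norm_add_le_max _ _) (max_lt ?_ ?_)
    · refine lt_of_le_of_lt (norm_mul_le _ _) ?_
      rw [hjn, gn_inrE, hPn]
      have : (0 : ℝ) < gn w' u' := by exact_mod_cast gn_pos w' hu'0
      refine lt_of_lt_of_le (mul_lt_mul_of_pos_left hh this) ?_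
      rw [gn_mul] at hgn1
      exact_mod_cast hgn1
    · rw [hjn, gn_inrE, hPn]
      exact_mod_cast hlt
  obtain ⟨v, ω, h1, h2, h3, h4⟩ := weierstrass ι hι s d P hP0 (w'.f o) hcpos hD hF hE pR hpRm hpRd
    hpP hh'
  refine ⟨s, v * j (inrE u'), ω, h1, by rw [h2, mul_assoc], h3.mul ?_, h4⟩
  apply IsUnit.of_mul_eq_one (j (inrE u))
  rw [← map_mul, ← map_mul, mul_comm, huu, map_one, map_one]
end model
end part10

section part11
/-- all completed monoid algebras for the weight `w` have free projectives -/
def Good (I : Type) [AddCommMonoid I] (w : Wt I) : Prop :=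
  ∀ (K : Type u) [NormedField K] [CompleteSpace K] [IsUltrametricDist K] (A : Type u)
    [NormedCommRing A] [CompleteSpace A] [IsUltrametricDist A] (j : AddMonoidAlgebra K I →+* A),
    GM w j → IdemFree A ∧ IsDomain A

lemma norm_single_mul {L I C : Type*} [NormedField L] [AddCommMonoid I] [NormedCommRing C]
    (w : Wt I) (j : AddMonoidAlgebra L I →+* C) (hj : GM w j) (l : L) (x : C) :
    ‖j (AddMonoidAlgebra.single 0 l) * x‖ = ‖l‖ * ‖x‖ := by
  have hn : ∀ l : L, ‖j (AddMonoidAlgebra.single 0 l)‖ = ‖l‖ := by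
    intro l
    have := hj.norm (AddMonoidAlgebra.single 0 l)
    rw [gn_single, w.zero, mul_one] at this
    exact congrArg NNReal.toReal this
  by_cases hl : l = 0
  · simp [hl]
  apply le_antisymm
  · exact (norm_mul_le _ _).trans (by rw [hn])
  · have e : x = j (AddMonoidAlgebra.single 0 l⁻¹) * (j (AddMonoidAlgebra.single 0 l) * x) := by
      rw [← mul_assoc, ← map_mul, AddMonoidAlgebra.single_mul_single, inv_mul_cancel₀ hl, add_zero,
        ← AddMonoidAlgebra.one_def, map_one, one_mul]
    have h2 : ‖x‖ ≤ ‖l‖⁻¹ * ‖j (AddMonoidAlgebra.single 0 l) * x‖ := by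
      conv_lhs => rw [e]
      refine (norm_mul_le _ _).trans ?_
      rw [hn, norm_inv]
    rwa [inv_mul_eq_div, le_div_iff₀ (norm_pos_iff.2 hl), mul_comm] at h2

theorem good_prod (I J : Type) [AddCommMonoid I] [AddCommMonoid J]
    [LinearOrder J] [IsOrderedCancelAddMonoid J] (w : Wt I) (w' : Wt J) (o : J) (ho : 0 < o)
    (hstep : ∀ a b : J, a ≤ b → ∃ k : ℕ, b = a + k • o)
    (halt : (∀ a : J, 0 ≤ a) ∨ ∀ a : J, ∃ b, a + b = 0) (H : Good.{u} I w) :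
    Good.{u} (I × J) (w.prod w') := by
  intro K _ _ _ A _ _ _ j hj
  have hjn : ∀ f, ‖j f‖ = gn (w.prod w') f := fun f => by rw [← hj.norm]; rfl
  obtain ⟨R, _, _, _, jR, hjR⟩ := exists_model K w
  have hjRn : ∀ f, ‖jR f‖ = gn w f := fun f => by rw [← hjR.norm]; rfl
  obtain ⟨hRf, hRd⟩ := H K R jR hjR
  obtain ⟨ι, hιj, hι⟩ := ext_hom jR hjR.dense (j.comp inlE) (fun s => by
    rw [RingHom.comp_apply, hjn, hjRn, gn_inlE])
  obtain ⟨L, _, _, _, τ, hτ, hτd⟩ := exists_field_completion (S := AddMonoidAlgebra K J) (gn w')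
    (fun x => ⟨fun h => by_contra fun hx => (gn_pos w' hx).ne' h, fun h => by rw [h, gn_zero]⟩)
    (gn_one w') (gn_add w') (gn_mul w')
  have hτ0 : ∀ g, g ≠ 0 → τ g ≠ 0 := by
    intro g hg h0
    have := hτ g
    rw [h0, nnnorm_zero] at this
    exact (gn_pos w' hg).ne this
  have hTdom : IsDomain (AddMonoidAlgebra K J) := Function.Injective.isDomain τ
    ((injective_iff_map_eq_zero τ).2 fun a ha => by_contra fun h => hτ0 a h ha)
  obtain ⟨C, _, _, _, jC, hjC⟩ := exists_model L w
  have hjCn : ∀ f, ‖jC f‖ = gn w f := fun f => by rw [← hjC.norm]; rfl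
  obtain ⟨hCf, hCd⟩ := H L C jC hjC
  have hgnT : ∀ f : AddMonoidAlgebra K (I × J),
      gn w (AddMonoidAlgebra.mapRingHom I τ (AddMonoidAlgebra.curryRingEquiv f)) =
        gn (w.prod w') f := by
    intro f
    have hc : ∀ i, ‖(AddMonoidAlgebra.mapRingHom I τ (AddMonoidAlgebra.curryRingEquiv f)).coeff i‖₊
        = gn w' (cmp i f) := by
      intro i
      rw [AddMonoidAlgebra.coeff_mapRingHom, hτ]; rfl
    apply le_antisymm
    · apply gn_le
      intro i
      rw [hc]
      exact gn_cmp_le w w' i f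
    · apply gn_le_cmp
      intro i
      rw [← hc]
      exact le_gn w _ i
  obtain ⟨θ, hθj, hθ⟩ := ext_hom j hj.dense
    (jC.comp ((AddMonoidAlgebra.mapRingHom I τ).comp
      (AddMonoidAlgebra.curryRingEquiv (R := K) (M := I) (N := J)).toRingHom))
    (fun s => by rw [hjn, ← hgnT]; exact hjCn _)
  have hθj' : ∀ f, θ (j f) =
      jC (AddMonoidAlgebra.mapRingHom I τ (AddMonoidAlgebra.curryRingEquiv f)) := hθj
  have hinj : Function.Injective θ := by
    rw [injective_iff_map_eq_zero]
    intro x hx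
    have := hθ x
    rw [hx, norm_zero] at this
    exact norm_eq_zero.1 this.symm
  have hAd : IsDomain A := Function.Injective.isDomain θ hinj
  have hθδ : ∀ g, θ (j (inrE g)) = jC (AddMonoidAlgebra.single 0 (τ g)) := by
    intro g
    rw [hθj', curry_inrE, AddMonoidAlgebra.mapRingHom_single]
  refine ⟨?_, hAd⟩
  intro N e he
  obtain ⟨r, a, b, hab, hba⟩ := hCf N (e.map θ) (by rw [← map_hom_eq, he])
  have hdense : Dense {c : C | ∃ g : AddMonoidAlgebra K J, g ≠ 0 ∧
      ∃ x, θ ((j.comp inrE) g) * c = θ x} := by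
    let S : AddSubgroup C :=
      { carrier := {c : C | ∃ g : AddMonoidAlgebra K J, g ≠ 0 ∧
          ∃ x, θ ((j.comp inrE) g) * c = θ x}
        zero_mem' := ⟨1, one_ne_zero, 0, by simp⟩
        add_mem' := by
          rintro x y ⟨g, hg, a, ha⟩ ⟨g', hg', a', ha'⟩
          refine ⟨g * g', mul_ne_zero hg hg',
            (j.comp inrE) g' * a + (j.comp inrE) g * a', ?_⟩
          rw [map_mul, map_mul, map_add, map_mul θ _ a, map_mul θ _ a', ← ha, ← ha']
          ring
        neg_mem' := by
          rintro x ⟨g, hg, a, ha⟩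
          exact ⟨g, hg, -a, by rw [mul_neg, ha, map_neg]⟩ }
    have key : ∀ f, jC f ∈ S.topologicalClosure := by
      intro f
      induction f using AddMonoidAlgebra.induction_linear with
      | zero => rw [map_zero]; exact S.topologicalClosure.zero_mem
      | add f g hf hg => rw [map_add]; exact S.topologicalClosure.add_mem hf hg
      | single i l =>
        change _ ∈ closure (S : Set C)
        rw [Metric.mem_closure_iff]
        intro ε hε
        have hwi : (0 : ℝ) < w.f i := by exact_mod_cast pos_iff_ne_zero.2 (w.ne i)
        obtain ⟨a, b, hb, hab⟩ := hτd l (ε / w.f i) (by positivity)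
        refine ⟨jC (AddMonoidAlgebra.single i (τ a / τ b)), ⟨b, hb,
          j (inlE (AddMonoidAlgebra.single i 1) * inrE a), ?_⟩, ?_⟩
        · rw [RingHom.comp_apply, hθδ, ← map_mul, AddMonoidAlgebra.single_mul_single, zero_add,
            mul_div_cancel₀ _ (hτ0 b hb), hθj', map_mul, map_mul, curry_inrE, inlE_single,
            AddMonoidAlgebra.curryRingEquiv_single, AddMonoidAlgebra.mapRingHom_single,
            AddMonoidAlgebra.mapRingHom_single, AddMonoidAlgebra.single_mul_single, add_zero,
            ← AddMonoidAlgebra.one_def, map_one, one_mul]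
        · rw [dist_eq_norm, ← map_sub, ← AddMonoidAlgebra.single_sub, hjCn, gn_single]
          rw [lt_div_iff₀ hwi] at hab
          exact_mod_cast hab
    have : Dense (closure (S : Set C)) := by
      refine hjC.dense.mono ?_
      rintro _ ⟨f, rfl⟩
      exact key f
    exact dense_closure.1 this
  obtain ⟨g, h, α, β, hg, h1, h2, h3⟩ := approx (T := AddMonoidAlgebra K J) (A := A) (C := C)
    (by rw [← map_one jC, hjCn, gn_one]; simp) θ hθ (j.comp inrE) (fun g => gn w' g)
    (fun g hg => by exact_mod_cast gn_pos w' hg)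
    (fun g x => by
      rw [RingHom.comp_apply, hθδ, norm_single_mul w jC hjC, ← hτ]; rfl)
    (fun g hg => by
      rw [RingHom.comp_apply, hθδ]
      apply IsUnit.of_mul_eq_one (jC (AddMonoidAlgebra.single 0 (τ g)⁻¹))
      rw [← map_mul, AddMonoidAlgebra.single_mul_single, mul_inv_cancel₀ (hτ0 g hg), add_zero,
        ← AddMonoidAlgebra.one_def, map_one])
    hdense e he a b hab hba
  obtain ⟨s, v, ω, hω, hωh, hv, hnz, hW, hW'⟩ := weier_model w w' o ho hstep halt j hj jR hjR ι hι
    hιj g hg h h3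
  refine descent hRf (eval₂RingHom ι s) ω hω hnz hW hW' e he α (v • β) ?_ ?_
  · rw [Matrix.smul_mul, h1, smul_smul, hωh]
  · rw [Matrix.mul_smul, h2, smul_smul, hωh]
end part11

section part12
lemma idemFree_equiv {A B : Type*} [CommRing A] [CommRing B] (φ : A ≃+* B) (hA : IdemFree A) :
    IdemFree B := by
  intro N e he
  obtain ⟨r, a, b, h1, h2⟩ := hA N (e.map φ.symm.toRingHom) (by rw [← map_hom_eq, he])
  refine ⟨r, a.map φ.toRingHom, b.map φ.toRingHom, ?_, ?_⟩
  · rw [← map_hom_eq, h1]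
    ext i k
    simp
  · rw [← map_hom_eq, h2]
    ext i k
    by_cases hik : i = k <;> simp [Matrix.one_apply, hik]

theorem good_equiv {I I' : Type} [AddCommMonoid I] [AddCommMonoid I'] (e : I ≃+ I') (w : Wt I)
    (w' : Wt I') (h : ∀ i, w'.f (e i) = w.f i) (H : Good.{u} I w) : Good.{u} I' w' := by
  intro K _ _ _ A _ _ _ j hj
  have hc : ∀ (f : AddMonoidAlgebra K I) i,
      (AddMonoidAlgebra.mapDomainRingEquiv K e f).coeff (e i) = f.coeff i := by
    classical
    intro f i
    induction f using AddMonoidAlgebra.induction_linear with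
    | zero => simp
    | add f g hf hg =>
      rw [map_add, AddMonoidAlgebra.coeff_add, Finsupp.add_apply, hf, hg]; rfl
    | single x c =>
      simp [AddMonoidAlgebra.coeff_single, Finsupp.single_apply]
  refine H K A (j.comp (AddMonoidAlgebra.mapDomainRingEquiv K e).toRingHom) ⟨?_, ?_⟩
  · intro f
    refine (hj.norm _).trans ?_
    apply le_antisymm
    · apply gn_le
      intro i
      obtain ⟨i, rfl⟩ := e.surjective i
      rw [h]
      refine le_trans (le_of_eq ?_) (le_gn w f i)
      congr 2
      exact hc f i
    · apply gn_le
      intro i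
      rw [← h, ← hc]
      exact le_gn w' _ _
  · refine hj.dense.mono ?_
    rintro _ ⟨f, rfl⟩
    refine ⟨(AddMonoidAlgebra.mapDomainRingEquiv K e).symm f, ?_⟩
    exact congrArg j (RingEquiv.apply_symm_apply _ f)

theorem good_base (I : Type) [AddCommMonoid I] [Subsingleton I] (w : Wt I) : Good.{u} I w := by
  intro K _ _ _ A _ _ _ j hj
  have hn : ∀ l : K, ‖j (AddMonoidAlgebra.single 0 l)‖ = ‖l‖ := by
    intro l
    have := hj.norm (AddMonoidAlgebra.single 0 l)
    rw [gn_single, w.zero, mul_one] at this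
    exact congrArg NNReal.toReal this
  set κ : K →+* A := j.comp AddMonoidAlgebra.singleZeroRingHom with hκ
  have hκn : ∀ l, ‖κ l‖ = ‖l‖ := hn
  have hiso : Isometry κ := AddMonoidHomClass.isometry_of_norm κ hκn
  have hsurj : Function.Surjective κ := by
    have hcl : IsClosed (Set.range κ) := hiso.isClosedEmbedding.isClosed_range
    have hd : DenseRange κ := by
      refine hj.dense.mono ?_
      rintro _ ⟨f, rfl⟩
      refine ⟨f.coeff 0, ?_⟩
      change j (AddMonoidAlgebra.single 0 (f.coeff 0)) = j f
      congr 1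
      ext i
      rw [Subsingleton.elim i 0, AddMonoidAlgebra.coeff_single, Finsupp.single_eq_same]
    intro y
    have := hd.closure_range
    rw [hcl.closure_eq] at this
    exact this.ge trivial
  let φ : K ≃+* A := RingEquiv.ofBijective κ ⟨hiso.injective, hsurj⟩
  exact ⟨idemFree_equiv φ (idemFree_pid K), φ.symm.isDomain_iff.2 inferInstance⟩

/-- weight of a multi-index -/
noncomputable def wI {m n : ℕ} (γ : Fin m → ℝ≥0) (ρ : Fin n → ℝ≥0) (hγ : ∀ k, γ k ≠ 0)
    (hρ : ∀ k, ρ k ≠ 0) : Wt ((Fin m → ℕ) × (Fin n → ℤ)) where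
  f x := (∏ k, γ k ^ x.1 k) * ∏ k, ρ k ^ x.2 k
  zero := by simp
  add a b := by
    simp only [Prod.fst_add, Prod.snd_add, Pi.add_apply, pow_add, zpow_add₀ (hρ _),
      Finset.prod_mul_distrib]
    ring
  ne a := mul_ne_zero (Finset.prod_ne_zero_iff.2 fun k _ => pow_ne_zero _ (hγ k))
    (Finset.prod_ne_zero_iff.2 fun k _ => zpow_ne_zero _ (hρ k))

/-- weight on `ℕ` -/
noncomputable def wN (c : ℝ≥0) (hc : c ≠ 0) : Wt ℕ where
  f k := c ^ k
  zero := pow_zero c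
  add a b := pow_add c a b
  ne a := pow_ne_zero a hc

/-- weight on `ℤ` -/
noncomputable def wZ (c : ℝ≥0) (hc : c ≠ 0) : Wt ℤ where
  f k := c ^ k
  zero := zpow_zero c
  add a b := zpow_add₀ hc a b
  ne a := zpow_ne_zero a hc

/-- splitting off a polynomial variable -/
def eN (m n : ℕ) : ((Fin m → ℕ) × (Fin n → ℤ)) × ℕ ≃+ ((Fin (m + 1) → ℕ) × (Fin n → ℤ)) where
  toFun x := (Fin.cons x.2 x.1.1, x.1.2)
  invFun y := ((Fin.tail y.1, y.2), y.1 0)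
  left_inv x := by simp
  right_inv y := by simp
  map_add' x y := by
    refine Prod.ext (funext fun k => ?_) rfl
    refine Fin.cases ?_ (fun k => ?_) k <;> simp

/-- splitting off a Laurent variable -/
def eZ (m n : ℕ) : ((Fin m → ℕ) × (Fin n → ℤ)) × ℤ ≃+ ((Fin m → ℕ) × (Fin (n + 1) → ℤ)) where
  toFun x := (x.1.1, Fin.cons x.2 x.1.2)
  invFun y := ((y.1, Fin.tail y.2), y.2 0)
  left_inv x := by simp
  right_inv y := by simp
  map_add' x y := by
    refine Prod.ext rfl (funext fun k => ?_)
    refine Fin.cases ?_ (fun k => ?_) k <;> simp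

theorem good_idx {m n : ℕ} (γ : Fin m → ℝ≥0) (ρ : Fin n → ℝ≥0) (hγ : ∀ k, γ k ≠ 0)
    (hρ : ∀ k, ρ k ≠ 0) : Good.{u} ((Fin m → ℕ) × (Fin n → ℤ)) (wI γ ρ hγ hρ) := by
  induction m with
  | zero =>
    induction n with
    | zero => exact good_base _ _
    | succ n ih =>
      refine good_equiv (eZ 0 n) ((wI γ (fun k => ρ k.succ) hγ (fun k => hρ _)).prod
        (wZ (ρ 0) (hρ 0))) _ ?_ ?_
      · intro x
        simp [wI, wZ, Wt.prod, eZ, Fin.prod_univ_succ, mul_comm]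
      · refine good_prod _ _ _ _ 1 one_pos ?_ (Or.inr fun a => ⟨-a, by simp⟩) (ih _ _)
        intro a b hab
        exact ⟨(b - a).toNat, by simp [hab]⟩
  | succ m ih =>
    refine good_equiv (eN m n) ((wI (fun k => γ k.succ) ρ (fun k => hγ _) hρ).prod
      (wN (γ 0) (hγ 0))) _ ?_ ?_
    · intro x
      simp [wI, wN, Wt.prod, eN, Fin.prod_univ_succ, mul_comm, mul_assoc, mul_left_comm]
    · refine good_prod _ _ _ _ 1 one_pos ?_ (Or.inl fun a => Nat.zero_le a) (ih _ _)
      intro a b hab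
      exact ⟨b - a, by simp; omega⟩
end part12

section part13
open scoped NNReal Topology

section link
variable {K I : Type*} [NormedField K] [CompleteSpace K] [IsUltrametricDist K] [AddCommMonoid I]
  (w : Wt I) {B : Type*} [NormedCommRing B] [CompleteSpace B] [IsUltrametricDist B]
  (j : AddMonoidAlgebra K I →+* B)

/-- decay condition -/
def Dec (c : I → K) : Prop := Tendsto (fun x => ‖c x‖ * (w.f x : ℝ)) cofinite (𝓝 0)

lemma norm_term (hj : GM w j) (i : I) (c : K) : ‖j (AddMonoidAlgebra.single i c)‖ = ‖c‖ * w.f i := by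
  have := hj.norm (AddMonoidAlgebra.single i c)
  rw [gn_single] at this
  exact congrArg NNReal.toReal this

lemma summable_term (hj : GM w j) (c : I → K) (hc : Dec w c) :
    Summable fun i => j (AddMonoidAlgebra.single i (c i)) := by
  have : NonarchimedeanAddGroup B := IsUltrametricDist.nonarchimedeanAddGroup
  apply NonarchimedeanAddGroup.summable_of_tendsto_cofinite_zero
  rw [tendsto_zero_iff_norm_tendsto_zero]
  simp only [norm_term w j hj]
  exact hc

lemma le_norm_sum (hj : GM w j) (c : I → K) (hc : Dec w c) (i : I) :
    ‖c i‖ * w.f i ≤ ‖∑' i, j (AddMonoidAlgebra.single i (c i))‖ := by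
  classical
  refine ge_of_tendsto (summable_term w j hj c hc).hasSum.norm ?_
  filter_upwards [eventually_ge_atTop {i}] with s hs
  have hs' : i ∈ s := Finset.singleton_subset_iff.1 hs
  have h1 := le_gn w (∑ i ∈ s, AddMonoidAlgebra.single i (c i)) i
  have h2 : (∑ i ∈ s, AddMonoidAlgebra.single i (c i)).coeff i = c i := by
    rw [AddMonoidAlgebra.coeff_sum, Finsupp.finsetSum_apply, Finset.sum_eq_single i]
    · simp
    · intro b _ hb
      simp [AddMonoidAlgebra.coeff_single, Finsupp.single_apply, hb]
    · exact fun h => absurd hs' h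
  rw [h2, ← hj.norm, map_sum] at h1
  exact_mod_cast h1

lemma norm_sum_le (hj : GM w j) (c : I → K) (hc : Dec w c) (D : ℝ) (hD : 0 ≤ D) (h : ∀ i, ‖c i‖ * w.f i ≤ D) :
    ‖∑' i, j (AddMonoidAlgebra.single i (c i))‖ ≤ D := by
  refine le_of_tendsto (summable_term w j hj c hc).hasSum.norm (Eventually.of_forall fun s => ?_)
  apply IsUltrametricDist.norm_sum_le_of_forall_le_of_nonneg hD
  intro i _
  rw [norm_term w j hj]
  exact h i

lemma dec_finsupp (f : AddMonoidAlgebra K I) : Dec w (fun i => f.coeff i) := by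
  apply tendsto_nhds_of_eventually_eq
  filter_upwards [f.coeff.support.finite_toSet.compl_mem_cofinite] with i hi
  have : f.coeff i = 0 := by simpa using hi
  rw [this]; simp

lemma sum_finsupp (hj : GM w j) (f : AddMonoidAlgebra K I) :
    ∑' i, j (AddMonoidAlgebra.single i (f.coeff i)) = j f := by
  classical
  rw [tsum_eq_sum (s := f.coeff.support)]
  · rw [← map_sum]
    congr 1
    ext i
    rw [AddMonoidAlgebra.coeff_sum, Finsupp.finsetSum_apply]
    simp [AddMonoidAlgebra.coeff_single, Finsupp.single_apply]
    exact fun h => h.symm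
  · intro b hb
    rw [Finsupp.notMem_support_iff.1 hb]; simp

lemma exists_coeff (hj : GM w j) (b : B) (i : I) :
    ∃ c : K, ∀ f, ‖f.coeff i - c‖ * w.f i ≤ ‖j f - b‖ := by
  have hw : (0 : ℝ) < w.f i := by exact_mod_cast pos_iff_ne_zero.2 (w.ne i)
  have key : ∀ f g, ‖f.coeff i - g.coeff i‖ * w.f i ≤ ‖j f - j g‖ := by
    intro f g
    have := le_gn w (f - g) i
    rw [← hj.norm, map_sub] at this
    exact_mod_cast this
  set l := comap j (𝓝 b) with hl
  have : l.NeBot := comap_neBot_iff_frequently.2 (by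
    have := hj.dense b
    exact mem_closure_iff_frequently.1 this)
  have hC : Cauchy (map (fun f : AddMonoidAlgebra K I => f.coeff i) l) := by
    rw [Metric.cauchy_iff]
    refine ⟨inferInstance, fun ε hε => ?_⟩
    refine ⟨_, image_mem_map (preimage_mem_comap (Metric.ball_mem_nhds b
      (show 0 < ε * w.f i / 2 by positivity))), ?_⟩
    rintro _ ⟨f, hf, rfl⟩ _ ⟨g, hg, rfl⟩
    have h1 : dist (j f) b < ε * w.f i / 2 := hf
    have h2 : dist (j g) b < ε * w.f i / 2 := hg
    have h3 := key f g
    have h4 := dist_triangle_right (j f) (j g) b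
    rw [← dist_eq_norm, ← dist_eq_norm] at h3
    have : dist (f.coeff i) (g.coeff i) * w.f i < ε * w.f i := by linarith
    exact lt_of_mul_lt_mul_right this hw.le
  obtain ⟨c, hc⟩ := CompleteSpace.complete hC
  have hc' : Tendsto (fun f : AddMonoidAlgebra K I => f.coeff i) l (𝓝 c) := hc
  refine ⟨c, fun f => ?_⟩
  refine le_of_tendsto_of_tendsto ((tendsto_const_nhds.sub hc').norm.mul_const _)
    ((tendsto_const_nhds.sub tendsto_comap).norm) (Eventually.of_forall fun g => key f g)

lemma exists_sum (hj : GM w j) (b : B) :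
    ∃ c : I → K, Dec w c ∧ ∑' i, j (AddMonoidAlgebra.single i (c i)) = b := by
  choose c hc using exists_coeff w j hj b
  have happ : ∀ ε > 0, ∃ f, ‖j f - b‖ < ε := by
    intro ε hε
    obtain ⟨f, hf⟩ := hj.dense.exists_dist_lt b hε
    exact ⟨f, by rwa [← dist_eq_norm, dist_comm]⟩
  have hdec : Dec w c := by
    rw [Dec, Metric.tendsto_nhds]
    intro ε hε
    obtain ⟨f, hf⟩ := happ ε hε
    filter_upwards [f.coeff.support.finite_toSet.compl_mem_cofinite] with i hi
    have h0 : f.coeff i = 0 := by simpa using hi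
    have := hc i f
    rw [h0, zero_sub, norm_neg] at this
    rw [Real.dist_0_eq_abs, abs_of_nonneg (by positivity)]
    exact this.trans_lt hf
  refine ⟨c, hdec, ?_⟩
  rw [← sub_eq_zero, ← norm_le_zero_iff]
  refine le_of_forall_pos_le_add fun ε hε => ?_
  rw [zero_add]
  obtain ⟨f, hf⟩ := happ ε hε
  have hd : Dec w (fun i => f.coeff i - c i) := by
    have h1 : Tendsto (fun i => ‖f.coeff i‖ * (w.f i : ℝ) + ‖c i‖ * (w.f i : ℝ)) cofinite (𝓝 0) := by
      simpa using (dec_finsupp w f).add hdec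
    refine squeeze_zero (fun i => by positivity) (fun i => ?_) h1
    rw [← add_mul]
    gcongr
    exact norm_sub_le _ _
  have h1 := norm_sum_le w j hj _ hd _ (norm_nonneg _) (fun i => hc i f)
  have h2 : ∑' i, j (AddMonoidAlgebra.single i (f.coeff i - c i)) =
      j f - ∑' i, j (AddMonoidAlgebra.single i (c i)) := by
    rw [← sum_finsupp w j hj f, ← Summable.tsum_sub (summable_term w j hj _ (dec_finsupp w f))
      (summable_term w j hj _ hdec)]
    simp only [AddMonoidAlgebra.single_sub, map_sub]
  rw [h2] at h1
  have h3 : ∑' i, j (AddMonoidAlgebra.single i (c i)) - b =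
      (j f - b) - (j f - ∑' i, j (AddMonoidAlgebra.single i (c i))) := by ring
  rw [h3, sub_eq_add_neg]
  refine (IsUltrametricDist.norm_add_le_max _ _).trans (max_le hf.le ?_)
  rw [norm_neg]
  exact h1.trans hf.le

lemma sum_mul (hj : GM w j) [DecidableEq I] (a b : I → K) (ha : Dec w a) (hb : Dec w b) :
    ∑' x, j (AddMonoidAlgebra.single x
      (∑' pq : I × I, if pq.1 + pq.2 = x then a pq.1 * b pq.2 else 0)) =
    (∑' i, j (AddMonoidAlgebra.single i (a i))) * ∑' i, j (AddMonoidAlgebra.single i (b i)) := by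
  have : NonarchimedeanRing B := 
    { is_nonarchimedean := IsUltrametricDist.nonarchimedeanAddGroup.is_nonarchimedean }
  have : NonarchimedeanAddGroup K := IsUltrametricDist.nonarchimedeanAddGroup
  have hF := (summable_term w j hj a ha).hasSum.mul_of_nonarchimedean
    (summable_term w j hj b hb).hasSum
  simp only [← map_mul, AddMonoidAlgebra.single_mul_single] at hF
  have hfib := hF.tsum_fiberwise (fun pq : I × I => pq.1 + pq.2)
  rw [← hfib.tsum_eq]
  congr 1
  ext x
  rw [tsum_subtype ((fun pq : I × I => pq.1 + pq.2) ⁻¹' {x})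
    (fun i : I × I => j (AddMonoidAlgebra.single (i.1 + i.2) (a i.1 * b i.2)))]
  have hwx : (0 : ℝ) < w.f x := by exact_mod_cast pos_iff_ne_zero.2 (w.ne x)
  have hS : Summable fun pq : I × I => if pq.1 + pq.2 = x then a pq.1 * b pq.2 else 0 := by
    apply NonarchimedeanAddGroup.summable_of_tendsto_cofinite_zero
    rw [tendsto_zero_iff_norm_tendsto_zero]
    have h1 := hF.summable.tendsto_cofinite_zero.norm.div_const (w.f x : ℝ)
    rw [norm_zero, zero_div] at h1
    refine squeeze_zero (fun i => norm_nonneg _) (fun i => ?_) h1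
    split_ifs with h
    · rw [norm_term w j hj, h, mul_div_cancel_right₀ _ hwx.ne']
    · rw [norm_zero]; positivity
  let κ : K →+ B := j.toAddMonoidHom.comp (AddMonoidAlgebra.singleAddHom x)
  have hκ : Continuous κ := by
    apply AddMonoidHomClass.continuous_of_bound κ (w.f x)
    intro c
    rw [mul_comm]
    exact (norm_term w j hj x c).le
  refine (hS.hasSum.map κ hκ).tsum_eq.symm.trans ?_
  congr 1
  ext pq
  by_cases h : pq.1 + pq.2 = x
  · rw [Set.indicator_of_mem (show pq ∈ (fun pq : I × I => pq.1 + pq.2) ⁻¹' {x} from h),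
      Function.comp_apply, if_pos h, h]
    rfl
  · rw [Set.indicator_of_notMem (show pq ∉ (fun pq : I × I => pq.1 + pq.2) ⁻¹' {x} from h),
      Function.comp_apply, if_neg h]
    exact map_zero κ

theorem link (hj : GM w j) [DecidableEq I] {A : Type*} [CommRing A] (co : A → I → K)
    (hinj : Function.Injective co) (hadd : ∀ a b : A, co (a + b) = co a + co b)
    (hone : co 1 = fun x => if x = 0 then 1 else 0)
    (hmul : ∀ a b : A, ∀ x : I, co (a * b) x =
      ∑' pq : I × I, if pq.1 + pq.2 = x then co a pq.1 * co b pq.2 else 0)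
    (hdec : ∀ a, Dec w (co a)) (hsurj : ∀ c, Dec w c → ∃ a, co a = c) : Nonempty (A ≃+* B) := by
  have h0 : co 0 = 0 := by
    have := hadd 0 0
    rw [add_zero] at this
    exact left_eq_add.1 this
  let ψ : A →+* B :=
    { toFun := fun a => ∑' i, j (AddMonoidAlgebra.single i (co a i))
      map_zero' := by simp [h0]
      map_one' := by
        rw [hone, tsum_eq_single 0]
        · simp only [if_true]; exact map_one j
        · intro i hi
          simp [hi]
      map_add' := fun a b => by
        rw [hadd, ← Summable.tsum_add (summable_term w j hj _ (hdec a))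
          (summable_term w j hj _ (hdec b))]
        simp only [Pi.add_apply, AddMonoidAlgebra.single_add, map_add]
      map_mul' := fun a b => by
        rw [← sum_mul w j hj _ _ (hdec a) (hdec b)]
        simp only [hmul] }
  refine ⟨RingEquiv.ofBijective ψ ⟨?_, ?_⟩⟩
  · rw [injective_iff_map_eq_zero]
    intro a ha
    apply hinj
    rw [h0]
    ext i
    have h1 := le_norm_sum w j hj (co a) (hdec a) i
    have h2 : ∑' i, j (AddMonoidAlgebra.single i (co a i)) = 0 := ha
    rw [h2, norm_zero] at h1
    have hwi : (0 : ℝ) < w.f i := by exact_mod_cast pos_iff_ne_zero.2 (w.ne i)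
    have : ‖co a i‖ ≤ 0 := by
      by_contra hc
      exact absurd h1 (not_le.2 (mul_pos (not_le.1 hc) hwi))
    exact norm_le_zero_iff.1 this
  · intro b
    obtain ⟨c, hc, h⟩ := exists_sum w j hj b
    obtain ⟨a, rfl⟩ := hsurj c hc
    exact ⟨a, h⟩

end link

theorem free_of_idemFree {A : Type*} [CommRing A] (hA : IdemFree A) (P : Type*) [AddCommGroup P]
    [Module A P] [Module.Finite A P] [Module.Projective A P] : Module.Free A P := by
  obtain ⟨N, f, hf⟩ := Module.Finite.exists_fin' A P
  obtain ⟨g, hg⟩ := Module.projective_lifting_property f LinearMap.id hf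
  set e := LinearMap.toMatrix' (g ∘ₗ f) with he
  obtain ⟨r, a, b, hab, hba⟩ := hA N e (by
    rw [he, ← LinearMap.toMatrix'_comp, LinearMap.comp_assoc, ← LinearMap.comp_assoc f, hg,
      LinearMap.id_comp])
  have hab' : Matrix.toLin' a ∘ₗ Matrix.toLin' b = g ∘ₗ f := by
    rw [← Matrix.toLin'_mul, hab, he, Matrix.toLin'_toMatrix']
  have hba' : Matrix.toLin' b ∘ₗ Matrix.toLin' a = LinearMap.id := by
    rw [← Matrix.toLin'_mul, hba, Matrix.toLin'_one]
  have hfg : ∀ x, f (g x) = x := fun x => LinearMap.congr_fun hg x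
  refine Module.Free.of_equiv (LinearEquiv.ofLinearMap (f ∘ₗ Matrix.toLin' a)
    (Matrix.toLin' b ∘ₗ g) ?_ ?_ : (Fin r → A) ≃ₗ[A] P)
  · ext x
    have := LinearMap.congr_fun hab' (g x)
    simp only [LinearMap.comp_apply] at this
    simp only [LinearMap.comp_apply, this, hfg, LinearMap.id_apply]
  · apply LinearMap.ext
    intro x
    have h1 : g (f (Matrix.toLin' a x)) = Matrix.toLin' a x := by
      have := LinearMap.congr_fun hab' (Matrix.toLin' a x)
      have h2 := LinearMap.congr_fun hba' x
      simp only [LinearMap.comp_apply, LinearMap.id_apply] at this h2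
      rw [← this, h2]
    simp only [LinearMap.comp_apply, h1]
    exact LinearMap.congr_fun hba' x
end part13

end QS

open Stmt5

/-- every coherent locally free module (finite projective module) over
the ring `K⟨γ⁻¹s⟩⟨ρ/t, t/ρ⟩` of functions on `𝔹^m_γ × A^n_K([ρ,ρ])` is free, for any
`γ ∈ ℝ^m_{>0}`, `ρ ∈ ℝ^n_{>0}` and any complete nonarchimedean field `K` of mixed
characteristic `(0, p)`. -/
theorem stmt5 {K : Type*} [NontriviallyNormedField K] [CompleteSpace K]
    [IsUltrametricDist K] [CharZero K]
    (p : ℕ) (hp : p.Prime) (hpK : ‖(p : K)‖ < 1)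
    {m n : ℕ} (γ : Fin m → ℝ) (ρ : Fin n → ℝ)
    (hγ : ∀ k, 0 < γ k) (hρ : ∀ k, 0 < ρ k)
    (A : Type*) [CommRing A] (coeffs : A → Idx m n → K)
    (hA : IsGaussCompletion γ ρ A coeffs)
    (P : Type*) [AddCommGroup P] [Module A P]
    [Module.Finite A P] (hproj : Module.Projective A P) :
    Module.Free A P := by
  let γ' : Fin m → NNReal := fun k => ⟨γ k, (hγ k).le⟩
  let ρ' : Fin n → NNReal := fun k => ⟨ρ k, (hρ k).le⟩
  have hγ' : ∀ k, γ' k ≠ 0 := fun k h => (hγ k).ne' (congrArg NNReal.toReal h)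
  have hρ' : ∀ k, ρ' k ≠ 0 := fun k h => (hρ k).ne' (congrArg NNReal.toReal h)
  let w := QS.wI γ' ρ' hγ' hρ'
  have hw : ∀ x, (w.f x : ℝ) = wt γ ρ x := by
    intro x
    simp only [w, QS.wI, wt, NNReal.coe_mul, NNReal.coe_prod, NNReal.coe_pow, NNReal.coe_zpow]
    rfl
  obtain ⟨B, _, _, _, j, hj⟩ := QS.exists_model K w
  have hB := (QS.good_idx γ' ρ' hγ' hρ' K B j hj).1
  have hd : ∀ c : Idx m n → K, QS.Dec w c ↔
      Tendsto (fun x : Idx m n => ‖c x‖ * wt γ ρ x) cofinite (nhds 0) := by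
    intro c
    simp only [QS.Dec, hw]
  obtain ⟨φ⟩ := QS.link w j hj coeffs hA.injective hA.map_add
    (by convert hA.map_one) (fun a b x => by convert hA.map_mul a b x)
    (fun a => (hd _).2 (hA.decay a)) (fun c hc => hA.surj c ((hd c).1 hc))
  have := hproj
  exact QS.free_of_idemFree (QS.idemFree_equiv φ.symm hB) P
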